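/- arXiv:2101.10176 — 8 statements merged into one kernel-verified Lean document; each statement's English description precedes it below -/
import Mathlib

section
/- Let n be an integer with n > 3 and let r > 0. Suppose λ ∈ ℝ is a Dirichlet eigenvalue of the Schrödinger operator −d²/dt² + V₁ on [0,r], i.e. there exists a function u, not identically zero, continuously differentiable on [0,r] and twice differentiable on (0,r), with u(0) = u(r) = 0 and −u''(t) + ((n−1)/4)·(n−1 + (n−3)/sinh²(t))·u(t) = λ·u(t) for all t ∈ (0,r). Then λ > (n−1)²/4 + π²/r² + (n−1)(n−3)/(4·sinh²(r)). -/
/-- `lam` is a Dirichlet eigenvalue of the Schrödinger operator `-d²/dt² + V` on `[0, r]`: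
there is a function `u`, not identically zero on `[0, r]`, continuously differentiable on
`[0, r]` and twice differentiable on `(0, r)`, vanishing at `0` and `r`, with
`-u'' + V·u = lam·u` on `(0, r)`. -/
def IsDirichletEigenvalue (V : ℝ → ℝ) (r lam : ℝ) : Prop :=
  ∃ u : ℝ → ℝ,
    (∃ t ∈ Set.Icc (0:ℝ) r, u t ≠ 0) ∧
    ContinuousOn u (Set.Icc 0 r) ∧
    (∀ t ∈ Set.Ioo (0:ℝ) r, DifferentiableAt ℝ u t) ∧
    ContinuousOn (deriv u) (Set.Icc 0 r) ∧
    (∀ t ∈ Set.Ioo (0:ℝ) r, DifferentiableAt ℝ (deriv u) t) ∧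
    u 0 = 0 ∧ u r = 0 ∧
    (∀ t ∈ Set.Ioo (0:ℝ) r, -(deriv (deriv u) t) + V t * u t = lam * u t)

/-- The potential `V₁(t) = ((n−1)/4)·(n−1 + (n−3)/sinh² t)` arising from the radial ODE for
the first Dirichlet eigenvalue of the geodesic ball in `ℍⁿ`. -/
noncomputable def V1 (n : ℕ) (t : ℝ) : ℝ :=
  ((n : ℝ) - 1) / 4 * (((n : ℝ) - 1) + ((n : ℝ) - 3) / (Real.sinh t) ^ 2)

theorem aux_picone (r k μ : ℝ) (hr : 0 < r) (hk : k = Real.pi / r) (hμ : μ ≤ k ^ 2)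
    (W u v : ℝ → ℝ) (hW : ∀ t ∈ Set.Ioo (0:ℝ) r, 0 < W t)
    (huc : ContinuousOn u (Set.Icc 0 r)) (hvc : ContinuousOn v (Set.Icc 0 r))
    (hu : ∀ t ∈ Set.Ioo (0:ℝ) r, HasDerivAt u (v t) t)
    (hv : ∀ t ∈ Set.Ioo (0:ℝ) r, HasDerivAt v ((W t - μ) * u t) t)
    (u0 : u 0 = 0) (ur : u r = 0) : ∀ t ∈ Set.Icc (0:ℝ) r, u t = 0 := by
  have hkpos : 0 < k := by rw [hk]; positivity
  have hkr : k * r = Real.pi := by rw [hk]; field_simp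
  obtain ⟨M, hM⟩ := isCompact_Icc.exists_bound_of_continuousOn hvc
  have hM0 : 0 ≤ M := (norm_nonneg _).trans (hM 0 ⟨le_rfl, hr.le⟩)
  have mvt : ∀ a ∈ Set.Icc (0:ℝ) r, ∀ b ∈ Set.Icc (0:ℝ) r, a < b → |u b - u a| ≤ M * (b - a) := by
    intro a ha b hb hab
    have hsub : Set.Icc a b ⊆ Set.Icc 0 r := Set.Icc_subset_Icc ha.1 hb.2
    obtain ⟨c, hc, hce⟩ := exists_hasDerivAt_eq_slope u v hab (huc.mono hsub)
      (fun x hx => hu x ⟨ha.1.trans_lt hx.1, hx.2.trans_le hb.2⟩)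
    have h1 := hM c (hsub ⟨hc.1.le, hc.2.le⟩)
    have hba : 0 < b - a := sub_pos.2 hab
    have h2 : u b - u a = v c * (b - a) := by rw [hce]; field_simp
    rw [h2, abs_mul, abs_of_pos hba]
    rw [Real.norm_eq_abs] at h1
    gcongr
  have hsin : ∀ t ∈ Set.Ioo (0:ℝ) r, 0 < Real.sin (k * t) := by
    intro t ht
    apply Real.sin_pos_of_pos_of_lt_pi (mul_pos hkpos ht.1)
    rw [← hkr]
    exact mul_lt_mul_of_pos_left ht.2 hkpos
  -- main bound on u / sin
  have hbd : ∀ t ∈ Set.Ioo (0:ℝ) r, |u t| ≤ M * r / 2 * Real.sin (k * t) := by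
    intro t ht
    have e1 : 2 / Real.pi * (k * t) = 2 * t / r := by
      rw [hk]; field_simp
    have e2 : 2 / Real.pi * (Real.pi - k * t) = 2 * (r - t) / r := by
      rw [hk]; field_simp
    rcases le_total t (r / 2) with h | h
    · have h1 := mvt 0 ⟨le_rfl, hr.le⟩ t ⟨ht.1.le, ht.2.le⟩ ht.1
      rw [u0, sub_zero, sub_zero] at h1
      have h2 := Real.mul_le_sin (x := k * t) (mul_pos hkpos ht.1).le (by
        nlinarith [mul_le_mul_of_nonneg_left h hkpos.le])
      rw [e1] at h2
      calc |u t| ≤ M * t := h1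
        _ = M * r / 2 * (2 * t / r) := by field_simp
        _ ≤ _ := by gcongr
    · have h1 := mvt t ⟨ht.1.le, ht.2.le⟩ r ⟨hr.le, le_rfl⟩ ht.2
      rw [ur, zero_sub, abs_neg] at h1
      have h2 := Real.mul_le_sin (x := Real.pi - k * t)
        (by nlinarith [mul_lt_mul_of_pos_left ht.2 hkpos]) (by
        nlinarith [mul_le_mul_of_nonneg_left h hkpos.le])
      rw [e2, Real.sin_pi_sub] at h2
      calc |u t| ≤ M * (r - t) := h1
        _ = M * r / 2 * (2 * (r - t) / r) := by field_simp
        _ ≤ _ := by gcongr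
  set G : ℝ → ℝ := fun t => u t * v t - k * (u t ^ 2 * Real.cos (k * t) / Real.sin (k * t)) with hG
  have G0 : G 0 = 0 := by simp [hG, u0]
  have Gr : G r = 0 := by simp [hG, ur]
  have hGb : ∀ t ∈ Set.Icc (0:ℝ) r, |G t| ≤ (M + k * (M * r / 2)) * |u t| := by
    intro t ht
    rcases eq_or_lt_of_le ht.1 with h | h
    · rw [← h, G0, u0]; simp
    rcases eq_or_lt_of_le ht.2 with h' | h'
    · rw [h', Gr, ur]; simp
    have hs := hsin t ⟨h, h'⟩
    have hb := hbd t ⟨h, h'⟩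
    have hm := hM t ht
    rw [Real.norm_eq_abs] at hm
    have h3 : |u t ^ 2 * Real.cos (k * t) / Real.sin (k * t)| ≤ |u t| * (M * r / 2) := by
      rw [abs_div, abs_of_pos hs, div_le_iff₀ hs, abs_mul, abs_pow]
      calc |u t| ^ 2 * |Real.cos (k * t)| ≤ |u t| ^ 2 * 1 := by
            gcongr; exact Real.abs_cos_le_one _
        _ = |u t| * |u t| := by ring
        _ ≤ |u t| * (M * r / 2 * Real.sin (k * t)) := by gcongr
        _ = _ := by ring
    calc |G t| ≤ |u t * v t| + |k * (u t ^ 2 * Real.cos (k * t) / Real.sin (k * t))| := abs_sub _ _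
      _ = |u t| * |v t| + k * |u t ^ 2 * Real.cos (k * t) / Real.sin (k * t)| := by
          rw [abs_mul, abs_mul k, abs_of_pos hkpos]
      _ ≤ |u t| * M + k * (|u t| * (M * r / 2)) := by gcongr
      _ = _ := by ring
  have hGd : ∀ t ∈ Set.Ioo (0:ℝ) r, HasDerivAt G
      ((v t - u t * k * Real.cos (k * t) / Real.sin (k * t)) ^ 2
        + (W t + (k ^ 2 - μ)) * u t ^ 2) t := by
    intro t ht
    have hs := (hsin t ht).ne'
    have hl : HasDerivAt (fun t => k * t) k t := by simpa using (hasDerivAt_id t).const_mul k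
    have hS := hl.sin
    have hC := hl.cos
    have := ((hu t ht).mul (hv t ht)).sub
      (((((hu t ht).pow 2).mul hC).div hS hs).const_mul k)
    refine this.congr_deriv ?_
    have hsc := Real.sin_sq_add_cos_sq (k * t)
    have hc2 : Real.cos (k * t) ^ 2 = 1 - Real.sin (k * t) ^ 2 := by linarith
    simp only [Pi.mul_apply, Pi.pow_apply]
    field_simp
    ring
  have endp : ∀ a ∈ Set.Icc (0:ℝ) r, u a = 0 → G a = 0 →
      ContinuousWithinAt G (Set.Icc 0 r) a := by
    intro a ha hua hGa
    unfold ContinuousWithinAt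
    rw [hGa]
    have h1 : Filter.Tendsto (fun t => (M + k * (M * r / 2)) * |u t|)
        (nhdsWithin a (Set.Icc 0 r)) (nhds 0) := by
      have h2 := (Filter.Tendsto.abs (huc a ha)).const_mul (M + k * (M * r / 2))
      rw [hua, abs_zero, mul_zero] at h2
      exact h2
    refine squeeze_zero_norm' ?_ h1
    filter_upwards [self_mem_nhdsWithin] with t ht
    exact hGb t ht
  have hGc : ContinuousOn G (Set.Icc 0 r) := by
    intro t ht
    rcases eq_or_lt_of_le ht.1 with h | h
    · rw [← h]; exact endp 0 ⟨le_rfl, hr.le⟩ u0 G0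
    rcases eq_or_lt_of_le ht.2 with h' | h'
    · rw [h']; exact endp r ⟨hr.le, le_rfl⟩ ur Gr
    exact (hGd t ⟨h, h'⟩).continuousAt.continuousWithinAt
  have hmono : MonotoneOn G (Set.Icc 0 r) := by
    apply monotoneOn_of_deriv_nonneg (convex_Icc 0 r) hGc
    · rw [interior_Icc]
      exact fun t ht => (hGd t ht).differentiableAt.differentiableWithinAt
    · rw [interior_Icc]
      intro t ht
      rw [(hGd t ht).deriv]
      have := hW t ht
      have : 0 ≤ k ^ 2 - μ := by linarith
      positivity
  have hGz : ∀ t ∈ Set.Icc (0:ℝ) r, G t = 0 := by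
    intro t ht
    have h1 := hmono ⟨le_rfl, hr.le⟩ ht ht.1
    have h2 := hmono ht ⟨hr.le, le_rfl⟩ ht.2
    linarith
  intro t ht
  rcases eq_or_lt_of_le ht.1 with h | h
  · rw [← h, u0]
  rcases eq_or_lt_of_le ht.2 with h' | h'
  · rw [h', ur]
  have hev : G =ᶠ[nhds t] fun _ => 0 := by
    filter_upwards [Ioo_mem_nhds h h'] with x hx
    exact hGz x ⟨hx.1.le, hx.2.le⟩
  have hz := (hGd t ⟨h, h'⟩).unique ((hasDerivAt_const t (0:ℝ)).congr_of_eventuallyEq hev)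
  by_contra hne
  have h1 := hW t ⟨h, h'⟩
  have h2 : 0 < W t + (k ^ 2 - μ) := by linarith
  have h3 : 0 < (W t + (k ^ 2 - μ)) * u t ^ 2 := by positivity
  nlinarith [sq_nonneg (v t - u t * k * Real.cos (k * t) / Real.sin (k * t))]

/-- For `n > 3`, any Dirichlet eigenvalue of `-d²/dt² + V₁` on `[0, r]` satisfies
`λ > (n−1)²/4 + π²/r² + (n−1)(n−3)/(4 sinh² r)`. -/
theorem dirichlet_eigenvalue_V1_lower_bound (n : ℕ) (hn : 3 < n) (r : ℝ) (hr : 0 < r)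
    (lam : ℝ) (h : IsDirichletEigenvalue (V1 n) r lam) :
    ((n : ℝ) - 1) ^ 2 / 4 + Real.pi ^ 2 / r ^ 2
      + ((n : ℝ) - 1) * ((n : ℝ) - 3) / (4 * (Real.sinh r) ^ 2) < lam := by
  obtain ⟨u, ⟨t0, ht0, hne⟩, huc, hud, hvc, hvd, u0, ur, hode⟩ := h
  by_contra hcon
  push Not at hcon
  apply hne
  have hn' : (3:ℝ) < n := by exact_mod_cast hn
  set C : ℝ := ((n : ℝ) - 1) ^ 2 / 4 + ((n : ℝ) - 1) * ((n : ℝ) - 3) / (4 * (Real.sinh r) ^ 2)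
    with hC
  refine aux_picone r (Real.pi / r) (lam - C) hr rfl ?_ (fun t => V1 n t - C) u (deriv u) ?_ huc hvc
    (fun t ht => (hud t ht).hasDerivAt) ?_ u0 ur t0 ht0
  · rw [div_pow]; linarith
  · intro t ht
    have hs : 0 < Real.sinh t := Real.sinh_pos_iff.2 ht.1
    have hlt : Real.sinh t < Real.sinh r := Real.sinh_lt_sinh.2 ht.2
    have e : V1 n t - C = ((n : ℝ) - 1) * ((n : ℝ) - 3) / 4 *
        (1 / Real.sinh t ^ 2 - 1 / Real.sinh r ^ 2) := by
      have : Real.sinh r ≠ 0 := (hs.trans hlt).ne'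
      rw [hC, V1]; field_simp; ring
    have h1 : 1 / Real.sinh r ^ 2 < 1 / Real.sinh t ^ 2 := by
      apply one_div_lt_one_div_of_lt (by positivity)
      gcongr
    show 0 < V1 n t - C
    rw [e]
    apply mul_pos _ (sub_pos.2 h1)
    have : 0 < (n:ℝ) - 1 := by linarith
    have : 0 < (n:ℝ) - 3 := by linarith
    positivity
  · intro t ht
    refine (hvd t ht).hasDerivAt.congr_deriv ?_
    have := hode t ht
    linear_combination -this
end

section
/- Let n ≥ 2 be an integer and r > 0. Suppose λ ∈ ℝ admits a nonzero function u, continuously differentiable on [0,r] and twice differentiable on (0,r), with u(0) = u(r) = 0 and −u''(t) + ((n−1)/4)·(n−1 + (n+1)/sinh²(t))·u(t) = λ·u(t) for all t ∈ (0,r). Then λ ≥ (n−1)²/4 + π²/r² + (n²−1)/(4·sinh²(r)). -/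
/-- The potential `V₂(t) = ((n−1)/4)·(n−1 + (n+1)/sinh² t)` arising from the radial ODE for
the second Dirichlet eigenvalue of the geodesic ball in `ℍⁿ`. -/
noncomputable def V2 (n : ℕ) (t : ℝ) : ℝ :=
  ((n : ℝ) - 1) / 4 * (((n : ℝ) - 1) + ((n : ℝ) + 1) / (Real.sinh t) ^ 2)

/-- For `n ≥ 2`, any Dirichlet eigenvalue of `-d²/dt² + V₂` on `[0, r]` satisfies
`λ ≥ (n−1)²/4 + π²/r² + (n²−1)/(4 sinh² r)`. -/
theorem dirichlet_eigenvalue_V2_lower_bound (n : ℕ) (hn : 2 ≤ n) (r : ℝ) (hr : 0 < r)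
    (lam : ℝ) (u : ℝ → ℝ)
    (hne : ∃ t ∈ Set.Icc (0:ℝ) r, u t ≠ 0)
    (hc : ContinuousOn u (Set.Icc 0 r))
    (hd : ∀ t ∈ Set.Ioo (0:ℝ) r, DifferentiableAt ℝ u t)
    (hc' : ContinuousOn (deriv u) (Set.Icc 0 r))
    (hd' : ∀ t ∈ Set.Ioo (0:ℝ) r, DifferentiableAt ℝ (deriv u) t)
    (h0 : u 0 = 0) (hrr : u r = 0)
    (hode : ∀ t ∈ Set.Ioo (0:ℝ) r, -(deriv (deriv u) t) + V2 n t * u t = lam * u t) :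
    ((n : ℝ) - 1) ^ 2 / 4 + Real.pi ^ 2 / r ^ 2
      + ((n : ℝ) ^ 2 - 1) / (4 * (Real.sinh r) ^ 2) ≤ lam := by
  by_contra hlt
  push Not at hlt
  have hn' : (2:ℝ) ≤ n := by exact_mod_cast hn
  have hsr : 0 < Real.sinh r := Real.sinh_pos_iff.2 hr
  have hV : ∀ t ∈ Set.Ioo (0:ℝ) r, ((n : ℝ) - 1) ^ 2 / 4
      + ((n : ℝ) ^ 2 - 1) / (4 * (Real.sinh r) ^ 2) ≤ V2 n t := by
    intro t ht
    have hst : 0 < Real.sinh t := Real.sinh_pos_iff.2 ht.1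
    have hle : Real.sinh t ≤ Real.sinh r := Real.sinh_le_sinh.2 ht.2.le
    have e : V2 n t = ((n : ℝ) - 1) ^ 2 / 4 + ((n : ℝ) ^ 2 - 1) / (4 * (Real.sinh t) ^ 2) := by
      unfold V2
      field_simp
      ring
    rw [e]
    have : (0:ℝ) ≤ (n : ℝ) ^ 2 - 1 := by nlinarith
    gcongr
  set c := ((n : ℝ) - 1) ^ 2 / 4 + ((n : ℝ) ^ 2 - 1) / (4 * (Real.sinh r) ^ 2) with hcdef
  have hlt' : max (lam - c) 0 < (Real.pi / r) ^ 2 := by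
    apply max_lt
    · rw [div_pow]; linarith
    · have := Real.pi_pos
      positivity
  obtain ⟨m, hm1, hm2⟩ := exists_between hlt'
  have hm0 : 0 < m := lt_of_le_of_lt (le_max_right _ _) hm1
  have hmc : lam - c < m := lt_of_le_of_lt (le_max_left _ _) hm1
  set k := Real.sqrt m with hk
  have hk0 : 0 < k := Real.sqrt_pos.2 hm0
  have hk2 : k ^ 2 = m := Real.sq_sqrt hm0.le
  have hkr : k * r < Real.pi := by
    have h1 : k < Real.pi / r := by
      apply lt_of_pow_lt_pow_left₀ 2 (by have := Real.pi_pos; positivity)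
      rw [hk2]; exact hm2
    exact (lt_div_iff₀ hr).1 h1
  have hcos : ∀ t ∈ Set.Icc (0:ℝ) r, Real.cos (k * (t - r / 2)) ≠ 0 := by
    intro t ht
    apply ne_of_gt
    apply Real.cos_pos_of_mem_Ioo
    constructor
    · nlinarith [mul_nonneg hk0.le ht.1]
    · nlinarith [mul_nonneg hk0.le (sub_nonneg.2 ht.2)]
  set F : ℝ → ℝ := fun t => u t * deriv u t + k * u t ^ 2 * Real.tan (k * (t - r / 2)) with hF
  have hFc : ContinuousOn F (Set.Icc 0 r) := by
    have h1 : ContinuousOn (fun t => Real.tan (k * (t - r / 2))) (Set.Icc 0 r) := by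
      intro t ht
      have h2 : ContinuousAt (fun t => k * (t - r / 2)) t := by fun_prop
      exact ((Real.continuousAt_tan.2 (hcos t ht)).comp
        (f := fun t => k * (t - r / 2)) h2).continuousWithinAt
    exact (hc.mul hc').add ((continuousOn_const.mul (hc.pow 2)).mul h1)
  have hFd : ∀ t ∈ Set.Ioo (0:ℝ) r, HasDerivAt F
      ((deriv u t + k * Real.tan (k * (t - r / 2)) * u t) ^ 2 + (m + V2 n t - lam) * u t ^ 2) t := by
    intro t ht
    have h1 := (hd t ht).hasDerivAt
    have h2 := (hd' t ht).hasDerivAt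
    have hct := hcos t ⟨ht.1.le, ht.2.le⟩
    have h3 : HasDerivAt (fun t => k * (t - r / 2)) k t := by
      simpa using ((hasDerivAt_id t).sub_const (r / 2)).const_mul k
    have h4 := (Real.hasDerivAt_tan hct).comp t h3
    have h5 := (h1.mul h2).add (((h1.pow 2).const_mul k).mul h4)
    refine h5.congr_deriv ?_
    have h6 : deriv (deriv u) t = (V2 n t - lam) * u t := by linarith [hode t ht]
    have h7 : 1 / Real.cos (k * (t - r / 2)) ^ 2 = 1 + Real.tan (k * (t - r / 2)) ^ 2 := by
      rw [Real.tan_eq_sin_div_cos]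
      generalize k * (t - r / 2) = x at hct ⊢
      field_simp
      linarith [Real.sin_sq_add_cos_sq x]
    simp only [Function.comp, Pi.pow_apply]
    rw [h6, h7, ← hk2]
    push_cast
    ring
  have hpos : ∀ t ∈ Set.Ioo (0:ℝ) r, 0 < m + V2 n t - lam := by
    intro t ht
    linarith [hV t ht]
  have hmono : MonotoneOn F (Set.Icc 0 r) := by
    apply monotoneOn_of_deriv_nonneg (convex_Icc _ _) hFc
    · rw [interior_Icc]
      intro t ht
      exact (hFd t ht).differentiableAt.differentiableWithinAt
    · rw [interior_Icc]
      intro t ht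
      rw [(hFd t ht).deriv]
      have := hpos t ht
      positivity
  have hF0 : ∀ t ∈ Set.Icc (0:ℝ) r, F t = 0 := by
    intro t ht
    have a := hmono (Set.left_mem_Icc.2 hr.le) ht ht.1
    have b := hmono ht (Set.right_mem_Icc.2 hr.le) ht.2
    have a0 : F 0 = 0 := by simp [hF, h0]
    have b0 : F r = 0 := by simp [hF, hrr]
    linarith
  obtain ⟨t, ht, hut⟩ := hne
  have ht' : t ∈ Set.Ioo (0:ℝ) r := by
    refine ⟨lt_of_le_of_ne ht.1 ?_, lt_of_le_of_ne ht.2 ?_⟩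
    · rintro rfl; exact hut h0
    · rintro rfl; exact hut hrr
  have hz : HasDerivAt F 0 t := by
    refine (hasDerivAt_const t (0:ℝ)).congr_of_eventuallyEq ?_
    filter_upwards [Icc_mem_nhds ht'.1 ht'.2] with s hs using hF0 s hs
  have heq := (hFd t ht').unique hz
  have := hpos t ht'
  have : 0 < (m + V2 n t - lam) * u t ^ 2 := by positivity
  nlinarith [sq_nonneg (deriv u t + k * Real.tan (k * (t - r / 2)) * u t)]
end

section
/- Let n ≥ 2 be an integer, α ≥ 0, r > 0, and let v(t) = sin(πt/r). Then the Rayleigh quotient of v for the potential V_α(t) = ((n−1)/4)·(n−1 + α/sinh²(t)) satisfies (∫₀ʳ (v'(t)² + V_α(t)·v(t)²) dt) / (∫₀ʳ v(t)² dt) ≤ (n−1)²/4 + π²/r² + (n−1)·α·π⁴/(12·r³), with strict inequality when α > 0. Consequently, the first Dirichlet eigenvalue λ₁^α of −d²/dt² + V_α on [0,r] satisfies λ₁^α ≤ (n−1)²/4 + π²/r² + (n−1)·α·π⁴/(12·r³). -/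
/-- The Rayleigh quotient `R_V[u] = (∫₀ʳ (u'² + V u²))/(∫₀ʳ u²)` on `[0, r]`. -/
noncomputable def Rayleigh (V u : ℝ → ℝ) (r : ℝ) : ℝ :=
  (∫ t in (0:ℝ)..r, (deriv u t) ^ 2 + V t * (u t) ^ 2) / (∫ t in (0:ℝ)..r, (u t) ^ 2)

/-- The potential `V_α(t) = ((n−1)/4)·(n−1 + α/sinh² t)`. -/
noncomputable def Valpha (n : ℕ) (α t : ℝ) : ℝ :=
  ((n : ℝ) - 1) / 4 * (((n : ℝ) - 1) + α / (Real.sinh t) ^ 2)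

open Set MeasureTheory Filter Topology

noncomputable def bfun (p f : ℝ → ℝ) (t : ℝ) : ℝ := (∫ y in (0:ℝ)..t, p y * f y) / p t

noncomputable def afun (p : ℝ → ℝ) : ℕ → ℝ → ℝ
  | 0 => fun _ => 1
  | m+1 => fun t => ∫ x in (0:ℝ)..t, bfun p (afun p m) x

structure Wt (p : ℝ → ℝ) : Prop where
  cont : Continuous p
  zero : ∀ t ≤ 0, p t = 0
  pos : ∀ t > 0, 0 < p t
  mono : Monotone p

lemma int_neg_zero {p f : ℝ → ℝ} (hp : Wt p) {t : ℝ} (ht : t ≤ 0) :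
    (∫ y in (0:ℝ)..t, p y * f y) = 0 := by
  rw [intervalIntegral.integral_congr (g := fun _ => (0:ℝ))]
  · simp
  · intro y hy
    rw [uIcc_of_ge ht] at hy
    simp [hp.zero y hy.2]

lemma p_mul_bfun {p f : ℝ → ℝ} (hp : Wt p) (t : ℝ) :
    p t * bfun p f t = ∫ y in (0:ℝ)..t, p y * f y := by
  rcases le_or_gt t 0 with h | h
  · rw [int_neg_zero hp h, hp.zero t h, zero_mul]
  · unfold bfun
    have := hp.pos t h
    field_simp

lemma bfun_zero {p f : ℝ → ℝ} (hp : Wt p) {t : ℝ} (ht : t ≤ 0) : bfun p f t = 0 := by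
  unfold bfun; rw [hp.zero t ht, div_zero]

lemma bfun_nonneg {p f : ℝ → ℝ} (hp : Wt p) (h0 : ∀ t, 0 ≤ f t) (t : ℝ) : 0 ≤ bfun p f t := by
  rcases le_or_gt t 0 with h | h
  · rw [bfun_zero hp h]
  · unfold bfun
    apply div_nonneg _ (hp.pos t h).le
    apply intervalIntegral.integral_nonneg h.le
    intro u hu
    exact mul_nonneg (by rw [← hp.zero 0 le_rfl]; exact hp.mono hu.1) (h0 u)

lemma bfun_le {p f : ℝ → ℝ} (hp : Wt p) (hf : Continuous f) (h0 : ∀ t, 0 ≤ f t) {t M : ℝ}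
    (ht : 0 ≤ t) (hM : ∀ y ∈ Icc 0 t, f y ≤ M) : bfun p f t ≤ t * M := by
  rcases ht.eq_or_lt with h | h
  · rw [← h, bfun_zero hp le_rfl]; simp
  · unfold bfun
    rw [div_le_iff₀ (hp.pos t h)]
    have : (∫ y in (0:ℝ)..t, p y * f y) ≤ ∫ y in (0:ℝ)..t, p t * M := by
      apply intervalIntegral.integral_mono_on ht
      · exact (hp.cont.mul hf).intervalIntegrable _ _
      · simp
      · intro y hy
        exact mul_le_mul (hp.mono hy.2) (hM y hy) (h0 y) (hp.pos t h).le
    simp only [intervalIntegral.integral_const, smul_eq_mul, sub_zero] at this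
    linarith

lemma prim_cont {g : ℝ → ℝ} (hg : Continuous g) (t : ℝ) :
    HasDerivAt (fun t => ∫ y in (0:ℝ)..t, g y) (g t) t :=
  (hg.integral_hasStrictDerivAt 0 t).hasDerivAt

lemma bfun_cont {p f : ℝ → ℝ} (hp : Wt p) (hf : Continuous f) (h0 : ∀ t, 0 ≤ f t) :
    Continuous (bfun p f) := by
  rw [continuous_iff_continuousAt]
  intro t
  rcases lt_trichotomy t 0 with h | h | h
  · apply ContinuousAt.congr (f := fun _ => (0:ℝ)) continuousAt_const
    filter_upwards [Iio_mem_nhds h] with y hy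
    exact (bfun_zero hp (le_of_lt hy)).symm
  · subst h
    obtain ⟨M, hM⟩ := (isCompact_Icc (a := (0:ℝ)) (b := 1)).bddAbove_image hf.continuousOn
    have hM' : ∀ y ∈ Icc (0:ℝ) 1, f y ≤ M := fun y hy => hM (mem_image_of_mem _ hy)
    have hM0 : 0 ≤ M := (h0 0).trans (hM' 0 (by simp))
    unfold ContinuousAt
    rw [bfun_zero hp le_rfl]
    apply squeeze_zero' (g := fun t => |t| * M)
    · exact Eventually.of_forall (bfun_nonneg hp h0)
    · filter_upwards [Iio_mem_nhds (show (0:ℝ) < 1 by norm_num)] with y hy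
      rcases le_or_gt y 0 with h | h
      · rw [bfun_zero hp h]; positivity
      · rw [abs_of_pos h]
        exact bfun_le hp hf h0 h.le fun z hz => hM' z ⟨hz.1, hz.2.trans (le_of_lt hy)⟩
    · have : Continuous (fun t : ℝ => |t| * M) := by fun_prop
      simpa using this.tendsto 0
  · unfold bfun
    apply ContinuousAt.div _ hp.cont.continuousAt (hp.pos t h).ne'
    exact (prim_cont (hp.cont.mul hf) t).continuousAt

lemma afun_prop {p : ℝ → ℝ} (hp : Wt p) (m : ℕ) :
    Continuous (afun p m) ∧ (∀ t, 0 ≤ afun p m t) ∧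
      ∀ t, afun p m t ≤ (t ^ 2) ^ m / (m.factorial : ℝ) := by
  induction m with
  | zero => simp [afun, continuous_const]
  | succ m ih =>
    obtain ⟨hc, h0, hb⟩ := ih
    have hbc := bfun_cont hp hc h0
    have hneg : ∀ t ≤ 0, afun p (m+1) t = 0 := by
      intro t ht
      show (∫ x in (0:ℝ)..t, bfun p (afun p m) x) = 0
      rw [intervalIntegral.integral_congr (g := fun _ => (0:ℝ))]
      · simp
      · intro y hy
        rw [uIcc_of_ge ht] at hy
        exact bfun_zero hp hy.2
    refine ⟨?_, ?_, ?_⟩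
    · exact continuous_iff_continuousAt.2 fun t => (prim_cont hbc t).continuousAt
    · intro t
      rcases le_or_gt t 0 with h | h
      · rw [hneg t h]
      · exact intervalIntegral.integral_nonneg h.le fun u _ => bfun_nonneg hp h0 u
    · intro t
      rcases le_or_gt t 0 with h | h
      · rw [hneg t h]; positivity
      · have : afun p (m+1) t ≤ ∫ x in (0:ℝ)..t, x ^ (2*m+1) / (m.factorial : ℝ) := by
          apply intervalIntegral.integral_mono_on h.le (hbc.intervalIntegrable _ _)
            (Continuous.intervalIntegrable (by fun_prop) _ _)
          intro x hx
          have := bfun_le hp hc h0 (t := x) (M := (x^2)^m / (m.factorial : ℝ)) hx.1 ?_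
          · refine this.trans_eq ?_
            rw [← pow_mul]; ring
          · intro y hy
            refine (hb y).trans ?_
            have := hy.1
            have := hy.2
            gcongr
        refine this.trans ?_
        rw [intervalIntegral.integral_div, integral_pow]
        rw [Nat.factorial_succ]
        push_cast
        rw [← pow_mul, div_div]
        have : (0:ℝ) < (m.factorial : ℝ) := by positivity
        have e : 2 * (m+1) = 2*m+1+1 := by ring
        rw [e]
        simp only [ne_eq, Nat.add_eq_zero_iff, one_ne_zero, and_false, not_false_eq_true, zero_pow,
          sub_zero]
        apply div_le_div_of_nonneg_left (by positivity) (by positivity)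
        apply mul_le_mul_of_nonneg_right _ this.le
        have : (0:ℝ) ≤ m := by positivity
        linarith

lemma afun_deriv {p : ℝ → ℝ} (hp : Wt p) (m : ℕ) (t : ℝ) :
    HasDerivAt (afun p (m+1)) (bfun p (afun p m) t) t :=
  prim_cont (bfun_cont hp (afun_prop hp m).1 (afun_prop hp m).2.1) t

lemma bfun_bd {p : ℝ → ℝ} (hp : Wt p) (m : ℕ) (t : ℝ) :
    |bfun p (afun p m) t| ≤ |t| * ((t^2)^m / (m.factorial : ℝ)) := by
  obtain ⟨hc, h0, hb⟩ := afun_prop hp m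
  rw [abs_of_nonneg (bfun_nonneg hp h0 t)]
  rcases le_or_gt t 0 with h | h
  · rw [bfun_zero hp h]; positivity
  · rw [abs_of_pos h]
    apply bfun_le hp hc h0 h.le
    intro y hy
    refine (hb y).trans ?_
    have := hy.1
    have := hy.2
    gcongr

noncomputable def Wf (p : ℝ → ℝ) (ν t : ℝ) : ℝ := ∑' m : ℕ, (-ν)^m * afun p m t
noncomputable def W1 (p : ℝ → ℝ) (ν t : ℝ) : ℝ := ∑' m : ℕ, (-ν)^(m+1) * bfun p (afun p m) t

lemma a_term {p : ℝ → ℝ} (hp : Wt p) {ν N t R : ℝ} (hν : |ν| ≤ N) (ht : |t| ≤ R) (m : ℕ) :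
    ‖(-ν)^m * afun p m t‖ ≤ (N * R^2)^m / (m.factorial : ℝ) := by
  obtain ⟨hc, h0, hb⟩ := afun_prop hp m
  rw [norm_mul, norm_pow, norm_neg, Real.norm_eq_abs, Real.norm_eq_abs, abs_of_nonneg (h0 t),
    mul_pow, mul_div_assoc]
  have h2 : t^2 ≤ R^2 := by rw [← sq_abs t]; gcongr
  have : afun p m t ≤ (R ^ 2) ^ m / (m.factorial : ℝ) := (hb t).trans (by gcongr)
  exact mul_le_mul (by gcongr) this (h0 t) (by have := (abs_nonneg ν).trans hν; positivity)

lemma b_term {p : ℝ → ℝ} (hp : Wt p) {ν N t R : ℝ} (hν : |ν| ≤ N) (ht : |t| ≤ R) (m : ℕ) :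
    ‖(-ν)^(m+1) * bfun p (afun p m) t‖ ≤ N * R * ((N * R^2)^m / (m.factorial : ℝ)) := by
  rw [norm_mul, norm_pow, norm_neg, Real.norm_eq_abs, Real.norm_eq_abs]
  have h2 : t^2 ≤ R^2 := by rw [← sq_abs t]; gcongr
  have hR := (abs_nonneg t).trans ht
  have : |bfun p (afun p m) t| ≤ R * ((R ^ 2) ^ m / (m.factorial : ℝ)) :=
    (bfun_bd hp m t).trans (by gcongr)
  have hN := (abs_nonneg ν).trans hν
  calc _ ≤ N^(m+1) * (R * ((R ^ 2) ^ m / (m.factorial : ℝ))) :=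
        mul_le_mul (by gcongr) this (abs_nonneg _) (by positivity)
    _ = _ := by rw [mul_pow, pow_succ]; ring

lemma Wf_contOn {p : ℝ → ℝ} (hp : Wt p) (N R : ℝ) :
    ContinuousOn (fun z : ℝ × ℝ => Wf p z.1 z.2) (Icc (-N) N ×ˢ Icc (-R) R) := by
  unfold Wf
  apply continuousOn_tsum (u := fun m => (N * R^2)^m / (m.factorial : ℝ))
  · intro m
    have := (afun_prop hp m).1
    fun_prop
  · exact Real.summable_pow_div_factorial _
  · rintro m ⟨ν, t⟩ ⟨h1, h2⟩
    exact a_term hp (abs_le.2 h1) (abs_le.2 h2) m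

lemma Wf_cont {p : ℝ → ℝ} (hp : Wt p) (ν : ℝ) : Continuous (Wf p ν) := by
  rw [continuous_iff_continuousAt]
  intro t
  have h : ContinuousOn (Wf p ν) (Icc (-(|t|+1)) (|t|+1)) := by
    refine (Wf_contOn hp |ν| (|t|+1)).comp (f := fun t => (ν, t)) (by fun_prop) ?_
    intro x hx
    exact ⟨abs_le.1 le_rfl, hx⟩
  exact h.continuousAt (Icc_mem_nhds (by linarith [neg_abs_le t]) (by linarith [le_abs_self t]))

lemma W1_cont {p : ℝ → ℝ} (hp : Wt p) (ν : ℝ) : Continuous (W1 p ν) := by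
  rw [continuous_iff_continuousAt]
  intro t
  have h : ContinuousOn (W1 p ν) (Icc (-(|t|+1)) (|t|+1)) := by
    unfold W1
    apply continuousOn_tsum
      (u := fun m => |ν| * (|t|+1) * ((|ν| * (|t|+1)^2)^m / (m.factorial : ℝ)))
    · intro m
      have := bfun_cont hp (afun_prop hp m).1 (afun_prop hp m).2.1
      fun_prop
    · exact (Real.summable_pow_div_factorial _).mul_left _
    · intro m x hx
      exact b_term hp le_rfl (abs_le.2 hx) m
  exact h.continuousAt (Icc_mem_nhds (by linarith [neg_abs_le t]) (by linarith [le_abs_self t]))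

lemma a_summable {p : ℝ → ℝ} (hp : Wt p) (ν t : ℝ) : Summable (fun m => (-ν)^m * afun p m t) :=
  Summable.of_norm_bounded (Real.summable_pow_div_factorial _) (a_term hp le_rfl le_rfl)

lemma b_summable {p : ℝ → ℝ} (hp : Wt p) (ν t : ℝ) :
    Summable (fun m => (-ν)^(m+1) * bfun p (afun p m) t) :=
  Summable.of_norm_bounded ((Real.summable_pow_div_factorial _).mul_left _)
    (b_term hp le_rfl le_rfl)

lemma Wf_eq {p : ℝ → ℝ} (hp : Wt p) (ν t : ℝ) :
    Wf p ν t = 1 + ∑' m : ℕ, (-ν)^(m+1) * afun p (m+1) t := by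
  unfold Wf
  rw [(a_summable hp ν t).tsum_eq_zero_add]
  simp [afun]

lemma Wf_zero {p : ℝ → ℝ} (hp : Wt p) (ν : ℝ) : Wf p ν 0 = 1 := by
  rw [Wf_eq hp]; simp [afun]

lemma Wf_nu_zero {p : ℝ → ℝ} (hp : Wt p) (t : ℝ) : Wf p 0 t = 1 := by
  rw [Wf_eq hp]; simp

lemma Wf_nonpos {p : ℝ → ℝ} (hp : Wt p) {ν : ℝ} (hν : ν ≤ 0) (t : ℝ) : 1 ≤ Wf p ν t := by
  rw [Wf_eq hp]
  have : 0 ≤ ∑' m : ℕ, (-ν)^(m+1) * afun p (m+1) t :=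
    tsum_nonneg fun m => mul_nonneg (pow_nonneg (by linarith) _) ((afun_prop hp _).2.1 t)
  linarith

lemma W1_zero {p : ℝ → ℝ} (hp : Wt p) (ν : ℝ) : W1 p ν 0 = 0 := by
  unfold W1; simp [bfun_zero hp le_rfl]

lemma Wf_deriv {p : ℝ → ℝ} (hp : Wt p) (ν t : ℝ) : HasDerivAt (Wf p ν) (W1 p ν t) t := by
  have h := hasDerivAt_tsum_of_isPreconnected
    (u := fun m => |ν| * (|t|+1) * ((|ν| * (|t|+1)^2)^m / (m.factorial : ℝ)))
    (g := fun m t => (-ν)^(m+1) * afun p (m+1) t)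
    (g' := fun m t => (-ν)^(m+1) * bfun p (afun p m) t)
    (t := Ioo (-(|t|+1)) (|t|+1)) (y₀ := t) (y := t)
    ((Real.summable_pow_div_factorial _).mul_left _) isOpen_Ioo isPreconnected_Ioo
    (fun m y _ => (afun_deriv hp m y).const_mul _)
    (fun m y hy => b_term hp le_rfl (abs_le.2 (Ioo_subset_Icc_self hy)) m)
    ⟨by linarith [neg_abs_le t], by linarith [le_abs_self t]⟩
    ((summable_nat_add_iff 1).2 (a_summable hp ν t))
    ⟨by linarith [neg_abs_le t], by linarith [le_abs_self t]⟩
  have e : Wf p ν = fun t => 1 + ∑' m : ℕ, (-ν)^(m+1) * afun p (m+1) t :=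
    funext (Wf_eq hp ν)
  rw [e]
  exact h.const_add 1

lemma pW1_deriv {p : ℝ → ℝ} (hp : Wt p) (ν t : ℝ) :
    HasDerivAt (fun t => p t * W1 p ν t) (-ν * (p t * Wf p ν t)) t := by
  obtain ⟨M, hM⟩ := (isCompact_Icc (a := -(|t|+1)) (b := |t|+1)).exists_bound_of_continuousOn
    hp.cont.continuousOn
  have h := hasDerivAt_tsum_of_isPreconnected
    (u := fun m => |ν| * M * ((|ν| * (|t|+1)^2)^m / (m.factorial : ℝ)))
    (g := fun m t => (-ν)^(m+1) * ∫ y in (0:ℝ)..t, p y * afun p m y)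
    (g' := fun m t => (-ν)^(m+1) * (p t * afun p m t))
    (t := Ioo (-(|t|+1)) (|t|+1)) (y₀ := t) (y := t)
    ((Real.summable_pow_div_factorial _).mul_left _) isOpen_Ioo isPreconnected_Ioo
    (fun m y _ => (prim_cont (hp.cont.mul (afun_prop hp m).1) y).const_mul _)
    ?_
    ⟨by linarith [neg_abs_le t], by linarith [le_abs_self t]⟩
    ?_
    ⟨by linarith [neg_abs_le t], by linarith [le_abs_self t]⟩
  · have e : (fun t => p t * W1 p ν t) =
        fun t => ∑' m : ℕ, (-ν)^(m+1) * ∫ y in (0:ℝ)..t, p y * afun p m y := by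
      funext t
      unfold W1
      rw [← tsum_mul_left]
      congr 1; funext m
      rw [← p_mul_bfun hp]; ring
    rw [e]
    have e2 : -ν * (p t * Wf p ν t) = ∑' m : ℕ, (-ν)^(m+1) * (p t * afun p m t) := by
      unfold Wf
      rw [← tsum_mul_left, ← tsum_mul_left]
      congr 1; funext m; ring
    rw [e2]
    exact h
  · intro m y hy
    have hy' := Ioo_subset_Icc_self hy
    have h1 := a_term hp (ν := ν) le_rfl (abs_le.2 hy') m
    have h2 := hM y hy'
    have h3 := (norm_nonneg _).trans h2
    calc ‖(-ν)^(m+1) * (p y * afun p m y)‖ = |ν| * ‖p y‖ * ‖(-ν)^m * afun p m y‖ := by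
          rw [← Real.norm_eq_abs, ← norm_neg ν, ← norm_mul, ← norm_mul]; congr 1; ring
      _ ≤ _ := mul_le_mul (by gcongr) h1 (norm_nonneg _) (by positivity)
  · have := (b_summable hp ν t).mul_left (p t)
    refine this.congr fun m => ?_
    rw [← p_mul_bfun hp]; ring

/-- Shooting: if some `Wf p N` has a zero on `[0,r]`, then there is `0 < ν ≤ N` with zero at `r`. -/
lemma shoot {p : ℝ → ℝ} (hp : Wt p) {N r : ℝ} (hr : 0 < r)
    (h : ∃ t ∈ Icc 0 r, Wf p N t ≤ 0) : ∃ ν ≤ N, Wf p ν r = 0 := by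
  obtain ⟨t1, ht1, hz1⟩ := h
  have hN : 0 < N := by
    by_contra hN
    linarith [Wf_nonpos hp (not_lt.1 hN) t1]
  have hcont : ContinuousOn (fun z : ℝ × ℝ => Wf p z.1 z.2) (Icc 0 N ×ˢ Icc 0 r) :=
    (Wf_contOn hp N r).mono (prod_mono (Icc_subset_Icc (by linarith) le_rfl)
      (Icc_subset_Icc (by linarith) le_rfl))
  set K : Set (ℝ × ℝ) := (Icc 0 N ×ˢ Icc 0 r) ∩ (fun z : ℝ × ℝ => Wf p z.1 z.2) ⁻¹' Iic 0
  have hK : IsCompact K := by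
    apply (isCompact_Icc.prod isCompact_Icc).of_isClosed_subset _ inter_subset_left
    exact hcont.preimage_isClosed_of_isClosed (isClosed_Icc.prod isClosed_Icc) isClosed_Iic
  have hne : K.Nonempty := ⟨(N, t1), ⟨⟨⟨hN.le, le_rfl⟩, ht1⟩, hz1⟩⟩
  obtain ⟨⟨ν, t0⟩, ⟨⟨hν, ht0⟩, hz0⟩, hmin⟩ := hK.exists_isMinOn hne continuous_fst.continuousOn
  simp only [mem_preimage, mem_Iic] at hz0 hν ht0
  have hν0 : 0 < ν := by
    rcases hν.1.eq_or_lt with h | h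
    · rw [← h, Wf_nu_zero hp] at hz0; linarith
    · exact h
  have hpos : ∀ t ∈ Icc 0 r, 0 ≤ Wf p ν t := by
    intro t ht
    have hc : ContinuousOn (fun x => Wf p x t) (Icc 0 ν) :=
      hcont.comp (f := fun x => (x, t)) (by fun_prop)
        (fun x hx => ⟨⟨hx.1, hx.2.trans hν.2⟩, ht⟩)
    have hcl : closure (Ico 0 ν) = Icc 0 ν := closure_Ico hν0.ne
    have : Icc 0 ν ⊆ (fun x => Wf p x t) ⁻¹' (Ici 0) := by
      rw [← hcl] at hc ⊢
      have hm : MapsTo (fun x => Wf p x t) (Ico 0 ν) (Ici 0) := by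
        intro x hx
        by_contra hlt
        have hlt' : Wf p x t < 0 := not_le.1 hlt
        have hxK : (x, t) ∈ K := ⟨⟨⟨hx.1, hx.2.le.trans hν.2⟩, ht⟩, hlt'.le⟩
        have : ν ≤ x := hmin hxK
        linarith [hx.2]
      have := hm.closure_of_continuousOn hc
      rwa [isClosed_Ici.closure_eq] at this
    exact this ⟨hν0.le, le_rfl⟩
  have hanti : AntitoneOn (fun t => p t * W1 p ν t) (Icc 0 r) := by
    apply antitoneOn_of_deriv_nonpos (convex_Icc 0 r)
    · exact (hp.cont.mul (W1_cont hp ν)).continuousOn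
    · exact fun x _ => (pW1_deriv hp ν x).differentiableAt.differentiableWithinAt
    · intro x hx
      rw [interior_Icc] at hx
      rw [(pW1_deriv hp ν x).deriv]
      have := mul_nonneg (hp.pos x hx.1).le (hpos x ⟨hx.1.le, hx.2.le⟩)
      nlinarith
  have hW1 : ∀ t ∈ Ioo 0 r, W1 p ν t ≤ 0 := by
    intro t ht
    have := hanti (left_mem_Icc.2 hr.le) ⟨ht.1.le, ht.2.le⟩ ht.1.le
    simp only [W1_zero hp, mul_zero] at this
    exact nonpos_of_mul_nonpos_right this (hp.pos t ht.1)
  have hWa : AntitoneOn (Wf p ν) (Icc 0 r) := by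
    apply antitoneOn_of_deriv_nonpos (convex_Icc 0 r) (Wf_cont hp ν).continuousOn
    · exact fun x _ => (Wf_deriv hp ν x).differentiableAt.differentiableWithinAt
    · intro x hx
      rw [interior_Icc] at hx
      rw [(Wf_deriv hp ν x).deriv]
      exact hW1 x hx
  refine ⟨ν, hν.2, le_antisymm ?_ (hpos r (right_mem_Icc.2 hr.le))⟩
  exact (hWa ht0 (right_mem_Icc.2 hr.le) ht0.2).trans hz0

lemma F_int (k : ℕ) (hk : 0 < k) :
    (∫ t in Ioi (0:ℝ), 4 * (k:ℝ) * t^2 * Real.exp (-(2*k*t))) = 1 / (k:ℝ)^2 := by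
  have hk' : (0:ℝ) < k := by exact_mod_cast hk
  have h := Real.integral_rpow_mul_exp_neg_mul_Ioi (a := 3) (r := 2*k) (by norm_num) (by positivity)
  have e : ∀ t : ℝ, 4 * (k:ℝ) * t^2 * Real.exp (-(2*k*t))
      = 4 * k * (t^((3:ℝ)-1) * Real.exp (-(2*k*t))) := by
    intro t
    rw [show (3:ℝ) - 1 = (2:ℕ) by norm_num, Real.rpow_natCast]; ring
  simp_rw [e]
  rw [integral_const_mul, h]
  have g : Real.Gamma 3 = 2 := by
    have := Real.Gamma_nat_eq_factorial 2
    rw [show ((2:ℕ):ℝ) + 1 = 3 by norm_num] at this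
    rw [this]; norm_num
  rw [g, show (3:ℝ) = (3:ℕ) by norm_num, Real.rpow_natCast]
  field_simp
  norm_num

lemma F_integrable (k : ℕ) :
    IntegrableOn (fun t : ℝ => 4 * (k:ℝ) * t^2 * Real.exp (-(2*k*t))) (Ioi 0) := by
  rcases Nat.eq_zero_or_pos k with h | h
  · subst h; simp
  · by_contra hc
    have h1 := F_int k h
    rw [integral_undef hc] at h1
    have hk' : (0:ℝ) < k := by exact_mod_cast h
    have : 0 < 1 / (k:ℝ)^2 := by positivity
    linarith

lemma F_sum {t : ℝ} (ht : 0 < t) :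
    ∑' k : ℕ, 4 * (k:ℝ) * t^2 * Real.exp (-(2*k*t)) = t^2 / Real.sinh t ^ 2 := by
  have hx : ‖Real.exp (-(2*t))‖ < 1 := by
    rw [Real.norm_eq_abs, abs_of_pos (Real.exp_pos _), Real.exp_lt_one_iff]; linarith
  have h := tsum_coe_mul_geometric_of_norm_lt_one hx
  have e : ∀ k : ℕ, 4 * (k:ℝ) * t^2 * Real.exp (-(2*k*t))
      = 4 * t^2 * (k * Real.exp (-(2*t)) ^ k) := by
    intro k
    rw [← Real.exp_nat_mul, show (k:ℝ) * (-(2*t)) = -(2*k*t) by ring]; ring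
  simp_rw [e]
  rw [tsum_mul_left, h]
  have hs : Real.sinh t = (1 - Real.exp (-(2*t))) / (2 * Real.exp (-t)) := by
    rw [Real.sinh_eq, show -(2*t) = -t + -t by ring, Real.exp_add, Real.exp_neg]
    have := Real.exp_pos t
    field_simp
  have h1 : Real.exp (-(2*t)) = Real.exp (-t)^2 := by
    rw [← Real.exp_nat_mul]; congr 1; push_cast; ring
  have h2 : 1 - Real.exp (-(2*t)) ≠ 0 := by
    rw [Real.norm_eq_abs, abs_of_pos (Real.exp_pos _)] at hx
    linarith
  rw [hs]
  have h3 := Real.exp_pos (-t)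
  rw [h1] at h2 ⊢
  field_simp
  norm_num

lemma zeta_int : (∫ t in Ioi (0:ℝ), t^2 / Real.sinh t ^ 2) = Real.pi^2 / 6 := by
  have hi : ∀ k : ℕ, (∫ t in Ioi (0:ℝ), 4 * (k:ℝ) * t^2 * Real.exp (-(2*k*t))) = 1 / (k:ℝ)^2 := by
    intro k
    rcases Nat.eq_zero_or_pos k with h | h
    · subst h; simp
    · exact F_int k h
  have h := hasSum_integral_of_summable_integral_norm (μ := volume.restrict (Ioi (0:ℝ)))
    (F := fun (k:ℕ) (t:ℝ) => 4 * (k:ℝ) * t^2 * Real.exp (-(2*k*t))) F_integrable ?_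
  · simp_rw [hi] at h
    rw [← h.unique hasSum_zeta_two]
    apply setIntegral_congr_fun measurableSet_Ioi
    intro t ht
    exact (F_sum ht).symm
  · have : ∀ k : ℕ, (∫ t in Ioi (0:ℝ), ‖4 * (k:ℝ) * t^2 * Real.exp (-(2*k*t))‖) = 1 / (k:ℝ)^2 := by
      intro k
      rw [← hi k]
      congr 1; funext t
      rw [Real.norm_eq_abs, abs_of_nonneg (by positivity)]
    simp_rw [this]
    exact hasSum_zeta_two.summable

lemma zeta_integrable : IntegrableOn (fun t : ℝ => t^2 / Real.sinh t ^ 2) (Ioi 0) := by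
  by_contra hc
  have h1 := zeta_int
  rw [integral_undef hc] at h1
  have : 0 < Real.pi^2 / 6 := by positivity
  linarith

lemma zeta_ii {r : ℝ} (hr : 0 < r) :
    IntervalIntegrable (fun t : ℝ => t^2 / Real.sinh t ^ 2) volume 0 r := by
  rw [intervalIntegrable_iff_integrableOn_Ioc_of_le hr.le]
  exact zeta_integrable.mono_set Ioc_subset_Ioi_self

lemma sin_ii {r : ℝ} (hr : 0 < r) :
    IntervalIntegrable (fun t : ℝ => Real.sin (Real.pi * t / r)^2 / Real.sinh t ^ 2) volume 0 r := by
  apply ((zeta_ii hr).const_mul ((Real.pi / r)^2)).mono_fun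
  · apply Measurable.aestronglyMeasurable
    fun_prop
  · apply Eventually.of_forall
    intro t
    simp only [norm_mul, norm_div, norm_pow, Real.norm_eq_abs, sq_abs]
    rw [← mul_div_assoc, ← mul_pow]
    gcongr ?_ / _
    rw [abs_of_pos hr, abs_of_pos Real.pi_pos, show Real.pi / r * t = Real.pi * t / r by ring]
    exact sq_le_sq.2 Real.abs_sin_le_abs

lemma sin_int_lt {r : ℝ} (hr : 0 < r) :
    (∫ t in (0:ℝ)..r, Real.sin (Real.pi * t / r)^2 / Real.sinh t ^ 2)
      < Real.pi ^ 4 / (6 * r^2) := by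
  have h1 : (∫ t in (0:ℝ)..r, t^2 / Real.sinh t ^ 2) ≤ Real.pi^2 / 6 := by
    rw [← zeta_int, intervalIntegral.integral_of_le hr.le]
    apply setIntegral_mono_set zeta_integrable
    · exact Eventually.of_forall fun t => by positivity
    · exact Ioc_subset_Ioi_self.eventuallyLE
  have h2 := intervalIntegral.intervalIntegral_pos_of_pos_on
    (((zeta_ii hr).const_mul ((Real.pi / r)^2)).sub (sin_ii hr)) ?_ hr
  · rw [intervalIntegral.integral_sub ((zeta_ii hr).const_mul ((Real.pi / r)^2)) (sin_ii hr),
      intervalIntegral.integral_const_mul] at h2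
    have h3 := mul_le_mul_of_nonneg_left h1 (show 0 ≤ (Real.pi / r)^2 by positivity)
    have : (Real.pi / r)^2 * (Real.pi^2/6) = Real.pi ^ 4 / (6 * r^2) := by field_simp
    linarith
  · intro t ht
    have hs : 0 < Real.sinh t := Real.sinh_pos_iff.2 ht.1
    have hx : 0 < Real.pi * t / r := by have := ht.1; positivity
    rw [sub_pos, ← mul_div_assoc, ← mul_pow, show Real.pi / r * t = Real.pi * t / r by ring]
    apply div_lt_div_of_pos_right _ (by positivity)
    apply sq_lt_sq.2
    exact Real.abs_sin_lt_abs hx.ne'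

lemma v_deriv (r t : ℝ) : HasDerivAt (fun t => Real.sin (Real.pi * t / r))
    (Real.pi / r * Real.cos (Real.pi * t / r)) t := by
  have h := ((hasDerivAt_id t).const_mul Real.pi).div_const r
  have := h.sin
  simp only [id, mul_one] at this
  rw [mul_comm]
  exact this

lemma v_sq {r : ℝ} (hr : 0 < r) : (∫ t in (0:ℝ)..r, Real.sin (Real.pi * t / r)^2) = r / 2 := by
  have h := intervalIntegral.integral_comp_mul_left (a := 0) (b := r)
    (fun x => Real.sin x ^ 2) (c := Real.pi / r) (by positivity)
  have e : ∀ t, Real.pi / r * t = Real.pi * t / r := fun t => by ring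
  simp_rw [e] at h
  rw [h, integral_sin_sq]
  have : Real.pi * r / r = Real.pi := by field_simp
  rw [this]
  simp
  field_simp

lemma num_eq {r : ℝ} (hr : 0 < r) (n : ℕ) (α μ : ℝ) :
    (∫ t in (0:ℝ)..r, ((deriv (fun t => Real.sin (Real.pi * t / r)) t) ^ 2
      + (Valpha n α t - μ) * (Real.sin (Real.pi * t / r)) ^ 2))
    = (r/2) * (((n:ℝ)-1)^2/4 + Real.pi^2/r^2 - μ) + ((n:ℝ)-1) * α / 4 *
      (∫ t in (0:ℝ)..r, Real.sin (Real.pi * t / r)^2 / Real.sinh t ^ 2) ∧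
    IntervalIntegrable (fun t => (deriv (fun t => Real.sin (Real.pi * t / r)) t) ^ 2
      + (Valpha n α t - μ) * (Real.sin (Real.pi * t / r)) ^ 2) volume 0 r := by
  have e : (fun t => (deriv (fun t => Real.sin (Real.pi * t / r)) t) ^ 2
      + (Valpha n α t - μ) * (Real.sin (Real.pi * t / r)) ^ 2) =
      fun t => (Real.pi/r)^2 + (((n:ℝ)-1)^2/4 - Real.pi^2/r^2 - μ) * Real.sin (Real.pi * t / r)^2
        + ((n:ℝ)-1) * α / 4 * (Real.sin (Real.pi * t / r)^2 / Real.sinh t ^ 2) := by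
    funext t
    rw [(v_deriv r t).deriv, mul_pow, Real.cos_sq', Valpha]
    ring
  rw [e]
  have i1 : IntervalIntegrable (fun _ : ℝ => (Real.pi/r)^2) volume 0 r := by simp
  have i2 : IntervalIntegrable (fun t : ℝ => (((n:ℝ)-1)^2/4 - Real.pi^2/r^2 - μ) *
      Real.sin (Real.pi * t / r)^2) volume 0 r := Continuous.intervalIntegrable (by fun_prop) _ _
  have i3 := (sin_ii hr).const_mul (((n:ℝ)-1) * α / 4)
  refine ⟨?_, (i1.add i2).add i3⟩
  rw [intervalIntegral.integral_add (i1.add i2) i3, intervalIntegral.integral_add i1 i2,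
    intervalIntegral.integral_const_mul, intervalIntegral.integral_const_mul, v_sq hr]
  simp only [intervalIntegral.integral_const, smul_eq_mul, sub_zero]
  congr 1
  field_simp
  ring

lemma rayleigh_eq {r : ℝ} (hr : 0 < r) (n : ℕ) (α : ℝ) :
    Rayleigh (Valpha n α) (fun t => Real.sin (Real.pi * t / r)) r =
    ((n:ℝ)-1)^2/4 + Real.pi^2/r^2 + ((n:ℝ)-1) * α / (2 * r) *
      (∫ t in (0:ℝ)..r, Real.sin (Real.pi * t / r)^2 / Real.sinh t ^ 2) := by
  have h := (num_eq hr n α 0).1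
  simp only [sub_zero] at h
  unfold Rayleigh
  rw [h, v_sq hr]
  field_simp
  ring

lemma rayleigh_le {r : ℝ} (hr : 0 < r) (n : ℕ) (hn : 2 ≤ n) {α : ℝ} (hα : 0 ≤ α) :
    Rayleigh (Valpha n α) (fun t => Real.sin (Real.pi * t / r)) r
      ≤ ((n : ℝ) - 1) ^ 2 / 4 + Real.pi ^ 2 / r ^ 2
        + ((n : ℝ) - 1) * α * Real.pi ^ 4 / (12 * r ^ 3) ∧ (0 < α →
    Rayleigh (Valpha n α) (fun t => Real.sin (Real.pi * t / r)) r
      < ((n : ℝ) - 1) ^ 2 / 4 + Real.pi ^ 2 / r ^ 2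
        + ((n : ℝ) - 1) * α * Real.pi ^ 4 / (12 * r ^ 3)) := by
  rw [rayleigh_eq hr]
  have hn' : (0:ℝ) < (n:ℝ) - 1 := by
    have : (2:ℝ) ≤ n := by exact_mod_cast hn
    linarith
  have h := sin_int_lt hr
  have e : ((n:ℝ)-1) * α * Real.pi ^ 4 / (12 * r ^ 3)
      = ((n:ℝ)-1) * α / (2 * r) * (Real.pi ^ 4 / (6 * r^2)) := by
    field_simp; ring
  rw [e]
  constructor
  · gcongr
  · intro hα
    gcongr

noncomputable def psinh (s t : ℝ) : ℝ := Real.sinh (max t 0) ^ (2*s)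

lemma psinh_wt {s : ℝ} (hs : 1 < s) : Wt (psinh s) where
  cont := by
    unfold psinh
    exact (Real.continuous_sinh.comp (continuous_id.max continuous_const)).rpow_const
      fun _ => Or.inr (by linarith)
  zero := by
    intro t ht
    unfold psinh
    rw [max_eq_right ht, Real.sinh_zero, Real.zero_rpow (by linarith)]
  pos := by
    intro t ht
    unfold psinh
    exact Real.rpow_pos_of_pos (Real.sinh_pos_iff.2 (lt_max_of_lt_left ht)) _
  mono := by
    intro a b hab
    unfold psinh
    apply Real.rpow_le_rpow (Real.sinh_nonneg_iff.2 (le_max_right _ _)) _ (by linarith)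
    exact Real.sinh_le_sinh.2 (max_le_max hab le_rfl)

lemma W1_deriv {s : ℝ} (hs : 1 < s) (ν : ℝ) {t : ℝ} (ht : 0 < t) :
    HasDerivAt (W1 (psinh s) ν)
      (-ν * Wf (psinh s) ν t - 2 * s * (Real.cosh t / Real.sinh t) * W1 (psinh s) ν t) t := by
  have hp := psinh_wt hs
  have hsh : 0 < Real.sinh t := Real.sinh_pos_iff.2 ht
  have hpos := hp.pos t ht
  have hev : psinh s =ᶠ[𝓝 t] fun x => Real.sinh x ^ (2*s) := by
    filter_upwards [Ioi_mem_nhds ht] with x hx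
    unfold psinh; rw [max_eq_left (le_of_lt hx)]
  have hpt : psinh s t = Real.sinh t ^ (2*s) := hev.eq_of_nhds
  have hpd : HasDerivAt (psinh s) (2 * s * (Real.cosh t / Real.sinh t) * psinh s t) t := by
    have h := (Real.hasDerivAt_sinh t).rpow_const (p := 2*s) (Or.inl hsh.ne')
    have h2 := h.congr_of_eventuallyEq hev
    refine h2.congr_deriv ?_
    rw [hpt, Real.rpow_sub_one hsh.ne']
    ring
  have h := (pW1_deriv hp ν t).div hpd hpos.ne'
  have h2 : HasDerivAt (W1 (psinh s) ν) _ t := h.congr_of_eventuallyEq (by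
    filter_upwards [Ioi_mem_nhds ht] with x hx
    have := hp.pos x hx
    simp only [Pi.div_apply]
    field_simp)
  refine h2.congr_deriv ?_
  field_simp

lemma vsq_div_cont {r : ℝ} (hr : 0 < r) :
    ContinuousOn (fun t => Real.sin (Real.pi * t / r)^2 / Real.sinh t) (Icc 0 r) := by
  intro t ht
  rcases ht.1.eq_or_lt with h | h
  · subst h
    unfold ContinuousWithinAt
    simp only [mul_zero, zero_div, Real.sin_zero, ne_eq, OfNat.ofNat_ne_zero, not_false_eq_true,
      zero_pow, Real.sinh_zero, div_zero]
    apply squeeze_zero' (g := fun t => (Real.pi/r)^2 * t)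
    · filter_upwards [self_mem_nhdsWithin] with x hx
      have := Real.sinh_nonneg_iff.2 hx.1
      positivity
    · filter_upwards [self_mem_nhdsWithin] with x hx
      rcases hx.1.eq_or_lt with h | h
      · subst h; simp
      · have h1 : x ≤ Real.sinh x := Real.self_le_sinh_iff.2 hx.1
        rw [div_le_iff₀ (by linarith)]
        have h2 : Real.sin (Real.pi * x / r)^2 ≤ (Real.pi * x / r)^2 :=
          sq_le_sq.2 Real.abs_sin_le_abs
        calc _ ≤ _ := h2
          _ = (Real.pi/r)^2 * x * x := by ring
          _ ≤ _ := by gcongr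
    · have : Continuous (fun t : ℝ => (Real.pi/r)^2 * t) := by fun_prop
      have := (this.tendsto 0).mono_left (nhdsWithin_le_nhds (s := Icc 0 r))
      simpa using this
  · have := (Real.sinh_pos_iff.2 h).ne'
    apply ContinuousAt.continuousWithinAt
    fun_prop (disch := assumption)

lemma picone {s : ℝ} (hs : 1 < s) {r : ℝ} (hr : 0 < r) (n : ℕ) (α : ℝ)
    (hc : s * (s-1) = ((n:ℝ)-1) * α / 4) (ν : ℝ)
    (hW : ∀ t ∈ Icc 0 r, 0 < Wf (psinh s) ν t) :
    ν - s^2 + ((n:ℝ)-1)^2/4 ≤ Rayleigh (Valpha n α) (fun t => Real.sin (Real.pi * t / r)) r := by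
  have hp := psinh_wt hs
  set μ := ν - s^2 + ((n:ℝ)-1)^2/4 with hμ
  obtain ⟨he, hi⟩ := num_eq hr n α μ
  set W := Wf (psinh s) ν with hWdef
  set w := W1 (psinh s) ν with hwdef
  set v : ℝ → ℝ := fun t => Real.sin (Real.pi * t / r) with hv
  set v' : ℝ → ℝ := fun t => Real.pi / r * Real.cos (Real.pi * t / r) with hv'
  have key := intervalIntegral.sub_le_integral_of_hasDeriv_right_of_le (a := 0) (b := r)
    (g := fun t => s * ((v t)^2 / Real.sinh t * Real.cosh t) + (v t)^2 * (w t / W t))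
    (g' := fun t => 2 * v t * v' t * (s * (Real.cosh t / Real.sinh t) + w t / W t)
      + (v t)^2 * (s * ((Real.sinh t * Real.sinh t - Real.cosh t * Real.cosh t) / Real.sinh t ^2)
        + ((-ν * W t - 2 * s * (Real.cosh t / Real.sinh t) * w t) * W t - w t * w t) / (W t)^2))
    (φ := fun t => (deriv (fun t => Real.sin (Real.pi * t / r)) t) ^ 2
      + (Valpha n α t - μ) * (Real.sin (Real.pi * t / r)) ^ 2) hr.le ?_ ?_ ?_ ?_
  · have v0 : v 0 = 0 := by simp [hv]
    have vr : v r = 0 := by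
      simp only [hv]; rw [mul_div_assoc, div_self hr.ne', mul_one, Real.sin_pi]
    rw [he] at key
    simp only [v0, vr] at key
    norm_num at key
    rw [rayleigh_eq hr]
    set I := ∫ t in (0:ℝ)..r, Real.sin (Real.pi * t / r)^2 / Real.sinh t ^ 2
    have e : ((n:ℝ)-1) * α / 4 * I = (r/2) * (((n:ℝ)-1) * α / (2*r) * I) := by field_simp; ring
    rw [e, ← mul_add] at key
    have := nonneg_of_mul_nonneg_right key (by positivity)
    linarith
  · have h1 := vsq_div_cont hr
    have h2 : ContinuousOn (fun t => w t / W t) (Icc 0 r) :=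
      (W1_cont hp ν).continuousOn.div (Wf_cont hp ν).continuousOn fun t ht => (hW t ht).ne'
    have h3 : Continuous v := by fun_prop
    exact ((h1.mul Real.continuous_cosh.continuousOn).const_smul s).add
      ((h3.pow 2).continuousOn.mul h2)
  · intro t ht
    have hsh : 0 < Real.sinh t := Real.sinh_pos_iff.2 ht.1
    have hWt := hW t ⟨ht.1.le, ht.2.le⟩
    have d1 := (Real.hasDerivAt_cosh t).div (Real.hasDerivAt_sinh t) hsh.ne'
    have d2 := (W1_deriv hs ν ht.1).div (Wf_deriv hp ν t) hWt.ne'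
    have d3 := ((v_deriv r t).pow 2).mul ((d1.const_mul s).add d2)
    apply HasDerivAt.hasDerivWithinAt
    refine HasDerivAt.congr_deriv (d3.congr_of_eventuallyEq ?_) ?_
    · apply Eventually.of_forall
      intro x
      simp only [Pi.mul_apply, Pi.add_apply, Pi.div_apply, Pi.pow_apply]
      simp only [hv, hWdef, hwdef]
      ring
    · simp only [Pi.mul_apply, Pi.add_apply, Pi.div_apply, Pi.pow_apply]
      simp only [hv, hv', hWdef, hwdef]
      push_cast
      ring
  · rw [integrableOn_Icc_iff_integrableOn_Ioc,
      ← intervalIntegrable_iff_integrableOn_Ioc_of_le hr.le]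
    exact hi
  · intro t ht
    have hsh : 0 < Real.sinh t := Real.sinh_pos_iff.2 ht.1
    have hWt : 0 < W t := hW t ⟨ht.1.le, ht.2.le⟩
    have hch := Real.cosh_sq t
    rw [(v_deriv r t).deriv]
    have hV : Valpha n α t - μ = s * (s-1) / Real.sinh t ^ 2 + s^2 - ν := by
      rw [hc, hμ, Valpha]; ring
    rw [hV]
    change _ ≤ (v' t)^2 + _ * (v t)^2
    have hsq := sq_nonneg (v' t - v t * (s * (Real.cosh t / Real.sinh t) + w t / W t))
    have hid : (v' t)^2 + (s * (s-1) / Real.sinh t ^ 2 + s^2 - ν) * (v t)^2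
      - (2 * v t * v' t * (s * (Real.cosh t / Real.sinh t) + w t / W t)
      + (v t)^2 * (s * ((Real.sinh t * Real.sinh t - Real.cosh t * Real.cosh t) / Real.sinh t ^2)
        + ((-ν * W t - 2 * s * (Real.cosh t / Real.sinh t) * w t) * W t - w t * w t) / (W t)^2))
      = (v' t - v t * (s * (Real.cosh t / Real.sinh t) + w t / W t))^2 := by
      generalize Real.cosh t = C at *
      generalize Real.sinh t = S at *
      generalize W t = X at *
      generalize w t = Y at *
      generalize v t = a at *
      generalize v' t = b at *
      have e1 : s * (s-1) / S^2 + s^2 = s^2 * (C/S)^2 - s / S^2 := by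
        rw [div_pow, hch]; field_simp; ring
      have e2 : (S * S - C * C) / S^2 = -1/S^2 := by
        rw [← pow_two C, hch]; congr 1; ring
      rw [e1, e2]
      field_simp
      ring
    linarith

lemma eig_of_zero {s : ℝ} (hs : 1 < s) {r : ℝ} (hr : 0 < r) (n : ℕ) (α : ℝ)
    (hc : s * (s-1) = ((n:ℝ)-1) * α / 4) (ν : ℝ) (hW : Wf (psinh s) ν r = 0) :
    IsDirichletEigenvalue (Valpha n α) r (ν - s^2 + ((n:ℝ)-1)^2/4) := by
  have hp := psinh_wt hs
  set W := Wf (psinh s) ν with hWdef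
  set w := W1 (psinh s) ν with hwdef
  have hWc : Continuous W := Wf_cont hp ν
  have hwc : Continuous w := W1_cont hp ν
  set u : ℝ → ℝ := fun t => Real.sinh (max t 0) ^ s * W t with hu
  set g : ℝ → ℝ := fun t => s * Real.cosh t * Real.sinh t ^ (s-1) * W t + Real.sinh t ^ s * w t
    with hg
  have hd : ∀ t > 0, HasDerivAt u (g t) t := by
    intro t ht
    have hsh : 0 < Real.sinh t := Real.sinh_pos_iff.2 ht
    have h := ((Real.hasDerivAt_sinh t).rpow_const (p := s) (Or.inl hsh.ne')).mul (Wf_deriv hp ν t)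
    refine HasDerivAt.congr_deriv (h.congr_of_eventuallyEq ?_) ?_
    · filter_upwards [Ioi_mem_nhds ht] with x hx
      have hx' : (0:ℝ) < x := hx
      simp only [hu, max_eq_left hx'.le]; rfl
    · simp only [hg, hWdef, hwdef]; ring
  have hd0 : deriv u 0 = 0 := by
    by_cases h : DifferentiableAt ℝ u 0
    · have h1 := h.hasDerivAt.hasDerivWithinAt (s := Iic 0)
      have h2 : HasDerivWithinAt u 0 (Iic 0) 0 := by
        apply (hasDerivWithinAt_const (0:ℝ) (Iic 0) (0:ℝ)).congr
        · intro x hx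
          simp only [hu]
          rw [max_eq_right hx, Real.sinh_zero, Real.zero_rpow (by linarith), zero_mul]
        · simp only [hu]
          rw [max_self, Real.sinh_zero, Real.zero_rpow (by linarith), zero_mul]
      exact (uniqueDiffWithinAt_Iic 0).eq_deriv _ h1 h2
    · exact deriv_zero_of_not_differentiableAt h
  have hg0 : g 0 = 0 := by
    simp only [hg]
    rw [Real.sinh_zero, Real.zero_rpow (by linarith), Real.zero_rpow (by linarith)]; ring
  have hgc : Continuous g := by
    have h1 : Continuous fun t => Real.sinh t ^ (s-1) :=
      Real.continuous_sinh.rpow_const fun _ => Or.inr (by linarith)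
    have h2 : Continuous fun t => Real.sinh t ^ s :=
      Real.continuous_sinh.rpow_const fun _ => Or.inr (by linarith)
    fun_prop
  have huc : Continuous u := by
    have h2 : Continuous fun t => Real.sinh (max t 0) ^ s :=
      (Real.continuous_sinh.comp (continuous_id.max continuous_const)).rpow_const
        fun _ => Or.inr (by linarith)
    fun_prop
  have hd2 : ∀ t > 0, HasDerivAt (deriv u)
      ((s * (s-1) / Real.sinh t ^ 2 + s^2 - ν) * u t) t := by
    intro t ht
    have hsh : 0 < Real.sinh t := Real.sinh_pos_iff.2 ht
    have h1 := (Real.hasDerivAt_sinh t).rpow_const (p := s) (Or.inl hsh.ne')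
    have h2 := (Real.hasDerivAt_sinh t).rpow_const (p := s-1) (Or.inl hsh.ne')
    have h := ((((Real.hasDerivAt_cosh t).const_mul s).mul h2).mul (Wf_deriv hp ν t)).add
      (h1.mul (W1_deriv hs ν ht))
    refine HasDerivAt.congr_deriv (h.congr_of_eventuallyEq ?_) ?_
    · filter_upwards [Ioi_mem_nhds ht] with x hx
      rw [(hd x hx).deriv]; rfl
    · simp only [hu, max_eq_left ht.le]
      have hch := Real.cosh_sq t
      simp only [Pi.mul_apply]
      rw [Real.rpow_sub_one hsh.ne' (s-1), Real.rpow_sub_one hsh.ne' s]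
      change _ = _ * (_ * Wf (psinh s) ν t)
      generalize Real.sinh t ^ s = P at *
      generalize Real.cosh t = C at *
      generalize Real.sinh t = S at *
      generalize Wf (psinh s) ν t = X at *
      generalize W1 (psinh s) ν t = Y at *
      field_simp
      rw [hch]
      ring
  refine ⟨u, ?_, huc.continuousOn, fun t ht => (hd t ht.1).differentiableAt, ?_,
    fun t ht => (hd2 t ht.1).differentiableAt, ?_, ?_, ?_⟩
  · have hW0 : W 0 = 1 := Wf_zero hp ν
    have : ∀ᶠ t in 𝓝 (0:ℝ), 0 < W t :=
      hWc.continuousAt.eventually (lt_mem_nhds (by rw [hW0]; norm_num))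
    obtain ⟨δ, hδ, hb⟩ := Metric.eventually_nhds_iff.1 this
    have hm : 0 < min (δ/2) r := lt_min (by linarith) hr
    refine ⟨min (δ/2) r, ⟨hm.le, min_le_right _ _⟩, ?_⟩
    have h1 : 0 < W (min (δ/2) r) := by
      apply hb
      rw [Real.dist_eq, sub_zero, abs_of_pos hm]
      linarith [min_le_left (δ/2) r]
    simp only [hu, max_eq_left hm.le]
    exact (mul_pos (Real.rpow_pos_of_pos (Real.sinh_pos_iff.2 hm) _) h1).ne'
  · apply hgc.continuousOn.congr
    intro t ht
    rcases ht.1.eq_or_lt with h | h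
    · rw [← h, hd0, hg0]
    · exact (hd t h).deriv
  · simp only [hu]
    rw [max_self, Real.sinh_zero, Real.zero_rpow (by linarith), zero_mul]
  · simp only [hu]; rw [hW, mul_zero]
  · intro t ht
    rw [(hd2 t ht.1).deriv, hc, Valpha]
    ring

lemma eig_sin {r : ℝ} (hr : 0 < r) (n : ℕ) :
    IsDirichletEigenvalue (Valpha n 0) r (((n:ℝ)-1)^2/4 + Real.pi^2/r^2) := by
  have hd : deriv (fun t => Real.sin (Real.pi * t / r)) =
      fun t => Real.pi / r * Real.cos (Real.pi * t / r) := funext fun t => (v_deriv r t).deriv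
  have hd2 : ∀ t, HasDerivAt (fun t => Real.pi / r * Real.cos (Real.pi * t / r))
      (-(Real.pi/r)^2 * Real.sin (Real.pi * t / r)) t := by
    intro t
    have h := (((((hasDerivAt_id t).const_mul Real.pi).div_const r).cos)).const_mul (Real.pi/r)
    refine h.congr_deriv ?_
    simp only [id]
    ring
  refine ⟨fun t => Real.sin (Real.pi * t / r), ⟨r/2, ⟨by linarith, by linarith⟩, ?_⟩,
    Continuous.continuousOn (by fun_prop), fun t _ => (v_deriv r t).differentiableAt, ?_, ?_, ?_, ?_,
    ?_⟩
  · have : Real.pi * (r/2) / r = Real.pi/2 := by field_simp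
    simp only [this, Real.sin_pi_div_two]; norm_num
  · rw [hd]; exact Continuous.continuousOn (by fun_prop)
  · rw [hd]; exact fun t _ => (hd2 t).differentiableAt
  · simp
  · simp only []; rw [mul_div_assoc, div_self hr.ne', mul_one, Real.sin_pi]
  · intro t _
    rw [hd, (hd2 t).deriv, Valpha]
    ring

/-- For `n ≥ 2`, `α ≥ 0`, `r > 0` and `v(t) = sin(πt/r)`, the Rayleigh quotient of `v` for
the potential `V_α` is at most `(n−1)²/4 + π²/r² + (n−1)απ⁴/(12r³)`, with strict inequality
when `α > 0`; consequently the first Dirichlet eigenvalue `λ₁^α` of `-d²/dt² + V_α` on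
`[0, r]` satisfies the same bound. -/
theorem rayleigh_bound_Valpha (n : ℕ) (hn : 2 ≤ n) (α r : ℝ) (hα : 0 ≤ α) (hr : 0 < r) :
    Rayleigh (Valpha n α) (fun t => Real.sin (Real.pi * t / r)) r
      ≤ ((n : ℝ) - 1) ^ 2 / 4 + Real.pi ^ 2 / r ^ 2
        + ((n : ℝ) - 1) * α * Real.pi ^ 4 / (12 * r ^ 3) ∧
    (0 < α →
      Rayleigh (Valpha n α) (fun t => Real.sin (Real.pi * t / r)) r
        < ((n : ℝ) - 1) ^ 2 / 4 + Real.pi ^ 2 / r ^ 2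
          + ((n : ℝ) - 1) * α * Real.pi ^ 4 / (12 * r ^ 3)) ∧
    ∀ lam : ℝ, IsDirichletEigenvalue (Valpha n α) r lam →
      (∀ μ : ℝ, IsDirichletEigenvalue (Valpha n α) r μ → lam ≤ μ) →
      lam ≤ ((n : ℝ) - 1) ^ 2 / 4 + Real.pi ^ 2 / r ^ 2
        + ((n : ℝ) - 1) * α * Real.pi ^ 4 / (12 * r ^ 3) := by
  obtain ⟨h1, h2⟩ := rayleigh_le hr n hn hα
  refine ⟨h1, h2, ?_⟩
  intro lam _ hmin
  rcases hα.eq_or_lt with h | h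
  · subst h
    have := hmin _ (eig_sin hr n)
    simpa using this
  · have h2 := h2 h
    set B := ((n : ℝ) - 1) ^ 2 / 4 + Real.pi ^ 2 / r ^ 2
        + ((n : ℝ) - 1) * α * Real.pi ^ 4 / (12 * r ^ 3) with hB
    have hn' : (0:ℝ) < (n:ℝ) - 1 := by
      have : (2:ℝ) ≤ n := by exact_mod_cast hn
      linarith
    have hD : 0 < ((n:ℝ)-1) * α := by positivity
    set D := Real.sqrt (1 + ((n:ℝ)-1) * α) with hDdef
    have hDsq : D^2 = 1 + ((n:ℝ)-1) * α := Real.sq_sqrt (by linarith)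
    have hD1 : 1 < D := by
      rw [hDdef]; exact Real.lt_sqrt_of_sq_lt (by linarith)
    set s := (1 + D) / 2 with hsdef
    have hs : 1 < s := by rw [hsdef]; linarith
    have hc : s * (s-1) = ((n:ℝ)-1) * α / 4 := by
      rw [hsdef]; linarith
    have hp := psinh_wt hs
    have hz : ∃ t ∈ Icc 0 r, Wf (psinh s) (B + s^2 - ((n:ℝ)-1)^2/4) t ≤ 0 := by
      by_contra hcon
      push Not at hcon
      have := picone hs hr n α hc _ hcon
      linarith
    obtain ⟨ν, hν, hνr⟩ := shoot hp hr hz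
    have := hmin _ (eig_of_zero hs hr n α hc ν hνr)
    linarith
end

section
/- Let n ≥ 3 be an integer, r > 0, and v(t) = sin(πt/r). Then (∫₀ʳ (v'(t)² + ((n−1)/4)·(n−1 + (n−3)/sinh²(t))·v(t)²) dt) / (∫₀ʳ v(t)² dt) ≤ (n−1)²/4 + π²/r² + (n−1)(n−3)·π⁴/(12·r³). Consequently, the first Dirichlet eigenvalue of −d²/dt² + V₁ on [0,r] (which equals the first Dirichlet eigenvalue λ₁(B_r) of the geodesic ball of radius r in ℍⁿ) is at most (n−1)²/4 + π²/r² + (n−1)(n−3)·π⁴/(12·r³). -/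
lemma hasSum_sinh (t : ℝ) (ht : 0 < t) :
    HasSum (fun k : ℕ => 4 * (k:ℝ) * t ^ 2 * Real.exp (-(2 * k * t))) (t ^ 2 / Real.sinh t ^ 2) := by
  have hx : ‖Real.exp (-(2*t))‖ < 1 := by
    rw [Real.norm_eq_abs, abs_of_pos (Real.exp_pos _), Real.exp_lt_one_iff]; linarith
  have h := (hasSum_coe_mul_geometric_of_norm_lt_one hx).mul_left (4 * t^2)
  have e1 : (fun k : ℕ => 4 * (k:ℝ) * t ^ 2 * Real.exp (-(2 * k * t))) =
      fun k : ℕ => 4 * t ^ 2 * ((k:ℝ) * Real.exp (-(2 * t)) ^ k) := by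
    ext k
    rw [← Real.exp_nat_mul]
    have : (k:ℝ) * -(2 * t) = -(2*k*t) := by ring
    rw [this]; ring
  have e2 : t ^ 2 / Real.sinh t ^ 2 = 4 * t ^ 2 * (Real.exp (-(2 * t)) / (1 - Real.exp (-(2 * t))) ^ 2) := by
    rw [Real.sinh_eq]
    have h1 : Real.exp (-(2*t)) = Real.exp (-t) ^ 2 := by rw [← Real.exp_nat_mul]; congr 1; push_cast; ring
    have h2 : Real.exp t = (Real.exp (-t))⁻¹ := by rw [Real.exp_neg, inv_inv]
    have h3 : Real.exp (-t) < 1 := by rw [Real.exp_lt_one_iff]; linarith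
    have h4 := Real.exp_pos (-t)
    rw [h1, h2]
    generalize Real.exp (-t) = y at *
    have h5 : 1 - y^2 ≠ 0 := by nlinarith
    have h6 : y⁻¹ - y ≠ 0 := by
      have : y⁻¹ - y = (1 - y^2) / y := by field_simp
      rw [this]; positivity
    have h7 : y⁻¹ - y = (1 - y^2) / y := by field_simp
    rw [h7]
    field_simp
    norm_num
  rw [e1, e2]
  exact h

lemma int_term (k : ℕ) (r : ℝ) (hr : 0 < r) :
    ∫ t in (0:ℝ)..r, 4 * (k:ℝ) * t ^ 2 * Real.exp (-(2 * k * t)) ≤ 1 / (k:ℝ)^2 := by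
  rcases Nat.eq_zero_or_pos k with rfl | hk
  · simp
  have hk' : (0:ℝ) < k := by exact_mod_cast hk
  have hd : ∀ t : ℝ, HasDerivAt (fun t => -(Real.exp (-(2*k*t)) * (2*t^2 + 2*t/k + 1/(k:ℝ)^2)))
      (4 * (k:ℝ) * t ^ 2 * Real.exp (-(2 * k * t))) t := by
    intro t
    have h1 : HasDerivAt (fun t : ℝ => Real.exp (-(2*k*t))) (Real.exp (-(2*k*t)) * (-(2*k*1))) t :=
      (((hasDerivAt_id t).const_mul (2*(k:ℝ))).neg).exp
    have h2 : HasDerivAt (fun t : ℝ => 2*t^2 + 2*t/k + 1/(k:ℝ)^2) (2*((2:ℕ)*t^1*1) + 2*1/k) t :=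
      ((((hasDerivAt_id t).pow 2).const_mul 2).add (((hasDerivAt_id t).const_mul 2).div_const _)).add_const _
    refine (h1.mul h2).neg.congr_deriv ?_
    push_cast
    field_simp
    ring
  rw [intervalIntegral.integral_eq_sub_of_hasDerivAt (fun t _ => hd t)
    (by apply Continuous.intervalIntegrable; fun_prop)]
  have : 0 < Real.exp (-(2*k*r)) * (2*r^2 + 2*r/k + 1/(k:ℝ)^2) := by positivity
  simp only [mul_zero, neg_zero, Real.exp_zero]
  norm_num at this ⊢
  linarith

lemma sinh_ratio_nonneg_bdd (t : ℝ) : t ^ 2 / Real.sinh t ^ 2 ≤ 1 := by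
  apply div_le_one_of_le₀ _ (sq_nonneg _)
  rw [← sq_abs t, ← sq_abs (Real.sinh t), Real.abs_sinh]
  gcongr
  exact Real.self_le_sinh_iff.2 (abs_nonneg t)

lemma int_sinh (r : ℝ) (hr : 0 < r) :
    ∫ t in (0:ℝ)..r, t ^ 2 / Real.sinh t ^ 2 ≤ Real.pi ^ 2 / 6 := by
  have hF : ∀ k : ℕ, IntervalIntegrable (fun t : ℝ => 4 * (k:ℝ) * t ^ 2 * Real.exp (-(2 * k * t)))
      MeasureTheory.volume 0 r := fun k => by apply Continuous.intervalIntegrable; fun_prop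
  have hF' : ∀ k : ℕ, MeasureTheory.Integrable (fun t : ℝ => 4 * (k:ℝ) * t ^ 2 * Real.exp (-(2 * k * t)))
      (MeasureTheory.volume.restrict (Set.Ioc 0 r)) := fun k =>
    (intervalIntegrable_iff_integrableOn_Ioc_of_le hr.le).1 (hF k)
  have hn : ∀ k : ℕ, ∫ t in Set.Ioc 0 r, ‖4 * (k:ℝ) * t ^ 2 * Real.exp (-(2 * k * t))‖ ≤ 1 / (k:ℝ)^2 := by
    intro k
    have := int_term k r hr
    rw [intervalIntegral.integral_of_le hr.le] at this
    refine le_trans (le_of_eq ?_) this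
    congr 1
    ext t
    rw [Real.norm_of_nonneg (by positivity)]
  have hs : Summable (fun k : ℕ => ∫ t in Set.Ioc 0 r, ‖4 * (k:ℝ) * t ^ 2 * Real.exp (-(2 * k * t))‖) :=
    Summable.of_nonneg_of_le (fun k => MeasureTheory.integral_nonneg (fun _ => norm_nonneg _)) hn
      hasSum_zeta_two.summable
  have h := MeasureTheory.hasSum_integral_of_summable_integral_norm hF' hs
  have he : ∫ t in Set.Ioc 0 r, ∑' k : ℕ, 4 * (k:ℝ) * t ^ 2 * Real.exp (-(2 * k * t))
      = ∫ t in Set.Ioc 0 r, t ^ 2 / Real.sinh t ^ 2 :=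
    MeasureTheory.setIntegral_congr_fun measurableSet_Ioc (fun t ht => (hasSum_sinh t ht.1).tsum_eq)
  rw [he] at h
  rw [intervalIntegral.integral_of_le hr.le]
  refine hasSum_le (fun k => ?_) h hasSum_zeta_two
  have := int_term k r hr
  rwa [intervalIntegral.integral_of_le hr.le] at this

lemma sin_sinh_le (r : ℝ) (hr : 0 < r) (t : ℝ) :
    Real.sin (Real.pi * t / r) ^ 2 / Real.sinh t ^ 2 ≤ (Real.pi / r) ^ 2 * (t ^ 2 / Real.sinh t ^ 2) := by
  rw [← mul_div_assoc]
  gcongr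
  rw [← mul_pow, sq_le_sq]
  calc |Real.sin (Real.pi * t / r)| ≤ |Real.pi * t / r| := Real.abs_sin_le_abs
    _ = _ := by congr 1; ring

lemma intble_t (r : ℝ) (hr : 0 < r) :
    IntervalIntegrable (fun t : ℝ => t ^ 2 / Real.sinh t ^ 2) MeasureTheory.volume 0 r := by
  refine IntervalIntegrable.mono_fun (intervalIntegrable_const (c := (1:ℝ))) ?_ ?_
  · apply Measurable.aestronglyMeasurable
    exact (measurable_id.pow_const 2).div (Real.continuous_sinh.measurable.pow_const 2)
  · refine Filter.Eventually.of_forall fun t => ?_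
    simp only [norm_one]
    rw [Real.norm_of_nonneg (by positivity)]
    exact sinh_ratio_nonneg_bdd t

lemma intble_s (r : ℝ) (hr : 0 < r) :
    IntervalIntegrable (fun t : ℝ => Real.sin (Real.pi * t / r) ^ 2 / Real.sinh t ^ 2)
      MeasureTheory.volume 0 r := by
  refine IntervalIntegrable.mono_fun ((intble_t r hr).const_mul ((Real.pi / r)^2)) ?_ ?_
  · apply Measurable.aestronglyMeasurable
    have : Continuous fun t : ℝ => Real.sin (Real.pi * t / r) := by fun_prop
    exact (this.measurable.pow_const 2).div (Real.continuous_sinh.measurable.pow_const 2)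
  · refine Filter.Eventually.of_forall fun t => ?_
    simp only
    rw [Real.norm_of_nonneg (by positivity), Real.norm_of_nonneg (by positivity)]
    exact sin_sinh_le r hr t

lemma deriv_sin_lin (r t : ℝ) : HasDerivAt (fun t => Real.sin (Real.pi * t / r))
    (Real.cos (Real.pi * t / r) * (Real.pi / r)) t := by
  have h1 : HasDerivAt (fun t : ℝ => Real.pi * t / r) (Real.pi * 1 / r) t :=
    ((hasDerivAt_id t).const_mul Real.pi).div_const r
  refine h1.sin.congr_deriv ?_
  ring

lemma int_sin_sq (r : ℝ) (hr : 0 < r) : ∫ t in (0:ℝ)..r, Real.sin (Real.pi * t / r) ^ 2 = r / 2 := by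
  have : (fun t => Real.sin (Real.pi * t / r) ^ 2) = fun t => (fun x => Real.sin x ^ 2) (t * (Real.pi / r)) := by
    ext t; simp only; congr 2; ring
  have h2 : r * (Real.pi / r) = Real.pi := by field_simp
  have h3 : Real.pi / r ≠ 0 := by positivity
  rw [this, intervalIntegral.integral_comp_mul_right (fun x => Real.sin x ^ 2) h3,
    h2, integral_sin_sq]
  simp
  field_simp

lemma int_cos_sq (r : ℝ) (hr : 0 < r) : ∫ t in (0:ℝ)..r, Real.cos (Real.pi * t / r) ^ 2 = r / 2 := by
  have : (fun t => Real.cos (Real.pi * t / r) ^ 2) = fun t => (fun x => Real.cos x ^ 2) (t * (Real.pi / r)) := by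
    ext t; simp only; congr 2; ring
  have h2 : r * (Real.pi / r) = Real.pi := by field_simp
  have h3 : Real.pi / r ≠ 0 := by positivity
  rw [this, intervalIntegral.integral_comp_mul_right (fun x => Real.cos x ^ 2) h3,
    h2, integral_cos_sq]
  simp
  field_simp

lemma integrand_eq (n : ℕ) (r : ℝ) :
    (fun t => (deriv (fun t => Real.sin (Real.pi * t / r)) t) ^ 2
      + V1 n t * (Real.sin (Real.pi * t / r)) ^ 2) =
    fun t => (Real.pi / r)^2 * Real.cos (Real.pi * t / r) ^ 2
      + (((n:ℝ) - 1)^2/4 * Real.sin (Real.pi * t / r) ^ 2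
      + ((n:ℝ) - 1)*((n:ℝ)-3)/4 * (Real.sin (Real.pi * t / r) ^ 2 / Real.sinh t ^ 2)) := by
  ext t
  rw [(deriv_sin_lin r t).deriv, V1]
  ring

lemma intble_all (n : ℕ) (r : ℝ) (hr : 0 < r) :
    IntervalIntegrable (fun t => (deriv (fun t => Real.sin (Real.pi * t / r)) t) ^ 2
      + V1 n t * (Real.sin (Real.pi * t / r)) ^ 2) MeasureTheory.volume 0 r := by
  rw [integrand_eq]
  refine IntervalIntegrable.add (by apply Continuous.intervalIntegrable; fun_prop)
    (IntervalIntegrable.add (by apply Continuous.intervalIntegrable; fun_prop) ((intble_s r hr).const_mul _))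

lemma part1 (n : ℕ) (hn : 3 ≤ n) (r : ℝ) (hr : 0 < r) :
    Rayleigh (V1 n) (fun t => Real.sin (Real.pi * t / r)) r
      ≤ ((n : ℝ) - 1) ^ 2 / 4 + Real.pi ^ 2 / r ^ 2
        + ((n : ℝ) - 1) * ((n : ℝ) - 3) * Real.pi ^ 4 / (12 * r ^ 3) := by
  have hn' : (3:ℝ) ≤ n := by exact_mod_cast hn
  have hI : ∫ t in (0:ℝ)..r, Real.sin (Real.pi * t / r) ^ 2 / Real.sinh t ^ 2 ≤ (Real.pi / r)^2 * (Real.pi ^ 2 / 6) := by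
    calc _ ≤ ∫ t in (0:ℝ)..r, (Real.pi / r) ^ 2 * (t ^ 2 / Real.sinh t ^ 2) :=
          intervalIntegral.integral_mono_on hr.le (intble_s r hr) ((intble_t r hr).const_mul _)
            (fun t _ => sin_sinh_le r hr t)
      _ ≤ _ := by
          rw [intervalIntegral.integral_const_mul]
          gcongr
          exact int_sinh r hr
  unfold Rayleigh
  rw [integrand_eq, intervalIntegral.integral_add (by apply Continuous.intervalIntegrable; fun_prop)
    (IntervalIntegrable.add (by apply Continuous.intervalIntegrable; fun_prop) ((intble_s r hr).const_mul _)),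
    intervalIntegral.integral_add (by apply Continuous.intervalIntegrable; fun_prop) ((intble_s r hr).const_mul _),
    intervalIntegral.integral_const_mul, intervalIntegral.integral_const_mul,
    intervalIntegral.integral_const_mul, int_cos_sq r hr, int_sin_sq r hr]
  rw [div_le_iff₀ (by positivity)]
  have h1 : 0 ≤ ((n:ℝ) - 1)*((n:ℝ)-3)/4 := by
    have : 0 ≤ (n:ℝ) - 3 := by linarith
    have : 0 ≤ (n:ℝ) - 1 := by linarith
    positivity
  have h2 := mul_le_mul_of_nonneg_left hI h1
  have h3 : (((n : ℝ) - 1) ^ 2 / 4 + Real.pi ^ 2 / r ^ 2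
        + ((n : ℝ) - 1) * ((n : ℝ) - 3) * Real.pi ^ 4 / (12 * r ^ 3)) * (r / 2) =
      (Real.pi / r)^2 * (r/2) + (((n:ℝ) - 1)^2/4 * (r/2) + ((n:ℝ) - 1)*((n:ℝ)-3)/4 * ((Real.pi / r)^2 * (Real.pi ^ 2 / 6))) := by
    field_simp
    ring
  rw [h3]
  linarith

noncomputable def Bop (m : ℕ) (f : ℝ → ℝ) (s : ℝ) : ℝ := ∫ x in (0:ℝ)..s, Real.sinh x ^ m * f x

noncomputable def Lop (m : ℕ) (f : ℝ → ℝ) (s : ℝ) : ℝ := Bop m f s / Real.sinh s ^ m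

noncomputable def aseq (m : ℕ) : ℕ → ℝ → ℝ
  | 0 => fun _ => 1
  | (j+1) => fun t => ∫ s in (0:ℝ)..t, Lop m (aseq m j) s

lemma Bop_deriv (m : ℕ) (f : ℝ → ℝ) (hf : Continuous f) (s : ℝ) :
    HasDerivAt (Bop m f) (Real.sinh s ^ m * f s) s := by
  have hc : Continuous fun x => Real.sinh x ^ m * f x := by fun_prop
  exact hc.integral_hasStrictDerivAt 0 s |>.hasDerivAt

lemma Bop_bound (m : ℕ) (f : ℝ → ℝ) (s C : ℝ) (hC : ∀ x, |x| ≤ |s| → 0 ≤ x * s → |f x| ≤ C) :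
    |Bop m f s| ≤ C * |s| * |Real.sinh s| ^ m := by
  have := intervalIntegral.norm_integral_le_of_norm_le_const (a := 0) (b := s)
    (f := fun x => Real.sinh x ^ m * f x) (C := |Real.sinh s| ^ m * C) ?_
  · rw [Real.norm_eq_abs, sub_zero] at this
    unfold Bop
    linarith
  · intro x hx
    have hx' : |x| ≤ |s| ∧ 0 ≤ x * s := by
      rw [Set.mem_uIoc] at hx
      rcases hx with h | h
      · rw [abs_of_pos h.1, abs_of_pos (h.1.trans_le h.2)]
        exact ⟨h.2, by nlinarith⟩
      · rw [abs_of_nonpos h.2, abs_of_neg (h.1.trans_le h.2)]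
        exact ⟨by linarith, by nlinarith⟩
    rw [Real.norm_eq_abs, abs_mul, abs_pow]
    have h1 : |Real.sinh x| ≤ |Real.sinh s| := by
      rw [Real.abs_sinh, Real.abs_sinh]; exact Real.sinh_le_sinh.2 hx'.1
    gcongr
    exact hC x hx'.1 hx'.2

lemma Lop_bound (m : ℕ) (f : ℝ → ℝ) (s C : ℝ) (hC : ∀ x, |x| ≤ |s| → 0 ≤ x * s → |f x| ≤ C) :
    |Lop m f s| ≤ C * |s| := by
  have h := Bop_bound m f s C hC
  have hC0 : 0 ≤ C := (abs_nonneg _).trans (hC 0 (by simp) (by simp))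
  unfold Lop
  rw [abs_div, abs_pow]
  exact div_le_of_le_mul₀ (by positivity) (by positivity) h

lemma Lop_cont (m : ℕ) (f : ℝ → ℝ) (hf : Continuous f) : Continuous (Lop m f) := by
  have hB : Continuous (Bop m f) :=
    continuous_iff_continuousAt.2 fun s => (Bop_deriv m f hf s).continuousAt
  rw [continuous_iff_continuousAt]
  intro s
  by_cases hs : s = 0
  · subst hs
    obtain ⟨C, hC⟩ := (isCompact_Icc (a := (-1:ℝ)) (b := 1)).exists_bound_of_continuousOn hf.continuousOn
    have h0 : Lop m f 0 = 0 := by simp [Lop, Bop]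
    unfold ContinuousAt
    rw [h0]
    have hev : ∀ᶠ x in nhds (0:ℝ), ‖Lop m f x‖ ≤ C * |x| := by
      filter_upwards [Icc_mem_nhds (show (-1:ℝ) < 0 by norm_num) (show (0:ℝ) < 1 by norm_num)] with x hx
      refine Lop_bound m f x C fun y hy _ => hC y ?_
      have : |x| ≤ 1 := abs_le.2 hx
      exact abs_le.1 (hy.trans this)
    refine squeeze_zero_norm' hev ?_
    have : Continuous fun x : ℝ => C * |x| := by fun_prop
    simpa using this.tendsto 0
  · unfold Lop
    have : Real.sinh s ^ m ≠ 0 := pow_ne_zero _ (by simpa [Real.sinh_eq_zero] using hs)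
    exact hB.continuousAt.div (by fun_prop) this

lemma aseq_cont (m j : ℕ) : Continuous (aseq m j) := by
  induction j with
  | zero => exact continuous_const
  | succ j ih =>
    exact intervalIntegral.continuous_primitive (fun a b => (Lop_cont m _ ih).intervalIntegrable a b) 0

lemma aseq_deriv (m j : ℕ) (t : ℝ) : HasDerivAt (aseq m (j+1)) (Lop m (aseq m j) t) t :=
  ((Lop_cont m _ (aseq_cont m j)).integral_hasStrictDerivAt 0 t).hasDerivAt

lemma aseq_bound (m : ℕ) (R : ℝ) (hR : 0 ≤ R) (j : ℕ) :
    ∀ t, 0 ≤ t → t ≤ R → |aseq m j t| ≤ R ^ j * t ^ j / j.factorial := by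
  induction j with
  | zero => intro t _ _; simp [aseq]
  | succ j ih =>
    intro t ht htR
    have h1 : ∀ s ∈ Set.Ioc 0 t, ‖Lop m (aseq m j) s‖ ≤ R ^ (j+1) / j.factorial * s ^ j := by
      intro s hs
      have hs0 := hs.1
      have := Lop_bound m (aseq m j) s (R ^ j * s ^ j / j.factorial) (fun x hx hxs => by
        have hx0 : 0 ≤ x := nonneg_of_mul_nonneg_left hxs hs.1
        rw [abs_of_nonneg hx0, abs_of_pos hs.1] at hx
        refine (ih x hx0 (by linarith [hs.2])).trans ?_
        gcongr)
      rw [abs_of_pos hs.1] at this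
      refine this.trans ?_
      have hsR : s ≤ R := by linarith [hs.2]
      calc R ^ j * s ^ j / j.factorial * s ≤ R ^ j * s ^ j / j.factorial * R := by gcongr
        _ = _ := by ring
    have h2 := intervalIntegral.norm_integral_le_of_norm_le (μ := MeasureTheory.volume) ht
      (MeasureTheory.ae_of_all _ h1) (by apply Continuous.intervalIntegrable; fun_prop)
    rw [intervalIntegral.integral_const_mul, integral_pow] at h2
    rw [Real.norm_eq_abs] at h2
    refine h2.trans (le_of_eq ?_)
    rw [Nat.factorial_succ]
    push_cast
    field_simp
    simp

noncomputable def psi (m : ℕ) (l t : ℝ) : ℝ := ∑' j : ℕ, (-l) ^ j * aseq m j t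
noncomputable def Pf (m : ℕ) (l t : ℝ) : ℝ := ∑' j : ℕ, (-l) ^ (j+1) * Bop m (aseq m j) t

lemma aseq_bound' (m : ℕ) (R : ℝ) (hR : 0 ≤ R) (j : ℕ) (t : ℝ) (ht : 0 ≤ t) (htR : t ≤ R) :
    |aseq m j t| ≤ (R ^ 2) ^ j / j.factorial := by
  refine (aseq_bound m R hR j t ht htR).trans ?_
  rw [sq, mul_pow]
  gcongr

lemma B_bound' (m : ℕ) (R : ℝ) (hR : 0 ≤ R) (j : ℕ) (t : ℝ) (ht : 0 ≤ t) (htR : t ≤ R) :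
    |Bop m (aseq m j) t| ≤ (R ^ 2) ^ j / j.factorial * t * Real.sinh t ^ m := by
  have := Bop_bound m (aseq m j) t ((R ^ 2) ^ j / j.factorial) (fun x hx hxt => by
    rw [abs_of_nonneg ht] at hx
    rcases ht.eq_or_lt with rfl | h
    · have : x = 0 := abs_nonpos_iff.1 hx
      subst this
      exact aseq_bound' m R hR j 0 le_rfl hR
    · have hx0 : 0 ≤ x := nonneg_of_mul_nonneg_left hxt h
      rw [abs_of_nonneg hx0] at hx
      exact aseq_bound' m R hR j x hx0 (by linarith))
  rwa [abs_of_nonneg ht, abs_of_nonneg (Real.sinh_nonneg_iff.2 ht)] at this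

lemma psi_term (m : ℕ) (R M : ℝ) (hR : 0 ≤ R) (j : ℕ) (l t : ℝ) (hl : |l| ≤ M) (ht : 0 ≤ t) (htR : t ≤ R) :
    ‖(-l) ^ j * aseq m j t‖ ≤ (M * R ^ 2) ^ j / j.factorial := by
  rw [norm_mul, norm_pow, norm_neg, Real.norm_eq_abs, Real.norm_eq_abs, mul_pow, mul_div_assoc]
  have := aseq_bound' m R hR j t ht htR
  gcongr
  exact pow_nonneg ((abs_nonneg l).trans hl) _

lemma psi_cont (m : ℕ) (R M : ℝ) (hR : 0 ≤ R) :
    ContinuousOn (fun p : ℝ × ℝ => psi m p.1 p.2) (Set.Icc (-M) M ×ˢ Set.Icc 0 R) := by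
  refine continuousOn_tsum (f := fun (j : ℕ) (p : ℝ × ℝ) => (-p.1) ^ j * aseq m j p.2)
    (u := fun j : ℕ => (M * R ^ 2) ^ j / (j.factorial : ℝ)) (fun j => ?_)
    (Real.summable_pow_div_factorial _) (fun j p hp => ?_)
  · exact ((continuous_fst.neg.pow j).mul ((aseq_cont m j).comp continuous_snd)).continuousOn
  · exact psi_term m R M hR j p.1 p.2 (abs_le.2 hp.1) hp.2.1 hp.2.2

lemma psi_zero (m : ℕ) (l : ℝ) : psi m l 0 = 1 := by
  unfold psi
  rw [tsum_eq_single 0]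
  · simp [aseq]
  · intro j hj
    obtain ⟨k, rfl⟩ := Nat.exists_eq_succ_of_ne_zero hj
    simp [aseq]

lemma psi_lam_zero (m : ℕ) (t : ℝ) : psi m 0 t = 1 := by
  unfold psi
  rw [tsum_eq_single 0]
  · simp [aseq]
  · intro j hj
    simp [hj]

lemma Pf_term (m : ℕ) (R : ℝ) (hR : 0 ≤ R) (j : ℕ) (l t : ℝ) (ht : 0 ≤ t) (htR : t ≤ R) :
    ‖(-l) ^ (j+1) * Bop m (aseq m j) t‖ ≤ (|l| * R ^ 2) ^ j / j.factorial * (|l| * t * Real.sinh t ^ m) := by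
  rw [norm_mul, norm_pow, norm_neg, Real.norm_eq_abs, Real.norm_eq_abs]
  calc |l| ^ (j+1) * |Bop m (aseq m j) t| ≤ |l|^(j+1) * ((R ^ 2) ^ j / j.factorial * t * Real.sinh t ^ m) := by
        gcongr; exact B_bound' m R hR j t ht htR
    _ = _ := by ring

lemma Pf_bound (m : ℕ) (R : ℝ) (hR : 0 ≤ R) (l : ℝ) :
    ∃ C, ∀ t, 0 ≤ t → t ≤ R → |Pf m l t| ≤ C * t * Real.sinh t ^ m := by
  refine ⟨(∑' j : ℕ, (|l| * R ^ 2) ^ j / (j.factorial : ℝ)) * |l|, fun t ht htR => ?_⟩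
  have hs := (Real.summable_pow_div_factorial (|l| * R^2))
  have h := tsum_of_norm_bounded (hs.hasSum.mul_right (|l| * t * Real.sinh t ^ m))
    (fun j => Pf_term m R hR j l t ht htR)
  rw [Real.norm_eq_abs] at h
  unfold Pf
  refine h.trans (le_of_eq (by ring))

lemma psi_deriv (m : ℕ) (l t : ℝ) (ht : 0 < t) :
    HasDerivAt (psi m l) (Pf m l t / Real.sinh t ^ m) t := by
  have hR : 0 ≤ t + 1 := by linarith
  have hsum : ∀ s, 0 ≤ s → s ≤ t + 1 → Summable fun j : ℕ => (-l) ^ j * aseq m j s := fun s hs hs' =>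
    Summable.of_norm_bounded (Real.summable_pow_div_factorial (|l| * (t+1)^2))
      (fun j => psi_term m (t+1) (|l|) hR j l s le_rfl hs hs')
  have heq : Set.EqOn (psi m l) (fun s => 1 + ∑' j : ℕ, (-l)^(j+1) * aseq m (j+1) s) (Set.Ioo 0 (t+1)) := by
    intro s hs
    unfold psi
    rw [(hsum s hs.1.le hs.2.le).tsum_eq_zero_add]
    simp [aseq]
  have hmem : t ∈ Set.Ioo 0 (t+1) := ⟨ht, by linarith⟩
  have hd : HasDerivAt (fun s => ∑' j : ℕ, (-l)^(j+1) * aseq m (j+1) s)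
      (∑' j : ℕ, (-l)^(j+1) * Lop m (aseq m j) t) t := by
    refine hasDerivAt_tsum_of_isPreconnected
      (u := fun j => (|l| * (t+1) ^ 2) ^ j / j.factorial * (|l| * (t+1)))
      (t := Set.Ioo 0 (t+1)) (y₀ := t) (g := fun j s => (-l)^(j+1) * aseq m (j+1) s)
      (g' := fun j s => (-l)^(j+1) * Lop m (aseq m j) s)
      ((Real.summable_pow_div_factorial _).mul_right _) isOpen_Ioo isPreconnected_Ioo
      (fun j s _ => (aseq_deriv m j s).const_mul _) (fun j s hs => ?_) hmem ?_ hmem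
    · have h1 := Pf_term m (t+1) hR j l s hs.1.le hs.2.le
      have hpos : 0 < Real.sinh s ^ m := pow_pos (Real.sinh_pos_iff.2 hs.1) _
      unfold Lop
      rw [← mul_div_assoc, norm_div, Real.norm_of_nonneg hpos.le, div_le_iff₀ hpos]
      refine h1.trans ?_
      rw [mul_assoc ((|l| * (t+1) ^ 2) ^ j / (j.factorial : ℝ))]
      have := hs.2.le
      gcongr
    · exact (summable_nat_add_iff 1).2 (hsum t ht.le (by linarith))
  have h2 : HasDerivAt (psi m l) (∑' j : ℕ, (-l)^(j+1) * Lop m (aseq m j) t) t :=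
    (hd.const_add 1).congr_of_eventuallyEq (heq.eventuallyEq_of_mem (isOpen_Ioo.mem_nhds hmem))
  refine h2.congr_deriv ?_
  unfold Pf Lop
  rw [← tsum_div_const]
  simp_rw [mul_div_assoc]

lemma Pf_deriv (m : ℕ) (l t : ℝ) (ht : 0 < t) :
    HasDerivAt (Pf m l) (-l * Real.sinh t ^ m * psi m l t) t := by
  have hR : 0 ≤ t + 1 := by linarith
  have hmem : t ∈ Set.Ioo 0 (t+1) := ⟨ht, by linarith⟩
  have hd : HasDerivAt (Pf m l)
      (∑' j : ℕ, (-l)^(j+1) * (Real.sinh t ^ m * aseq m j t)) t := by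
    refine hasDerivAt_tsum_of_isPreconnected
      (u := fun j => (|l| * (t+1) ^ 2) ^ j / j.factorial * (|l| * Real.sinh (t+1) ^ m))
      (t := Set.Ioo 0 (t+1)) (y₀ := t) (g := fun j s => (-l)^(j+1) * Bop m (aseq m j) s)
      (g' := fun j s => (-l)^(j+1) * (Real.sinh s ^ m * aseq m j s))
      ((Real.summable_pow_div_factorial _).mul_right _) isOpen_Ioo isPreconnected_Ioo
      (fun j s _ => (Bop_deriv m _ (aseq_cont m j) s).const_mul _) (fun j s hs => ?_) hmem ?_ hmem
    · have h1 := psi_term m (t+1) (|l|) hR j l s le_rfl hs.1.le hs.2.le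
      have hpos : 0 < Real.sinh s := (Real.sinh_pos_iff.2 hs.1)
      have : (-l)^(j+1) * (Real.sinh s ^ m * aseq m j s) = ((-l)^j * aseq m j s) * (-l * Real.sinh s ^ m) := by ring
      rw [this, norm_mul]
      have h3 : ‖-l * Real.sinh s ^ m‖ ≤ |l| * Real.sinh (t+1) ^ m := by
        rw [norm_mul, norm_neg, Real.norm_eq_abs, norm_pow, Real.norm_of_nonneg hpos.le]
        have := Real.sinh_le_sinh.2 hs.2.le
        gcongr
      gcongr
    · exact Summable.of_norm_bounded ((Real.summable_pow_div_factorial _).mul_right _)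
        (fun j => Pf_term m (t+1) hR j l t ht.le (by linarith))
  refine hd.congr_deriv ?_
  unfold psi
  rw [← tsum_mul_left]
  congr 1
  ext j
  ring

lemma psi_contOn (m : ℕ) (l R : ℝ) (hR : 0 ≤ R) : ContinuousOn (psi m l) (Set.Icc 0 R) := by
  have h := psi_cont m R |l| hR
  have h2 : ContinuousOn (fun t : ℝ => ((l, t) : ℝ × ℝ)) (Set.Icc 0 R) := by fun_prop
  exact h.comp h2 (fun t ht => ⟨abs_le.1 le_rfl, ht⟩)

lemma Pf_zero (m : ℕ) (l : ℝ) : Pf m l 0 = 0 := by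
  simp [Pf, Bop]

lemma Pf_contOn (m : ℕ) (l R : ℝ) (hR : 0 ≤ R) : ContinuousOn (Pf m l) (Set.Icc 0 R) := by
  obtain ⟨C, hC⟩ := Pf_bound m R hR l
  intro t ht
  rcases ht.1.eq_or_lt with h | h
  · rw [← h]
    unfold ContinuousWithinAt
    rw [Pf_zero]
    refine squeeze_zero_norm' (a := fun t => C * t * Real.sinh t ^ m) ?_ ?_
    · filter_upwards [self_mem_nhdsWithin] with x hx
      exact hC x hx.1 hx.2
    · have : Continuous (fun t => C * t * Real.sinh t ^ m) := by fun_prop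
      have := this.tendsto 0
      simp only [mul_zero, zero_mul] at this
      exact this.mono_left nhdsWithin_le_nhds
  · exact (Pf_deriv m l t h).continuousAt.continuousWithinAt

lemma psi_anti (m : ℕ) (l r : ℝ) (hr : 0 < r) (hl : 0 ≤ l) (h : ∀ t ∈ Set.Icc 0 r, 0 ≤ psi m l t) :
    AntitoneOn (psi m l) (Set.Icc 0 r) := by
  have hP : AntitoneOn (Pf m l) (Set.Icc 0 r) := by
    refine antitoneOn_of_deriv_nonpos (convex_Icc 0 r) (Pf_contOn m l r hr.le) ?_ ?_
    · intro t ht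
      rw [interior_Icc] at ht
      exact (Pf_deriv m l t ht.1).differentiableAt.differentiableWithinAt
    · intro t ht
      rw [interior_Icc] at ht
      rw [(Pf_deriv m l t ht.1).deriv]
      have h1 := h t ⟨ht.1.le, ht.2.le⟩
      have h2 : 0 ≤ l * Real.sinh t ^ m * psi m l t :=
        mul_nonneg (mul_nonneg hl (pow_nonneg (Real.sinh_nonneg_iff.2 ht.1.le) _)) h1
      linarith
  refine antitoneOn_of_deriv_nonpos (convex_Icc 0 r) (psi_contOn m l r hr.le) ?_ ?_
  · intro t ht
    rw [interior_Icc] at ht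
    exact (psi_deriv m l t ht.1).differentiableAt.differentiableWithinAt
  · intro t ht
    rw [interior_Icc] at ht
    rw [(psi_deriv m l t ht.1).deriv]
    have h1 := hP ⟨le_rfl, hr.le⟩ ⟨ht.1.le, ht.2.le⟩ ht.1.le
    rw [Pf_zero] at h1
    exact div_nonpos_of_nonpos_of_nonneg h1 (pow_nonneg (Real.sinh_nonneg_iff.2 ht.1.le) _)

lemma shooting (m : ℕ) (L r : ℝ) (hr : 0 < r) (hL : 0 ≤ L)
    (h : ¬ ∀ t ∈ Set.Icc 0 r, 0 < psi m L t) : ∃ μ, 0 ≤ μ ∧ μ ≤ L ∧ psi m μ r = 0 := by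
  push Not at h
  obtain ⟨t1, ht1, hneg⟩ := h
  have hc : ContinuousOn (fun p : ℝ × ℝ => psi m p.1 p.2) (Set.Icc 0 L ×ˢ Set.Icc 0 r) :=
    (psi_cont m r L hr.le).mono (Set.prod_mono (Set.Icc_subset_Icc (by linarith) le_rfl) le_rfl)
  have hK : IsCompact ((Set.Icc 0 L ×ˢ Set.Icc 0 r) ∩ (fun p : ℝ × ℝ => psi m p.1 p.2) ⁻¹' Set.Iic 0) :=
    (isCompact_Icc.prod isCompact_Icc).of_isClosed_subset
      (hc.preimage_isClosed_of_isClosed (isClosed_Icc.prod isClosed_Icc) isClosed_Iic) Set.inter_subset_left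
  have hK2 := hK.image continuous_fst
  obtain ⟨μ, hμ, hleast⟩ := hK2.exists_isLeast ⟨L, (L, t1), ⟨⟨⟨hL, le_rfl⟩, ht1⟩, hneg⟩, rfl⟩
  obtain ⟨⟨μ', t0⟩, ⟨⟨hμL, ht0⟩, hle⟩, rfl⟩ := hμ
  simp only [Set.mem_preimage, Set.mem_Iic] at hle hμL ht0 hleast
  have hμpos : 0 < μ' := by
    rcases hμL.1.eq_or_lt with h0 | h0
    · rw [← h0, psi_lam_zero] at hle
      linarith
    · exact h0
  have hnn : ∀ t ∈ Set.Icc 0 r, 0 ≤ psi m μ' t := by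
    intro t ht
    have hcw : ContinuousOn (fun x => psi m x t) (Set.Icc 0 L) := by
      have h2 : ContinuousOn (fun x : ℝ => ((x, t) : ℝ × ℝ)) (Set.Icc 0 L) := by fun_prop
      exact hc.comp h2 (fun x hx => ⟨hx, ht⟩)
    have h3 : Filter.Tendsto (fun x => psi m x t) (nhdsWithin μ' (Set.Ioo 0 μ')) (nhds (psi m μ' t)) :=
      (hcw μ' hμL).mono_left (nhdsWithin_mono _ (fun x hx => ⟨hx.1.le, hx.2.le.trans hμL.2⟩))
    have : (nhdsWithin μ' (Set.Ioo 0 μ')).NeBot := right_nhdsWithin_Ioo_neBot hμpos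
    refine ge_of_tendsto h3 ?_
    filter_upwards [self_mem_nhdsWithin] with x hx
    by_contra hcon
    push Not at hcon
    have := hleast ⟨(x, t), ⟨⟨⟨hx.1.le, hx.2.le.trans hμL.2⟩, ht⟩, hcon.le⟩, rfl⟩
    exact absurd hx.2 (not_lt.2 this)
  have ha := psi_anti m μ' r hr hμL.1 hnn ht0 ⟨hr.le, le_rfl⟩ ht0.2
  exact ⟨μ', hμL.1, hμL.2, le_antisymm (ha.trans hle) (hnn r ⟨hr.le, le_rfl⟩)⟩

lemma sinh_pow_deriv (m : ℕ) (t : ℝ) (ht : 0 < t) :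
    HasDerivAt (fun t => Real.sinh t ^ m) (m * Real.sinh t ^ m * (Real.cosh t / Real.sinh t)) t := by
  have hs : 0 < Real.sinh t := Real.sinh_pos_iff.2 ht
  refine ((Real.hasDerivAt_sinh t).pow m).congr_deriv ?_
  cases m with
  | zero => simp
  | succ j => simp only [Nat.add_sub_cancel, pow_succ]; field_simp

lemma coth_deriv (t : ℝ) (ht : 0 < t) :
    HasDerivAt (fun t => Real.cosh t / Real.sinh t) (-1 / Real.sinh t ^ 2) t := by
  have hs : 0 < Real.sinh t := Real.sinh_pos_iff.2 ht
  refine ((Real.hasDerivAt_cosh t).div (Real.hasDerivAt_sinh t) hs.ne').congr_deriv ?_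
  have := Real.cosh_sq t
  congr 1
  nlinarith

lemma V1_eq (n m : ℕ) (hm : n = m + 1) (t : ℝ) (ht : 0 < t) :
    V1 n t = (m/2:ℝ)^2 * (Real.cosh t / Real.sinh t)^2 - (m/2:ℝ) / Real.sinh t ^ 2 := by
  have hs : 0 < Real.sinh t := Real.sinh_pos_iff.2 ht
  subst hm
  unfold V1
  push_cast
  rw [div_pow (Real.cosh t), Real.cosh_sq]
  field_simp
  ring

lemma D_deriv (m : ℕ) (l t : ℝ) (ht : 0 < t) :
    HasDerivAt (fun t => Pf m l t / Real.sinh t ^ m)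
      (-l * psi m l t - m * (Real.cosh t / Real.sinh t) * (Pf m l t / Real.sinh t ^ m)) t := by
  have hs : 0 < Real.sinh t := Real.sinh_pos_iff.2 ht
  refine ((Pf_deriv m l t ht).div (sinh_pow_deriv m t ht) (pow_pos hs m).ne').congr_deriv ?_
  field_simp

noncomputable def hfun (m : ℕ) (l t : ℝ) : ℝ :=
  (m/2:ℝ) * (Real.cosh t / Real.sinh t) + (Pf m l t / Real.sinh t ^ m) / psi m l t

lemma hfun_deriv (n m : ℕ) (hm : n = m + 1) (l t : ℝ) (ht : 0 < t) (hp : psi m l t ≠ 0) :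
    HasDerivAt (hfun m l) (V1 n t - l - hfun m l t ^ 2) t := by
  have hs : 0 < Real.sinh t := Real.sinh_pos_iff.2 ht
  refine (((coth_deriv t ht).const_mul (m/2:ℝ)).add
    ((D_deriv m l t ht).div (psi_deriv m l t ht) hp)).congr_deriv ?_
  rw [V1_eq n m hm t ht]
  unfold hfun
  generalize Pf m l t / Real.sinh t ^ m = D
  generalize Real.cosh t / Real.sinh t = c
  field_simp
  ring

lemma picone_s5 (n m : ℕ) (hm : n = m + 1) (l r : ℝ) (hr : 0 < r)
    (hpos : ∀ t ∈ Set.Icc 0 r, 0 < psi m l t) :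
    l ≤ Rayleigh (V1 n) (fun t => Real.sin (Real.pi * t / r)) r := by
  set v : ℝ → ℝ := fun t => Real.sin (Real.pi * t / r) with hv
  have hvd : ∀ t, HasDerivAt v (deriv v t) t := fun t => (deriv_sin_lin r t).differentiableAt.hasDerivAt
  have hv0 : v 0 = 0 := by simp [hv]
  have hvr : v r = 0 := by simp [hv, hr.ne']
  have hvb : ∀ t, |v t| ≤ Real.pi / r * |t| := by
    intro t
    refine (Real.abs_sin_le_abs (x := Real.pi * t / r)).trans (le_of_eq ?_)
    rw [abs_div, abs_mul, abs_of_pos Real.pi_pos, abs_of_pos hr]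
    ring
  obtain ⟨C, hC⟩ := Pf_bound m r hr.le l
  obtain ⟨x0, hx0, hmin⟩ := isCompact_Icc.exists_isMinOn ⟨0, le_rfl, hr.le⟩ (psi_contOn m l r hr.le)
  have hδ := hpos x0 hx0
  set δ := psi m l x0 with hδd
  have hF : ∀ t, 0 < t → t ≤ r → HasDerivAt (fun t => v t ^ 2 * hfun m l t)
      (2 * v t * deriv v t * hfun m l t + v t ^ 2 * (V1 n t - l - hfun m l t ^ 2)) t := by
    intro t ht htr
    refine (((hvd t).pow 2).mul (hfun_deriv n m hm l t ht (hpos t ⟨ht.le, htr⟩).ne')).congr_deriv ?_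
    simp
  have hbound : ∀ t ∈ Set.Icc 0 r, |v t ^ 2 * hfun m l t| ≤
      ((Real.pi / r)^2 * ((m/2:ℝ) * Real.cosh r) * t
        + (Real.pi / r)^2 * t^2 * (C * t / δ)) := by
    intro t ht
    rcases ht.1.eq_or_lt with h | h
    · rw [← h, hv0]; simp
    have hs : 0 < Real.sinh t := Real.sinh_pos_iff.2 h
    have hts : t ≤ Real.sinh t := Real.self_le_sinh_iff.2 h.le
    have hv2 : v t ^ 2 ≤ (Real.pi / r)^2 * t^2 := by
      rw [← mul_pow, ← sq_abs]
      have := hvb t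
      rw [abs_of_pos h] at this
      gcongr
    have hch : Real.cosh t ≤ Real.cosh r := by
      rw [Real.cosh_le_cosh, abs_of_pos h, abs_of_pos hr]; exact ht.2
    have hcp := Real.cosh_pos t
    have hD : |Pf m l t / Real.sinh t ^ m| ≤ C * t := by
      rw [abs_div, abs_of_pos (pow_pos hs m), div_le_iff₀ (pow_pos hs m)]
      exact hC t ht.1 ht.2
    have hδt : δ ≤ psi m l t := hmin ht
    have hψ := hpos t ht
    rw [abs_mul, abs_of_nonneg (sq_nonneg (v t))]
    have h1 : |hfun m l t| ≤ (m/2:ℝ) * (Real.cosh r / t) + C * t / δ := by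
      unfold hfun
      refine (abs_add_le _ _).trans ?_
      rw [abs_of_nonneg (by positivity : 0 ≤ (m/2:ℝ) * (Real.cosh t / Real.sinh t)), abs_div, abs_of_pos hψ]
      have hCt : 0 ≤ C * t := (abs_nonneg _).trans hD
      gcongr
    calc v t ^ 2 * |hfun m l t| ≤ ((Real.pi / r)^2 * t^2) * ((m/2:ℝ) * (Real.cosh r / t) + C * t / δ) := by gcongr
      _ = _ := by field_simp
  have hcont : ContinuousOn (fun t => v t ^ 2 * hfun m l t) (Set.Icc 0 r) := by
    intro t ht
    rcases ht.1.eq_or_lt with h | h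
    · rw [← h]
      unfold ContinuousWithinAt
      simp only [hv0, ne_eq, OfNat.ofNat_ne_zero, not_false_eq_true, zero_pow, zero_mul]
      refine squeeze_zero_norm' (Filter.eventually_of_mem self_mem_nhdsWithin hbound) ?_
      refine Filter.Tendsto.mono_left ?_ nhdsWithin_le_nhds
      have : Continuous (fun t : ℝ => ((Real.pi / r)^2 * ((m/2:ℝ) * Real.cosh r) * t
        + (Real.pi / r)^2 * t^2 * (C * t / δ))) := by fun_prop
      simpa using this.tendsto 0
    · exact (hF t h ht.2).continuousAt.continuousWithinAt
  have hI1 := intble_all n r hr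
  have hI2 : IntervalIntegrable (fun t => v t ^ 2) MeasureTheory.volume 0 r := by
    apply Continuous.intervalIntegrable; fun_prop
  have hI := hI1.sub (hI2.const_mul l)
  have key := intervalIntegral.sub_le_integral_of_hasDeriv_right_of_le hr.le hcont
    (fun t ht => (hF t ht.1 ht.2.le).hasDerivWithinAt)
    ((intervalIntegrable_iff_integrableOn_Icc_of_le hr.le).1 hI)
    (fun t ht => by
      nlinarith [sq_nonneg (deriv v t - v t * hfun m l t)])
  rw [intervalIntegral.integral_sub hI1 (hI2.const_mul l), intervalIntegral.integral_const_mul] at key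
  simp only [hv0, hvr] at key
  have h2 : ∫ t in (0:ℝ)..r, v t ^ 2 = r / 2 := int_sin_sq r hr
  unfold Rayleigh
  rw [le_div_iff₀ (by rw [h2]; positivity)]
  norm_num at key
  exact key

lemma w_deriv (k t : ℝ) (ht : 0 < t) :
    HasDerivAt (fun t => Real.sinh t ^ k) (k * Real.sinh t ^ k * (Real.cosh t / Real.sinh t)) t := by
  have hs : 0 < Real.sinh t := Real.sinh_pos_iff.2 ht
  refine ((Real.hasDerivAt_sinh t).rpow_const (p := k) (Or.inl hs.ne')).congr_deriv ?_
  rw [Real.rpow_sub_one hs.ne']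
  ring

noncomputable def ufun (m : ℕ) (l t : ℝ) : ℝ := if 0 < t then Real.sinh t ^ (m/2:ℝ) * psi m l t else 0

noncomputable def qfun (m : ℕ) (l t : ℝ) : ℝ :=
  Real.sinh t ^ (m/2:ℝ) * ((m/2:ℝ) * (Real.cosh t / Real.sinh t) * psi m l t + Pf m l t / Real.sinh t ^ m)

lemma ufun_deriv (m : ℕ) (l t : ℝ) (ht : 0 < t) : HasDerivAt (ufun m l) (qfun m l t) t := by
  have h1 : HasDerivAt (fun t => Real.sinh t ^ (m/2:ℝ) * psi m l t) (qfun m l t) t := by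
    refine ((w_deriv (m/2:ℝ) t ht).mul (psi_deriv m l t ht)).congr_deriv ?_
    unfold qfun
    ring
  refine h1.congr_of_eventuallyEq ?_
  filter_upwards [lt_mem_nhds ht] with x hx
  simp [ufun, hx]

lemma qfun_deriv (n m : ℕ) (hm : n = m + 1) (l t : ℝ) (ht : 0 < t) :
    HasDerivAt (qfun m l) ((V1 n t - l) * ufun m l t) t := by
  have hs : 0 < Real.sinh t := Real.sinh_pos_iff.2 ht
  have h1 := (w_deriv (m/2:ℝ) t ht).mul ((((coth_deriv t ht).const_mul (m/2:ℝ)).mul (psi_deriv m l t ht)).add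
    (D_deriv m l t ht))
  refine h1.congr_deriv ?_
  rw [V1_eq n m hm t ht]
  simp only [ufun, ht, if_true]
  simp only [Pi.add_apply, Pi.mul_apply]
  generalize Pf m l t / Real.sinh t ^ m = D
  generalize Real.cosh t / Real.sinh t = c
  field_simp
  ring

lemma psi_tendsto (m : ℕ) (l : ℝ) : Filter.Tendsto (psi m l) (nhdsWithin 0 (Set.Ioi 0)) (nhds 1) := by
  have h := (psi_contOn m l 1 zero_le_one) 0 ⟨le_rfl, zero_le_one⟩
  unfold ContinuousWithinAt at h
  rw [psi_zero] at h
  refine h.mono_left ?_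
  rw [← nhdsWithin_Ioo_eq_nhdsGT (show (0:ℝ) < 1 by norm_num)]
  exact nhdsWithin_mono _ Set.Ioo_subset_Icc_self

lemma w_tendsto (k : ℝ) (hk : 0 < k) :
    Filter.Tendsto (fun t => Real.sinh t ^ k) (nhdsWithin 0 (Set.Ioi 0)) (nhds 0) := by
  have h : ContinuousAt (fun t => Real.sinh t ^ k) 0 :=
    Real.continuous_sinh.continuousAt.rpow_const (Or.inr hk.le)
  have h2 := h.tendsto
  simp only [Real.sinh_zero, Real.zero_rpow hk.ne'] at h2
  exact h2.mono_left nhdsWithin_le_nhds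

lemma ufun_tendsto (m : ℕ) (hm : 3 ≤ m) (l : ℝ) :
    Filter.Tendsto (ufun m l) (nhdsWithin 0 (Set.Ioi 0)) (nhds 0) := by
  have hm' : (3:ℝ) ≤ m := by exact_mod_cast hm
  have h := (w_tendsto (m/2:ℝ) (by linarith)).mul (psi_tendsto m l)
  rw [zero_mul] at h
  refine h.congr' ?_
  filter_upwards [self_mem_nhdsWithin] with t ht
  have : 0 < t := ht
  simp [ufun, this]

lemma qfun_tendsto (m : ℕ) (hm : 3 ≤ m) (l : ℝ) :
    Filter.Tendsto (qfun m l) (nhdsWithin 0 (Set.Ioi 0)) (nhds 0) := by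
  have hm' : (3:ℝ) ≤ m := by exact_mod_cast hm
  obtain ⟨C, hC⟩ := Pf_bound m 1 zero_le_one l
  have hch : Filter.Tendsto Real.cosh (nhdsWithin 0 (Set.Ioi 0)) (nhds 1) := by
    have := Real.continuous_cosh.tendsto 0
    rw [Real.cosh_zero] at this
    exact this.mono_left nhdsWithin_le_nhds
  have hD : Filter.Tendsto (fun t => Pf m l t / Real.sinh t ^ m) (nhdsWithin 0 (Set.Ioi 0)) (nhds 0) := by
    refine squeeze_zero_norm' (a := fun t => C * t) ?_ ?_
    · filter_upwards [Ioo_mem_nhdsGT (show (0:ℝ) < 1 by norm_num)] with t ht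
      have hs : 0 < Real.sinh t ^ m := pow_pos (Real.sinh_pos_iff.2 ht.1) _
      rw [norm_div, Real.norm_of_nonneg hs.le, div_le_iff₀ hs]
      exact hC t ht.1.le ht.2.le
    · have : Continuous fun t : ℝ => C * t := by fun_prop
      have := this.tendsto 0
      rw [mul_zero] at this
      exact this.mono_left nhdsWithin_le_nhds
  have h1 := ((((w_tendsto (m/2-1:ℝ) (by linarith)).mul hch).mul (psi_tendsto m l)).const_mul (m/2:ℝ)).add
    ((w_tendsto (m/2:ℝ) (by linarith)).mul hD)
  simp only [zero_mul, mul_zero, add_zero] at h1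
  refine h1.congr' ?_
  filter_upwards [self_mem_nhdsWithin] with t ht
  have hs : 0 < Real.sinh t := Real.sinh_pos_iff.2 ht
  rw [Real.rpow_sub_one hs.ne']
  unfold qfun
  ring

lemma ufun_deriv_zero (m : ℕ) (hm : 3 ≤ m) (l : ℝ) : HasDerivAt (ufun m l) 0 0 := by
  have h0 : ufun m l 0 = 0 := by simp [ufun]
  have hR : HasDerivWithinAt (ufun m l) 0 (Set.Ici 0) 0 := by
    refine hasDerivWithinAt_Ici_of_tendsto_deriv (s := Set.Ioi 0)
      (fun t ht => (ufun_deriv m l t ht).differentiableAt.differentiableWithinAt) ?_ self_mem_nhdsWithin ?_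
    · unfold ContinuousWithinAt
      rw [h0]
      exact ufun_tendsto m hm l
    · refine (qfun_tendsto m hm l).congr' ?_
      filter_upwards [self_mem_nhdsWithin] with t ht
      exact (ufun_deriv m l t ht).deriv.symm
  have hL : HasDerivWithinAt (ufun m l) 0 (Set.Iic 0) 0 := by
    refine (hasDerivWithinAt_const (0:ℝ) (Set.Iic 0) (0:ℝ)).congr (fun t ht => ?_) h0
    have : ¬ 0 < t := not_lt.2 ht
    simp [ufun, this]
  have := hL.union hR
  rwa [Set.Iic_union_Ici, hasDerivWithinAt_univ] at this

lemma eigen (n m : ℕ) (hm : n = m + 1) (hm3 : 3 ≤ m) (l r : ℝ) (hr : 0 < r) (h : psi m l r = 0) :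
    IsDirichletEigenvalue (V1 n) r l := by
  have hev : ∀ t : ℝ, 0 < t → deriv (ufun m l) =ᶠ[nhds t] qfun m l := by
    intro t ht
    filter_upwards [lt_mem_nhds ht] with x hx
    exact (ufun_deriv m l x hx).deriv
  have hdd : ∀ t : ℝ, 0 < t → HasDerivAt (deriv (ufun m l)) ((V1 n t - l) * ufun m l t) t := fun t ht =>
    (qfun_deriv n m hm l t ht).congr_of_eventuallyEq (hev t ht)
  refine ⟨ufun m l, ?_, ?_, ?_, ?_, ?_, ?_, ?_, ?_⟩
  · have h1 : ∀ᶠ t in nhdsWithin (0:ℝ) (Set.Ioi 0), 0 < psi m l t :=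
      (psi_tendsto m l).eventually (lt_mem_nhds zero_lt_one)
    obtain ⟨t, h2, h3⟩ := (h1.and (Ioo_mem_nhdsGT hr)).exists
    refine ⟨t, ⟨h3.1.le, h3.2.le⟩, ?_⟩
    simp only [ufun, h3.1, if_true]
    exact (mul_pos (Real.rpow_pos_of_pos (Real.sinh_pos_iff.2 h3.1) _) h2).ne'
  · intro t ht
    rcases ht.1.eq_or_lt with h0 | h0
    · rw [← h0]; exact (ufun_deriv_zero m hm3 l).continuousAt.continuousWithinAt
    · exact (ufun_deriv m l t h0).continuousAt.continuousWithinAt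
  · exact fun t ht => (ufun_deriv m l t ht.1).differentiableAt
  · intro t ht
    rcases ht.1.eq_or_lt with h0 | h0
    · rw [← h0]
      have h2 : ContinuousWithinAt (deriv (ufun m l)) (Set.Ioi 0) 0 := by
        unfold ContinuousWithinAt
        rw [(ufun_deriv_zero m hm3 l).deriv]
        refine (qfun_tendsto m hm3 l).congr' ?_
        filter_upwards [self_mem_nhdsWithin] with t ht
        exact (ufun_deriv m l t ht).deriv.symm
      have h3 := continuousWithinAt_insert_self.2 h2
      exact h3.mono (fun x hx => by
        rcases hx.1.eq_or_lt with h | h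
        · exact Or.inl h.symm
        · exact Or.inr h)
    · exact (hdd t h0).continuousAt.continuousWithinAt
  · exact fun t ht => (hdd t ht.1).differentiableAt
  · simp [ufun]
  · simp [ufun, h]
  · intro t ht
    rw [(hdd t ht.1).deriv]
    ring

lemma eigen3 (r : ℝ) (hr : 0 < r) : IsDirichletEigenvalue (V1 3) r (1 + Real.pi ^ 2 / r ^ 2) := by
  have hd : deriv (fun t => Real.sin (Real.pi * t / r)) = fun t => Real.cos (Real.pi * t / r) * (Real.pi / r) := by
    ext t; exact (deriv_sin_lin r t).deriv
  have hdd : ∀ t, HasDerivAt (fun t => Real.cos (Real.pi * t / r) * (Real.pi / r))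
      (-Real.sin (Real.pi * t / r) * (Real.pi / r) * (Real.pi / r)) t := by
    intro t
    have h1 : HasDerivAt (fun t : ℝ => Real.pi * t / r) (Real.pi * 1 / r) t :=
      ((hasDerivAt_id t).const_mul Real.pi).div_const r
    refine (h1.cos.mul_const (Real.pi / r)).congr_deriv ?_
    ring
  refine ⟨fun t => Real.sin (Real.pi * t / r), ⟨r/2, ⟨by linarith, by linarith⟩, ?_⟩, ?_, ?_, ?_, ?_, ?_, ?_, ?_⟩
  · have : Real.pi * (r/2) / r = Real.pi / 2 := by field_simp
    simp only [this, Real.sin_pi_div_two]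
    norm_num
  · fun_prop
  · exact fun t _ => (deriv_sin_lin r t).differentiableAt
  · rw [hd]; fun_prop
  · rw [hd]; exact fun t _ => (hdd t).differentiableAt
  · simp
  · simp [hr.ne']
  · intro t _
    rw [hd, (hdd t).deriv]
    unfold V1
    push_cast
    ring

/-- For `n ≥ 3`, `r > 0` and `v(t) = sin(πt/r)`, the Rayleigh quotient of `v` for `V₁` is at
most `(n−1)²/4 + π²/r² + (n−1)(n−3)π⁴/(12r³)`; consequently the first Dirichlet eigenvalue
of `-d²/dt² + V₁` on `[0, r]` (i.e. `λ₁(B_r)` for the geodesic ball of radius `r` in `ℍⁿ`)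
satisfies the same bound. -/
theorem rayleigh_bound_V1 (n : ℕ) (hn : 3 ≤ n) (r : ℝ) (hr : 0 < r) :
    Rayleigh (V1 n) (fun t => Real.sin (Real.pi * t / r)) r
      ≤ ((n : ℝ) - 1) ^ 2 / 4 + Real.pi ^ 2 / r ^ 2
        + ((n : ℝ) - 1) * ((n : ℝ) - 3) * Real.pi ^ 4 / (12 * r ^ 3) ∧
    ∀ lam : ℝ, IsDirichletEigenvalue (V1 n) r lam →
      (∀ μ : ℝ, IsDirichletEigenvalue (V1 n) r μ → lam ≤ μ) →
      lam ≤ ((n : ℝ) - 1) ^ 2 / 4 + Real.pi ^ 2 / r ^ 2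
        + ((n : ℝ) - 1) * ((n : ℝ) - 3) * Real.pi ^ 4 / (12 * r ^ 3) := by
  have hp1 := part1 n hn r hr
  refine ⟨hp1, fun lam _ hmin => ?_⟩
  by_contra hcon
  push Not at hcon
  rcases hn.eq_or_lt with h3 | h4
  · subst h3
    have := hmin _ (eigen3 r hr)
    norm_num at hcon
    linarith
  · obtain ⟨m, rfl⟩ : ∃ m, n = m + 1 := ⟨n - 1, by omega⟩
    obtain ⟨L, hL1, hL2⟩ := exists_between hcon
    have hn' : (3:ℝ) ≤ ((m + 1 : ℕ) : ℝ) := by exact_mod_cast hn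
    have hL0 : 0 ≤ L := by
      refine le_trans ?_ hL1.le
      have h1 : 0 ≤ ((m + 1 : ℕ) : ℝ) - 3 := by linarith
      have h2 : 0 ≤ ((m + 1 : ℕ) : ℝ) - 1 := by linarith
      have := Real.pi_pos
      positivity
    obtain ⟨μ, _, hμL, hμ⟩ := shooting m L r hr hL0 (fun hpos => by
      have := picone_s5 (m+1) m rfl L r hr hpos
      linarith)
    have := hmin μ (eigen (m+1) m rfl (by omega) μ r hr hμ)
    linarith
end

section
/- Let n ≥ 2 be an integer, r > 0, and v(t) = sin(πt/r). Then (∫₀ʳ (v'(t)² + ((n−1)/4)·(n−1 + (n+1)/sinh²(t))·v(t)²) dt) / (∫₀ʳ v(t)² dt) < (n−1)²/4 + π²/r² + (n−1)(n+1)·π⁴/(12·r³). Consequently, the first Dirichlet eigenvalue of −d²/dt² + V₂ on [0,r] (which equals the second Dirichlet eigenvalue λ₂(B_r) of the geodesic ball of radius r in ℍⁿ) is strictly less than (n−1)²/4 + π²/r² + (n−1)(n+1)·π⁴/(12·r³). -/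
open MeasureTheory Set Filter Topology

lemma aux_term_int (k : ℕ) :
    IntegrableOn (fun t : ℝ => 4 * t ^ 2 * ((k:ℝ) * Real.exp (-2 * t) ^ k)) (Ioi 0) ∧
    ∫ t in Ioi (0:ℝ), 4 * t ^ 2 * ((k:ℝ) * Real.exp (-2 * t) ^ k) = 1 / (k:ℝ) ^ 2 := by
  rcases Nat.eq_zero_or_pos k with rfl | hk
  · simp
  have hk' : (0:ℝ) < k := by exact_mod_cast hk
  have e1 : ∀ t : ℝ, 4 * t ^ 2 * ((k:ℝ) * Real.exp (-2 * t) ^ k)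
      = (4 * k) * (t ^ ((3:ℝ) - 1) * Real.exp (-((2 * k) * t))) := by
    intro t
    rw [← Real.exp_nat_mul]
    have : (3:ℝ) - 1 = (2:ℕ) := by norm_num
    rw [this, Real.rpow_natCast]
    have : (k:ℝ) * (-2 * t) = -((2 * k) * t) := by ring
    rw [this]; ring
  have hG : Real.Gamma 3 = 2 := by
    have := Real.Gamma_nat_eq_factorial 2
    norm_num at this
    simpa using this
  simp_rw [e1]
  constructor
  · apply Integrable.const_mul
    have := integrableOn_rpow_mul_exp_neg_mul_rpow (p := 1) (s := 2) (b := 2 * k)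
      (by norm_num) (by norm_num) (by positivity)
    refine this.congr_fun ?_ measurableSet_Ioi
    intro t ht
    norm_num
  · rw [integral_const_mul, Real.integral_rpow_mul_exp_neg_mul_Ioi (by norm_num) (by positivity), hG]
    have : (3:ℝ) = (3:ℕ) := by norm_num
    rw [this, Real.rpow_natCast]
    field_simp
    norm_num

lemma aux_sinh_sum {t : ℝ} (ht : 0 < t) :
    ∑' k : ℕ, 4 * t ^ 2 * ((k:ℝ) * Real.exp (-2 * t) ^ k) = t ^ 2 / Real.sinh t ^ 2 := by
  have hx : ‖Real.exp (-2 * t)‖ < 1 := by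
    rw [Real.norm_eq_abs, abs_of_pos (Real.exp_pos _)]
    exact Real.exp_zero ▸ Real.exp_lt_exp.2 (by linarith)
  rw [((hasSum_coe_mul_geometric_of_norm_lt_one hx).mul_left (4 * t ^ 2)).tsum_eq]
  have h1 : Real.exp (-2 * t) = Real.exp (-t) ^ 2 := by
    rw [← Real.exp_nat_mul]; congr 1; push_cast; ring
  have h2 : Real.exp (-t) * Real.exp t = 1 := by rw [← Real.exp_add]; simp
  have h3 : 1 - Real.exp (-2 * t) = 2 * Real.exp (-t) * Real.sinh t := by
    rw [Real.sinh_eq, h1]; nlinarith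
  have hs := Real.sinh_pos_iff.2 ht
  have he := Real.exp_pos (-t)
  rw [h3, h1]
  field_simp
  norm_num

lemma aux_int_sinh :
    IntegrableOn (fun t : ℝ => t ^ 2 / Real.sinh t ^ 2) (Ioi 0) ∧
    ∫ t in Ioi (0:ℝ), t ^ 2 / Real.sinh t ^ 2 = Real.pi ^ 2 / 6 := by
  have h := hasSum_integral_of_summable_integral_norm (μ := volume.restrict (Ioi (0:ℝ)))
    (F := fun (k : ℕ) (t : ℝ) => 4 * t ^ 2 * ((k:ℝ) * Real.exp (-2 * t) ^ k))
    (fun k => (aux_term_int k).1) (by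
      have : ∀ k : ℕ, ∫ t in Ioi (0:ℝ), ‖4 * t ^ 2 * ((k:ℝ) * Real.exp (-2 * t) ^ k)‖
          = 1 / (k:ℝ) ^ 2 := by
        intro k
        rw [← (aux_term_int k).2]
        congr 1; ext t
        rw [Real.norm_eq_abs, abs_of_nonneg (by positivity)]
      simp_rw [this]
      exact hasSum_zeta_two.summable)
  simp_rw [fun k => (aux_term_int k).2] at h
  have h2 := h.unique hasSum_zeta_two
  rw [setIntegral_congr_fun measurableSet_Ioi (fun t ht => aux_sinh_sum ht)] at h2
  refine ⟨?_, h2⟩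
  by_contra hc
  have := integral_undef hc
  rw [this] at h2
  have := Real.pi_pos
  have : 0 < Real.pi ^ 2 / 6 := by positivity
  linarith

lemma aux_v_bound {r : ℝ} (hr : 0 < r) {t : ℝ} (ht : 0 < t) :
    Real.sin (Real.pi * t / r) ^ 2 < (Real.pi / r) ^ 2 * t ^ 2 := by
  have : 0 < Real.pi * t / r := by have := Real.pi_pos; positivity
  rw [← mul_pow, show Real.pi / r * t = Real.pi * t / r by ring]
  exact Real.sin_sq_lt_sq this.ne'

lemma aux_int_v {r : ℝ} (hr : 0 < r) :
    IntervalIntegrable (fun t : ℝ => Real.sin (Real.pi * t / r) ^ 2 / Real.sinh t ^ 2) volume 0 r := by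
  rw [intervalIntegrable_iff_integrableOn_Ioc_of_le hr.le]
  have h1 : IntegrableOn (fun t : ℝ => (Real.pi / r) ^ 2 * (t ^ 2 / Real.sinh t ^ 2)) (Ioc 0 r) :=
    (aux_int_sinh.1.mono_set Ioc_subset_Ioi_self).const_mul _
  refine Integrable.mono' h1 ?_ ?_
  · apply Measurable.aestronglyMeasurable
    have := Real.measurable_sinh
    fun_prop
  · rw [ae_restrict_iff' measurableSet_Ioc]
    refine Eventually.of_forall fun t ht => ?_
    rw [Real.norm_eq_abs, abs_of_nonneg (by positivity), ← mul_div_assoc]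
    have := aux_v_bound hr ht.1
    gcongr

lemma aux_int_v_lt {r : ℝ} (hr : 0 < r) :
    ∫ t in (0:ℝ)..r, Real.sin (Real.pi * t / r) ^ 2 / Real.sinh t ^ 2
      < Real.pi ^ 4 / (6 * r ^ 2) := by
  have i1 := aux_int_v hr
  have h1 : IntervalIntegrable (fun t : ℝ => (Real.pi / r) ^ 2 * (t ^ 2 / Real.sinh t ^ 2)) volume 0 r := by
    rw [intervalIntegrable_iff_integrableOn_Ioc_of_le hr.le]
    exact (aux_int_sinh.1.mono_set Ioc_subset_Ioi_self).const_mul _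
  have h2 := intervalIntegral.intervalIntegral_pos_of_pos_on (h1.sub i1) (by
    intro t ht
    have := aux_v_bound hr ht.1
    have hs := Real.sinh_pos_iff.2 ht.1
    rw [← mul_div_assoc, ← sub_div]
    apply div_pos (by linarith) (by positivity)) hr
  rw [intervalIntegral.integral_sub h1 i1, intervalIntegral.integral_const_mul] at h2
  have h3 : ∫ t in (0:ℝ)..r, t ^ 2 / Real.sinh t ^ 2 ≤ Real.pi ^ 2 / 6 := by
    rw [intervalIntegral.integral_of_le hr.le, ← aux_int_sinh.2]
    refine setIntegral_mono_set aux_int_sinh.1 ?_ (Ioc_subset_Ioi_self.eventuallyLE)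
    exact Eventually.of_forall fun t => by positivity
  have h4 : (Real.pi / r) ^ 2 * ∫ t in (0:ℝ)..r, t ^ 2 / Real.sinh t ^ 2
      ≤ (Real.pi / r) ^ 2 * (Real.pi ^ 2 / 6) := by gcongr
  have h5 : (Real.pi / r) ^ 2 * (Real.pi ^ 2 / 6) = Real.pi ^ 4 / (6 * r ^ 2) := by
    field_simp
  linarith

lemma aux_sin_sq {r : ℝ} (hr : 0 < r) :
    ∫ t in (0:ℝ)..r, Real.sin (Real.pi * t / r) ^ 2 = r / 2 := by
  have hp := Real.pi_pos
  have : ∀ t : ℝ, Real.pi * t / r = Real.pi / r * t := fun t => by ring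
  simp_rw [this]
  rw [intervalIntegral.integral_comp_mul_left (fun x => Real.sin x ^ 2) (by positivity), integral_sin_sq]
  rw [div_mul_cancel₀ _ hr.ne']
  simp
  field_simp

lemma aux_cos_sq {r : ℝ} (hr : 0 < r) :
    ∫ t in (0:ℝ)..r, Real.cos (Real.pi * t / r) ^ 2 = r / 2 := by
  have hp := Real.pi_pos
  have : ∀ t : ℝ, Real.pi * t / r = Real.pi / r * t := fun t => by ring
  simp_rw [this]
  rw [intervalIntegral.integral_comp_mul_left (fun x => Real.cos x ^ 2) (by positivity), integral_cos_sq]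
  rw [div_mul_cancel₀ _ hr.ne']
  simp
  field_simp

lemma aux_v_deriv {r : ℝ} (t : ℝ) :
    HasDerivAt (fun t => Real.sin (Real.pi * t / r)) (Real.pi / r * Real.cos (Real.pi * t / r)) t := by
  have h : HasDerivAt (fun t : ℝ => Real.pi * t / r) (Real.pi / r) t := by
    have := ((hasDerivAt_id t).const_mul Real.pi).div_const r
    simpa using this
  have := h.sin
  rwa [mul_comm] at this

lemma aux_integrand_int (n : ℕ) {r : ℝ} (hr : 0 < r) :
    IntervalIntegrable (fun t => (deriv (fun t => Real.sin (Real.pi * t / r)) t) ^ 2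
      + V2 n t * Real.sin (Real.pi * t / r) ^ 2) volume 0 r := by
  have h1 := (aux_int_v hr).const_mul (((n:ℝ) - 1) / 4 * ((n:ℝ) + 1))
  have h2 : IntervalIntegrable (fun t => (Real.pi / r * Real.cos (Real.pi * t / r)) ^ 2
    + ((n:ℝ) - 1) / 4 * ((n:ℝ) - 1) * Real.sin (Real.pi * t / r) ^ 2) volume 0 r :=
    Continuous.intervalIntegrable (by fun_prop) _ _
  refine (h2.add h1).congr (fun t _ => ?_)
  simp only [(aux_v_deriv t).deriv, V2]
  ring

lemma aux_rayleigh (n : ℕ) (hn : 2 ≤ n) (r : ℝ) (hr : 0 < r) :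
    Rayleigh (V2 n) (fun t => Real.sin (Real.pi * t / r)) r
      < ((n : ℝ) - 1) ^ 2 / 4 + Real.pi ^ 2 / r ^ 2
        + ((n : ℝ) - 1) * ((n : ℝ) + 1) * Real.pi ^ 4 / (12 * r ^ 3) := by
  have hn' : (2:ℝ) ≤ n := by exact_mod_cast hn
  unfold Rayleigh
  rw [aux_sin_sq hr, div_lt_iff₀ (by positivity)]
  have e : ∀ t : ℝ, (deriv (fun t => Real.sin (Real.pi * t / r)) t) ^ 2
      + V2 n t * Real.sin (Real.pi * t / r) ^ 2 =
      ((Real.pi / r) ^ 2 * Real.cos (Real.pi * t / r) ^ 2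
    + ((n:ℝ) - 1) ^ 2 / 4 * Real.sin (Real.pi * t / r) ^ 2) + (((n:ℝ) - 1) / 4 * ((n:ℝ) + 1)) *
      (Real.sin (Real.pi * t / r) ^ 2 / Real.sinh t ^ 2) := by
    intro t
    simp only [(aux_v_deriv t).deriv, V2]
    ring
  simp_rw [e]
  have c1 : IntervalIntegrable (fun t => (Real.pi / r) ^ 2 * Real.cos (Real.pi * t / r) ^ 2) volume 0 r :=
    Continuous.intervalIntegrable (by fun_prop) _ _
  have c2 : IntervalIntegrable (fun t => ((n:ℝ) - 1) ^ 2 / 4 * Real.sin (Real.pi * t / r) ^ 2) volume 0 r :=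
    Continuous.intervalIntegrable (by fun_prop) _ _
  rw [intervalIntegral.integral_add (c1.add c2) ((aux_int_v hr).const_mul _),
    intervalIntegral.integral_add c1 c2, intervalIntegral.integral_const_mul,
    intervalIntegral.integral_const_mul, intervalIntegral.integral_const_mul, aux_sin_sq hr,
    aux_cos_sq hr]
  have h := aux_int_v_lt hr
  have hc : 0 < ((n:ℝ) - 1) / 4 * ((n:ℝ) + 1) := by
    apply mul_pos <;> linarith
  have h2 := mul_lt_mul_of_pos_left h hc
  have h3 : (((n : ℝ) - 1) ^ 2 / 4 + Real.pi ^ 2 / r ^ 2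
        + ((n : ℝ) - 1) * ((n : ℝ) + 1) * Real.pi ^ 4 / (12 * r ^ 3)) * (r / 2)
      = (Real.pi / r) ^ 2 * (r / 2) + ((n:ℝ) - 1) ^ 2 / 4 * (r / 2)
        + ((n:ℝ) - 1) / 4 * ((n:ℝ) + 1) * (Real.pi ^ 4 / (6 * r ^ 2)) := by
    field_simp
    ring
  rw [h3]
  linarith

noncomputable def QQ (n : ℕ) (f : ℝ → ℝ) (s : ℝ) : ℝ :=
  if s ≤ 0 then 0 else (∫ x in (0:ℝ)..s, Real.sinh x ^ (n + 1) * f x) / Real.sinh s ^ (n + 1)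

lemma QQ_bound (n : ℕ) (f : ℝ → ℝ) {s M : ℝ} (hs : 0 ≤ s)
    (hM : ∀ x ∈ Icc 0 s, |f x| ≤ M) : |QQ n f s| ≤ s * M := by
  have hM0 : 0 ≤ M := (abs_nonneg _).trans (hM 0 ⟨le_rfl, hs⟩)
  unfold QQ
  split_ifs with h
  · simp only [abs_zero]; positivity
  push Not at h
  have hp : 0 < Real.sinh s ^ (n + 1) := pow_pos (Real.sinh_pos_iff.2 h) _
  rw [abs_div, abs_of_pos hp, div_le_iff₀ hp]
  have := intervalIntegral.norm_integral_le_of_norm_le_const (a := 0) (b := s)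
    (C := Real.sinh s ^ (n + 1) * M) (f := fun x => Real.sinh x ^ (n + 1) * f x) (by
      intro x hx
      rw [uIoc_of_le hs] at hx
      rw [norm_mul, norm_pow, Real.norm_eq_abs, Real.norm_eq_abs,
        abs_of_pos (Real.sinh_pos_iff.2 hx.1)]
      have h1 := hM x ⟨hx.1.le, hx.2⟩
      have h2 := Real.sinh_le_sinh.2 hx.2
      have h3 := Real.sinh_pos_iff.2 hx.1
      gcongr)
  rw [Real.norm_eq_abs, sub_zero, abs_of_pos h] at this
  linarith

lemma QQ_deriv (n : ℕ) {f : ℝ → ℝ} (hf : Continuous f) {s : ℝ} (hs : 0 < s) :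
    HasDerivAt (QQ n f) (f s - (n + 1) * Real.cosh s / Real.sinh s * QQ n f s) s := by
  have hp : 0 < Real.sinh s := Real.sinh_pos_iff.2 hs
  have hc : Continuous fun x => Real.sinh x ^ (n + 1) * f x := by
    have := Real.continuous_sinh
    fun_prop
  have h1 : HasDerivAt (fun u => ∫ x in (0:ℝ)..u, Real.sinh x ^ (n + 1) * f x)
      (Real.sinh s ^ (n + 1) * f s) s := hc.integral_hasStrictDerivAt 0 s |>.hasDerivAt
  have h2 := h1.fun_div ((Real.hasDerivAt_sinh s).fun_pow (n + 1)) (pow_pos hp _).ne'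
  have h3 : QQ n f =ᶠ[𝓝 s] fun u => (∫ x in (0:ℝ)..u, Real.sinh x ^ (n + 1) * f x)
      / Real.sinh u ^ (n + 1) := by
    filter_upwards [lt_mem_nhds hs] with u hu
    simp [QQ, not_le.2 hu]
  refine (h2.congr_of_eventuallyEq h3).congr_deriv ?_
  rw [h3.eq_of_nhds]
  push_cast
  field_simp
  ring

lemma QQ_cont (n : ℕ) {f : ℝ → ℝ} (hf : Continuous f) : Continuous (QQ n f) := by
  rw [continuous_iff_continuousAt]
  intro s
  rcases lt_trichotomy s 0 with h | h | h
  · have : QQ n f =ᶠ[𝓝 s] fun _ => 0 := by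
      filter_upwards [gt_mem_nhds h] with u hu
      simp [QQ, hu.le]
    exact continuousAt_const.congr this.symm
  · subst h
    obtain ⟨M, hM⟩ := isCompact_Icc.exists_bound_of_continuousOn (s := Icc (0:ℝ) 1) hf.continuousOn
    have hM0 : 0 ≤ M := (norm_nonneg _).trans (hM 0 (by simp))
    have h0 : QQ n f 0 = 0 := by simp [QQ]
    rw [ContinuousAt, h0]
    refine squeeze_zero_norm' (a := fun s => |s| * M) ?_ ?_
    · filter_upwards [gt_mem_nhds (zero_lt_one' ℝ)] with s hs
      rcases le_or_gt s 0 with h | h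
      · simp only [QQ, h, if_true, norm_zero]; positivity
      · rw [abs_of_pos h]
        exact QQ_bound n f h.le (fun x hx => hM x ⟨hx.1, hx.2.trans hs.le⟩)
    · have : Continuous fun s : ℝ => |s| * M := by fun_prop
      simpa using this.tendsto 0
  · exact (QQ_deriv n hf h).continuousAt

lemma QQ_add (n : ℕ) {f g : ℝ → ℝ} (hf : Continuous f) (hg : Continuous g) (s : ℝ) :
    QQ n (fun x => f x + g x) s = QQ n f s + QQ n g s := by
  unfold QQ
  split_ifs
  · simp
  have := Real.continuous_sinh
  simp_rw [mul_add]
  rw [intervalIntegral.integral_add, add_div]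
  all_goals exact Continuous.intervalIntegrable (by fun_prop) _ _

lemma QQ_smul (n : ℕ) (c : ℝ) (f : ℝ → ℝ) (s : ℝ) :
    QQ n (fun x => c * f x) s = c * QQ n f s := by
  unfold QQ
  split_ifs
  · simp
  simp_rw [mul_left_comm _ c]
  rw [intervalIntegral.integral_const_mul, mul_div_assoc]

lemma ext_cont {r : ℝ} (hr : 0 < r) (f : C(Icc (0:ℝ) r, ℝ)) : Continuous (IccExtend hr.le f) :=
  f.continuous.Icc_extend'

noncomputable def TTlin (n : ℕ) {r : ℝ} (hr : 0 < r) : C(Icc (0:ℝ) r, ℝ) →ₗ[ℝ] C(Icc (0:ℝ) r, ℝ) where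
  toFun f := ⟨fun t => ∫ s in (0:ℝ)..t, QQ n (IccExtend hr.le f) s, by
    have h := QQ_cont n (ext_cont hr f)
    exact (intervalIntegral.continuous_primitive (fun a b => h.intervalIntegrable a b) 0).comp
      continuous_subtype_val⟩
  map_add' f g := by
    ext t
    have e : IccExtend hr.le (f + g : C(Icc (0:ℝ) r, ℝ)) = fun x => IccExtend hr.le f x + IccExtend hr.le g x := by
      ext x; simp [IccExtend]
    simp only [ContinuousMap.coe_mk, ContinuousMap.add_apply]
    rw [e]
    simp_rw [QQ_add n (ext_cont hr f) (ext_cont hr g)]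
    exact intervalIntegral.integral_add ((QQ_cont n (ext_cont hr f)).intervalIntegrable _ _)
      ((QQ_cont n (ext_cont hr g)).intervalIntegrable _ _)
  map_smul' c f := by
    ext t
    have e : IccExtend hr.le (c • f : C(Icc (0:ℝ) r, ℝ)) = fun x => c * IccExtend hr.le f x := by
      ext x; simp [IccExtend]
    simp only [ContinuousMap.coe_mk, ContinuousMap.smul_apply, RingHom.id_apply, smul_eq_mul]
    rw [e]
    simp_rw [QQ_smul]
    exact intervalIntegral.integral_const_mul _ _

lemma TTlin_apply (n : ℕ) {r : ℝ} (hr : 0 < r) (f : C(Icc (0:ℝ) r, ℝ)) (t : Icc (0:ℝ) r) :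
    TTlin n hr f t = ∫ s in (0:ℝ)..t, QQ n (IccExtend hr.le f) s := rfl

lemma TTlin_bound (n : ℕ) {r : ℝ} (hr : 0 < r) (f : C(Icc (0:ℝ) r, ℝ)) (C : ℝ) (k : ℕ)
    (h : ∀ t : Icc (0:ℝ) r, |f t| ≤ C * (t:ℝ) ^ k) (t : Icc (0:ℝ) r) :
    |TTlin n hr f t| ≤ r * C / (k + 1) * (t:ℝ) ^ (k + 1) := by
  have ht := t.2
  have hC : 0 ≤ C := by
    have := (abs_nonneg _).trans (h ⟨r, hr.le, le_rfl⟩)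
    exact nonneg_of_mul_nonneg_left this (by positivity)
  rw [TTlin_apply]
  have := intervalIntegral.norm_integral_le_of_norm_le (a := 0) (b := (t:ℝ)) (μ := volume)
    (f := QQ n (IccExtend hr.le f)) (g := fun s => r * C * s ^ k) ht.1 (by
      refine Eventually.of_forall fun s hs => ?_
      have h1 := QQ_bound n (IccExtend hr.le f) (s := s) (M := C * s ^ k) hs.1.le (by
        intro x hx
        have hx' : x ∈ Icc 0 r := ⟨hx.1, hx.2.trans (hs.2.trans ht.2)⟩
        rw [IccExtend_of_mem _ _ hx']
        refine (h ⟨x, hx'⟩).trans ?_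
        have := hx.1
        have := hx.2
        simp only
        gcongr)
      have h2 : s ≤ r := hs.2.trans ht.2
      have h3 : 0 ≤ C * s ^ k := mul_nonneg hC (pow_nonneg hs.1.le _)
      rw [Real.norm_eq_abs]
      nlinarith) (Continuous.intervalIntegrable (by fun_prop) _ _)
  rw [Real.norm_eq_abs, intervalIntegral.integral_const_mul, integral_pow] at this
  refine this.trans (le_of_eq ?_)
  simp
  ring

noncomputable def TT (n : ℕ) {r : ℝ} (hr : 0 < r) : C(Icc (0:ℝ) r, ℝ) →L[ℝ] C(Icc (0:ℝ) r, ℝ) :=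
  (TTlin n hr).mkContinuous (r * r) (by
    intro f
    rw [ContinuousMap.norm_le _ (by positivity)]
    intro t
    have := TTlin_bound n hr f ‖f‖ 0 (fun t => by simpa using f.norm_coe_le_norm t) t
    have ht := t.2.2
    have hf := norm_nonneg f
    simp at this
    rw [Real.norm_eq_abs]
    refine this.trans ?_
    calc r * ‖f‖ * t ≤ r * ‖f‖ * r := by gcongr
      _ = _ := by ring)

lemma TT_pow_bound (n : ℕ) {r : ℝ} (hr : 0 < r) (f : C(Icc (0:ℝ) r, ℝ)) (k : ℕ) :
    ∀ t : Icc (0:ℝ) r, |((TT n hr) ^ k) f t| ≤ (‖f‖ * r ^ k / k.factorial) * (t:ℝ) ^ k := by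
  induction k with
  | zero => intro t; simpa using f.norm_coe_le_norm t
  | succ k ih =>
    intro t
    rw [pow_succ']
    have := TTlin_bound n hr _ _ k ih t
    refine this.trans (le_of_eq ?_)
    rw [Nat.factorial_succ]
    push_cast
    field_simp
    ring

lemma TT_pow_norm (n : ℕ) {r : ℝ} (hr : 0 < r) (k : ℕ) :
    ‖(TT n hr) ^ k‖ ≤ (r * r) ^ k / k.factorial := by
  refine ContinuousLinearMap.opNorm_le_bound _ (by positivity) fun f => ?_
  rw [ContinuousMap.norm_le _ (by positivity)]
  intro t
  refine (TT_pow_bound n hr f k t).trans ?_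
  have h1 := t.2.1
  have h2 := t.2.2
  calc _ ≤ (‖f‖ * r ^ k / k.factorial) * r ^ k := by gcongr
    _ = _ := by rw [mul_pow]; ring

lemma banach_volterra {E : Type*} [NormedAddCommGroup E] [NormedSpace ℝ E] [CompleteSpace E]
    (T : E →L[ℝ] E) (M : ℝ) (hT : ∀ k : ℕ, ‖T ^ k‖ ≤ M ^ k / k.factorial) (e : E) :
    ∃ w : ℝ → E, Continuous w ∧ w 0 = e ∧ ∀ κ, w κ + κ • T (w κ) = e := by
  have hu : ∀ κ : ℝ, IsUnit (1 + κ • T) := by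
    intro κ
    have hs := (Real.summable_pow_div_factorial (|κ| * M)).tendsto_atTop_zero
    obtain ⟨m, hm⟩ := (hs.eventually (gt_mem_nhds (zero_lt_one' ℝ))).exists
    have h1 : ‖((-κ) • T) ^ m‖ < 1 := by
      refine lt_of_le_of_lt ?_ hm
      rw [smul_pow, norm_smul, norm_pow, norm_neg, Real.norm_eq_abs, mul_pow, mul_div_assoc]
      exact mul_le_mul_of_nonneg_left (hT m) (by positivity)
    have h2 := isUnit_one_sub_of_norm_lt_one h1
    rw [← mul_neg_geom_sum] at h2
    have hc : Commute (1 - (-κ) • T) (∑ i ∈ Finset.range m, ((-κ) • T) ^ i) := by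
      unfold Commute SemiconjBy
      rw [mul_neg_geom_sum, geom_sum_mul_neg]
    have := (hc.isUnit_mul_iff.1 h2).1
    simpa using this
  refine ⟨fun κ => Ring.inverse (1 + κ • T) e, ?_, ?_, ?_⟩
  · have : Continuous fun κ : ℝ => Ring.inverse (1 + κ • T) := by
      rw [continuous_iff_continuousAt]
      intro κ
      have h1 := NormedRing.inverse_continuousAt (hu κ).unit
      rw [IsUnit.unit_spec] at h1
      exact ContinuousAt.comp (g := Ring.inverse) (f := fun κ : ℝ => 1 + κ • T) h1
        (by fun_prop)
    exact this.clm_apply continuous_const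
  · simp
  · intro κ
    have h1 := Ring.mul_inverse_cancel _ (hu κ)
    exact congrArg (fun A => A e) h1

lemma exists_W (n : ℕ) {r : ℝ} (hr : 0 < r) : ∃ W : ℝ → ℝ → ℝ,
    Continuous (fun p : ℝ × ℝ => W p.1 p.2) ∧ (∀ t, W 0 t = 1) ∧
    ∀ κ, ∀ t ∈ Icc 0 r, W κ t = 1 - κ * ∫ s in (0:ℝ)..t, QQ n (W κ) s := by
  obtain ⟨w, hwc, hw0, hw⟩ := banach_volterra (TT n hr) (r * r) (TT_pow_norm n hr) 1
  refine ⟨fun κ => IccExtend hr.le (w κ), ?_, ?_, ?_⟩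
  · have : Continuous fun p : ℝ × ℝ => w p.1 (projIcc 0 r hr.le p.2) := by
      have h1 : Continuous fun p : ℝ × ℝ => w p.1 := hwc.comp continuous_fst
      have h2 : Continuous fun p : ℝ × ℝ => projIcc 0 r hr.le p.2 :=
        continuous_projIcc.comp continuous_snd
      fun_prop
    exact this
  · intro t
    simp [hw0, IccExtend]
  · intro κ t ht
    have h2 := congrArg (fun A : C(Icc (0:ℝ) r, ℝ) => A ⟨t, ht⟩) (hw κ)
    have h3 : w κ ⟨t, ht⟩ + κ * TTlin n hr (w κ) ⟨t, ht⟩ = 1 := h2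
    rw [TTlin_apply] at h3
    simp only [IccExtend_of_mem _ _ ht]
    linarith

noncomputable def wt (n : ℕ) (κ : ℝ) (w : ℝ → ℝ) (t : ℝ) : ℝ := 1 - κ * ∫ s in (0:ℝ)..t, QQ n w s

lemma wt_deriv (n : ℕ) (κ : ℝ) {w : ℝ → ℝ} (hw : Continuous w) (t : ℝ) :
    HasDerivAt (wt n κ w) (-κ * QQ n w t) t := by
  have h := ((QQ_cont n hw).integral_hasStrictDerivAt 0 t).hasDerivAt
  have := (h.const_mul κ).const_sub 1
  refine this.congr_deriv ?_
  ring

lemma G_cont {r : ℝ} (hr : 0 < r) : ContinuousOn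
    (fun t => Real.sin (Real.pi * t / r) ^ 2 * (Real.cosh t / Real.sinh t)) (Icc 0 r) := by
  intro t ht
  rcases ht.1.eq_or_lt with h | h
  · subst h
    have e : Real.sin (Real.pi * 0 / r) ^ 2 * (Real.cosh 0 / Real.sinh 0) = 0 := by simp
    rw [ContinuousWithinAt, e]
    refine squeeze_zero_norm' (a := fun t => (Real.pi / r) ^ 2 * (t * Real.cosh t)) ?_ ?_
    · filter_upwards [self_mem_nhdsWithin] with t ht
      rcases ht.1.eq_or_lt with h | h
      · rw [← h]; simp
      have hs := Real.sinh_pos_iff.2 h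
      have hc := Real.cosh_pos t
      have h1 := (aux_v_bound hr h).le
      have h2 := Real.self_le_sinh_iff.2 h.le
      rw [Real.norm_eq_abs, abs_of_nonneg (by positivity), ← mul_div_assoc, div_le_iff₀ hs]
      calc _ ≤ (Real.pi / r) ^ 2 * t ^ 2 * Real.cosh t := by gcongr
        _ = (Real.pi / r) ^ 2 * (t * Real.cosh t) * t := by ring
        _ ≤ _ := by gcongr
    · have : Continuous fun t : ℝ => (Real.pi / r) ^ 2 * (t * Real.cosh t) := by
        have := Real.continuous_cosh
        fun_prop
      have := (this.tendsto 0).mono_left (nhdsWithin_le_nhds (s := Icc 0 r))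
      simpa using this
  · have hs := Real.sinh_pos_iff.2 h
    have := Real.continuous_cosh
    have := Real.continuous_sinh
    apply ContinuousAt.continuousWithinAt
    apply ContinuousAt.mul (by fun_prop)
    exact ContinuousAt.div (by fun_prop) (by fun_prop) hs.ne'

lemma picone_s6 (n : ℕ) {r : ℝ} (hr : 0 < r) (κ : ℝ) {w : ℝ → ℝ} (hw : Continuous w)
    (heq : ∀ t ∈ Icc 0 r, w t = wt n κ w t) (hpos : ∀ t ∈ Icc 0 r, 0 < w t) :
    κ - n ≤ Rayleigh (V2 n) (fun t => Real.sin (Real.pi * t / r)) r := by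
  unfold Rayleigh
  rw [aux_sin_sq hr, le_div_iff₀ (by positivity)]
  have hQ := QQ_cont n hw
  have hwt : Continuous (wt n κ w) :=
    continuous_iff_continuousAt.2 fun t => (wt_deriv n κ hw t).continuousAt
  have hint := aux_integrand_int n hr
  have hint2 : IntervalIntegrable (fun t => (κ - n) * Real.sin (Real.pi * t / r) ^ 2) volume 0 r :=
    Continuous.intervalIntegrable (by fun_prop) _ _
  have key := intervalIntegral.sub_le_integral_of_hasDeriv_right_of_le hr.le
    (g := fun t => ((n:ℝ) + 1) / 2 * (Real.sin (Real.pi * t / r) ^ 2 * (Real.cosh t / Real.sinh t))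
      + Real.sin (Real.pi * t / r) ^ 2 * (-κ * QQ n w t / wt n κ w t))
    (g' := fun t => ((deriv (fun t => Real.sin (Real.pi * t / r)) t) ^ 2
      + V2 n t * Real.sin (Real.pi * t / r) ^ 2 - (κ - n) * Real.sin (Real.pi * t / r) ^ 2)
      - (Real.pi / r * Real.cos (Real.pi * t / r) - (((n:ℝ) + 1) / 2 * (Real.cosh t / Real.sinh t)
        + (-κ * QQ n w t / wt n κ w t)) * Real.sin (Real.pi * t / r)) ^ 2)
    (φ := fun t => (deriv (fun t => Real.sin (Real.pi * t / r)) t) ^ 2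
      + V2 n t * Real.sin (Real.pi * t / r) ^ 2 - (κ - n) * Real.sin (Real.pi * t / r) ^ 2)
    ?_ ?_ ?_ ?_
  · rw [intervalIntegral.integral_sub hint hint2, intervalIntegral.integral_const_mul,
      aux_sin_sq hr] at key
    have : Real.pi * r / r = Real.pi := by field_simp
    simp [this] at key
    simpa using key
  · apply ContinuousOn.add
    · exact continuousOn_const.mul (G_cont hr)
    · apply ContinuousOn.mul (by fun_prop)
      apply ContinuousOn.div (by fun_prop) hwt.continuousOn
      intro t ht
      rw [← heq t ht]
      exact (hpos t ht).ne'
  · intro t ht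
    apply HasDerivAt.hasDerivWithinAt
    have ht' : t ∈ Icc 0 r := Ioo_subset_Icc_self ht
    have hs := Real.sinh_pos_iff.2 ht.1
    have hW : wt n κ w t ≠ 0 := by rw [← heq t ht']; exact (hpos t ht').ne'
    have d1 := (aux_v_deriv (r := r) t).fun_pow 2
    have d2 := (Real.hasDerivAt_cosh t).fun_div (Real.hasDerivAt_sinh t) hs.ne'
    have d3 := ((QQ_deriv n hw ht.1).const_mul (-κ)).fun_div (wt_deriv n κ hw t) hW
    have d := ((d1.fun_mul d2).const_mul (((n:ℝ) + 1) / 2)).fun_add (d1.fun_mul d3)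
    refine d.congr_deriv ?_
    rw [heq t ht', (aux_v_deriv t).deriv, V2]
    have hc : Real.cosh t ^ 2 = Real.sinh t ^ 2 + 1 := Real.cosh_sq t
    generalize Real.sin (Real.pi * t / r) = v
    generalize Real.cos (Real.pi * t / r) = v'
    generalize Real.pi / r = p
    generalize wt n κ w t = W at *
    generalize QQ n w t = Q at *
    generalize Real.sinh t = s at *
    generalize Real.cosh t = c at *
    simp only [Nat.cast_ofNat, Nat.add_one_sub_one, pow_one]
    have hs0 := hs.ne'
    field_simp
    have hc4 : c ^ 4 = (s ^ 2 + 1) ^ 2 := by rw [← hc]; ring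
    ring_nf
    simp only [hc]
    ring
  · have := hint.sub hint2
    rw [intervalIntegrable_iff_integrableOn_Icc_of_le hr.le] at this
    exact this
  · intro t ht
    have := sq_nonneg (Real.pi / r * Real.cos (Real.pi * t / r) - (((n:ℝ) + 1) / 2 * (Real.cosh t / Real.sinh t)
        + (-κ * QQ n w t / wt n κ w t)) * Real.sin (Real.pi * t / r))
    linarith

lemma eigen_s6 (n : ℕ) (hn : 2 ≤ n) {r : ℝ} (hr : 0 < r) (κ : ℝ) (hκ : 0 ≤ κ) {w : ℝ → ℝ}
    (hw : Continuous w)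
    (heq : ∀ t ∈ Icc 0 r, w t = wt n κ w t) (hnn : ∀ t ∈ Icc 0 r, 0 ≤ w t)
    (hz : ∃ t ∈ Icc 0 r, w t = 0) :
    IsDirichletEigenvalue (V2 n) r (κ - n) := by
  have hn' : (2:ℝ) ≤ n := by exact_mod_cast hn
  set a : ℝ := ((n:ℝ) + 1) / 2 with ha
  have ha1 : 1 ≤ a := by rw [ha]; linarith
  have hQ := QQ_cont n hw
  have hwt : Continuous (wt n κ w) :=
    continuous_iff_continuousAt.2 fun t => (wt_deriv n κ hw t).continuousAt
  have hS : Continuous Real.sinh := Real.continuous_sinh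
  have hC : Continuous Real.cosh := Real.continuous_cosh
  have w0 : w 0 = 1 := by rw [heq 0 ⟨le_rfl, hr.le⟩]; simp [wt]
  have hanti : AntitoneOn (wt n κ w) (Icc 0 r) := by
    apply antitoneOn_of_deriv_nonpos (convex_Icc 0 r) hwt.continuousOn
    · exact fun t _ => (wt_deriv n κ hw t).differentiableAt.differentiableWithinAt
    · intro t ht
      rw [interior_Icc] at ht
      rw [(wt_deriv n κ hw t).deriv]
      have : 0 ≤ QQ n w t := by
        rw [QQ, if_neg (not_le.2 ht.1)]
        have hs := Real.sinh_pos_iff.2 ht.1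
        apply div_nonneg _ (by positivity)
        apply intervalIntegral.integral_nonneg ht.1.le
        intro x hx
        have h1 := Real.sinh_nonneg_iff.2 hx.1
        have h2 := hnn x ⟨hx.1, hx.2.trans ht.2.le⟩
        positivity
      nlinarith
  have hr' : r ∈ Icc 0 r := ⟨hr.le, le_rfl⟩
  have wr : wt n κ w r = 0 := by
    obtain ⟨t, ht, h0⟩ := hz
    have h1 := hanti ht hr' ht.2
    have h2 := hnn r hr'
    rw [heq r hr'] at h2
    rw [heq t ht] at h0
    linarith
  have du : ∀ t, HasDerivAt (fun t => Real.sinh t ^ a * wt n κ w t)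
      (a * Real.sinh t ^ (a - 1) * Real.cosh t * wt n κ w t
        + Real.sinh t ^ a * (-κ * QQ n w t)) t := by
    intro t
    have h1 : HasDerivAt (fun t => Real.sinh t ^ a) (a * Real.sinh t ^ (a - 1) * Real.cosh t) t :=
      HasDerivAt.comp t (Real.hasDerivAt_rpow_const (Or.inr ha1)) (Real.hasDerivAt_sinh t)
    exact h1.fun_mul (wt_deriv n κ hw t)
  have du' : deriv (fun t => Real.sinh t ^ a * wt n κ w t) = fun t =>
      (a * Real.sinh t ^ (a - 1) * Real.cosh t * wt n κ w t
        + Real.sinh t ^ a * (-κ * QQ n w t)) := funext fun t => (du t).deriv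
  have ddu : ∀ t ∈ Ioo 0 r, HasDerivAt (deriv (fun t => Real.sinh t ^ a * wt n κ w t))
      ((V2 n t - (κ - n)) * (Real.sinh t ^ a * wt n κ w t)) t := by
    intro t ht
    have ht' : t ∈ Icc 0 r := Ioo_subset_Icc_self ht
    have hs := Real.sinh_pos_iff.2 ht.1
    rw [du']
    have h1 : HasDerivAt (fun t => Real.sinh t ^ a) (a * Real.sinh t ^ (a - 1) * Real.cosh t) t :=
      HasDerivAt.comp t (Real.hasDerivAt_rpow_const (Or.inr ha1)) (Real.hasDerivAt_sinh t)
    have h2 : HasDerivAt (fun t => Real.sinh t ^ (a - 1))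
        ((a - 1) * Real.sinh t ^ (a - 1 - 1) * Real.cosh t) t :=
      HasDerivAt.comp t (Real.hasDerivAt_rpow_const (Or.inl hs.ne')) (Real.hasDerivAt_sinh t)
    have d := ((((h2.const_mul a).fun_mul (Real.hasDerivAt_cosh t)).fun_mul (wt_deriv n κ hw t)).fun_add
      (h1.fun_mul ((QQ_deriv n hw ht.1).const_mul (-κ))))
    refine d.congr_deriv ?_
    rw [heq t ht', V2]
    have hc : Real.cosh t ^ 2 = Real.sinh t ^ 2 + 1 := Real.cosh_sq t
    have e1 : Real.sinh t ^ (a - 1) = Real.sinh t ^ a / Real.sinh t := Real.rpow_sub_one hs.ne' a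
    have e2 : Real.sinh t ^ (a - 1 - 1) = Real.sinh t ^ a / Real.sinh t / Real.sinh t := by
      rw [Real.rpow_sub_one hs.ne', e1]
    rw [e2, e1]
    generalize Real.sinh t ^ a = X
    rw [ha]
    generalize wt n κ w t = W at *
    generalize QQ n w t = Q at *
    generalize Real.sinh t = s at *
    generalize Real.cosh t = c at *
    have hs0 := hs.ne'
    field_simp
    ring_nf
    simp only [hc]
    ring
  refine ⟨fun t => Real.sinh t ^ a * wt n κ w t, ?_, ?_, fun t _ => (du t).differentiableAt, ?_,
    fun t ht => (ddu t ht).differentiableAt, ?_, ?_, ?_⟩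
  · have h1 : ∀ᶠ t in 𝓝[>] (0:ℝ), 0 < w t :=
      (hw.tendsto 0).mono_left nhdsWithin_le_nhds (lt_mem_nhds (by rw [w0]; norm_num))
    have h2 : ∀ᶠ t in 𝓝[>] (0:ℝ), t ∈ Ioo 0 r := Ioo_mem_nhdsGT hr
    obtain ⟨t, h3, h4⟩ := (h1.and h2).exists
    have h5 := Ioo_subset_Icc_self h4
    refine ⟨t, h5, ?_⟩
    have hs := Real.sinh_pos_iff.2 h4.1
    rw [heq t h5] at h3
    exact (mul_pos (Real.rpow_pos_of_pos hs a) h3).ne'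
  · exact fun t _ => (du t).continuousAt.continuousWithinAt
  · rw [du']
    have c1 : Continuous fun t => Real.sinh t ^ a := hS.rpow_const fun _ => Or.inr (by linarith)
    have c2 : Continuous fun t => Real.sinh t ^ (a - 1) := hS.rpow_const fun _ => Or.inr (by linarith)
    fun_prop
  · simp [Real.zero_rpow (by linarith : a ≠ 0)]
  · simp [wr]
  · intro t ht
    rw [(ddu t ht).deriv]
    ring

lemma exists_eigen (n : ℕ) (hn : 2 ≤ n) {r : ℝ} (hr : 0 < r) (B : ℝ) (hB : 0 ≤ B)
    (h : Rayleigh (V2 n) (fun t => Real.sin (Real.pi * t / r)) r < B) :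
    ∃ μ ≤ B, IsDirichletEigenvalue (V2 n) r μ := by
  obtain ⟨W, hc, h0, hW⟩ := exists_W n hr
  have hcκ : ∀ κ, Continuous (W κ) := fun κ => hc.comp (Continuous.prodMk_right κ)
  have hm : Continuous fun κ => sInf (W κ '' Icc 0 r) :=
    IsCompact.continuous_sInf isCompact_Icc hc
  have hne : (Icc (0:ℝ) r).Nonempty := ⟨0, le_rfl, hr.le⟩
  have hmin : ∀ κ, ∃ t ∈ Icc 0 r, W κ t = sInf (W κ '' Icc 0 r) ∧ ∀ s ∈ Icc 0 r, W κ t ≤ W κ s := by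
    intro κ
    obtain ⟨t, ht, h1, h2⟩ := isCompact_Icc.exists_sInf_image_eq_and_le hne (hcκ κ).continuousOn
    exact ⟨t, ht, h1.symm, h2⟩
  set K := B + n with hK
  have hK0 : 0 ≤ K := by positivity
  have m0 : sInf (W 0 '' Icc 0 r) = 1 := by
    obtain ⟨t, _, h1, _⟩ := hmin 0
    rw [← h1, h0]
  have mK : sInf (W K '' Icc 0 r) ≤ 0 := by
    by_contra hcon
    push Not at hcon
    obtain ⟨t, _, h1, h2⟩ := hmin K
    have := picone_s6 n hr K (hcκ K) (hW K) (fun s hs => by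
      have := h2 s hs
      linarith)
    rw [hK] at this
    linarith
  obtain ⟨κ, hκ, hκ0⟩ := intermediate_value_Icc' hK0 hm.continuousOn
    (show (0:ℝ) ∈ Icc _ _ from ⟨mK, by rw [m0]; norm_num⟩)
  obtain ⟨t, ht, h1, h2⟩ := hmin κ
  simp only at hκ0
  rw [hκ0] at h1
  refine ⟨κ - n, by linarith [hκ.2], eigen_s6 n hn hr κ hκ.1 (hcκ κ) (hW κ) ?_ ⟨t, ht, h1⟩⟩
  intro s hs
  rw [← h1]
  exact h2 s hs

/-- For `n ≥ 2`, `r > 0` and `v(t) = sin(πt/r)`, the Rayleigh quotient of `v` for `V₂` is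
strictly less than `(n−1)²/4 + π²/r² + (n−1)(n+1)π⁴/(12r³)`; consequently the first
Dirichlet eigenvalue of `-d²/dt² + V₂` on `[0, r]` (i.e. `λ₂(B_r)` for the geodesic ball of
radius `r` in `ℍⁿ`) is strictly less than this bound. -/
theorem rayleigh_bound_V2 (n : ℕ) (hn : 2 ≤ n) (r : ℝ) (hr : 0 < r) :
    Rayleigh (V2 n) (fun t => Real.sin (Real.pi * t / r)) r
      < ((n : ℝ) - 1) ^ 2 / 4 + Real.pi ^ 2 / r ^ 2
        + ((n : ℝ) - 1) * ((n : ℝ) + 1) * Real.pi ^ 4 / (12 * r ^ 3) ∧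
    ∀ lam : ℝ, IsDirichletEigenvalue (V2 n) r lam →
      (∀ μ : ℝ, IsDirichletEigenvalue (V2 n) r μ → lam ≤ μ) →
      lam < ((n : ℝ) - 1) ^ 2 / 4 + Real.pi ^ 2 / r ^ 2
        + ((n : ℝ) - 1) * ((n : ℝ) + 1) * Real.pi ^ 4 / (12 * r ^ 3) := by
  have h := aux_rayleigh n hn r hr
  refine ⟨h, fun lam _ hmin => ?_⟩
  set R := Rayleigh (V2 n) (fun t => Real.sin (Real.pi * t / r)) r
  have hn' : (2:ℝ) ≤ n := by exact_mod_cast hn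
  have hB : 0 < ((n : ℝ) - 1) ^ 2 / 4 + Real.pi ^ 2 / r ^ 2
        + ((n : ℝ) - 1) * ((n : ℝ) + 1) * Real.pi ^ 4 / (12 * r ^ 3) := by
    have := Real.pi_pos
    have : 0 < (n:ℝ) - 1 := by linarith
    positivity
  obtain ⟨B', h1, h2⟩ := exists_between (max_lt h hB)
  obtain ⟨μ, hμ, hE⟩ := exists_eigen n hn hr B' ((le_max_right _ _).trans h1.le)
    ((le_max_left _ _).trans_lt h1)
  exact ((hmin μ hE).trans hμ).trans_lt h2
end

section
/- The improper integral ∫₀^∞ (t/sinh(t))² dt equals π²/6. -/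
lemma aux_integral (n : ℕ) (hn : n ≠ 0) :
    ∫ t in Set.Ioi (0:ℝ), t ^ 2 * Real.exp (-(2 * n * t)) = 1 / (4 * (n:ℝ) ^ 3) := by
  have hn' : (0:ℝ) < n := by positivity
  have h := Real.integral_rpow_mul_exp_neg_mul_Ioi (a := 3) (r := 2 * n) (by norm_num) (by positivity)
  have e : (3:ℝ) - 1 = ((2:ℕ):ℝ) := by norm_num
  have g : Real.Gamma 3 = 2 := by
    have := Real.Gamma_nat_eq_factorial 2
    rw [show ((2:ℕ):ℝ) + 1 = 3 by norm_num] at this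
    rw [this]; norm_num [Nat.factorial]
  have e3 : (1 / (2 * (n:ℝ))) ^ (3:ℝ) = (1 / (2 * (n:ℝ))) ^ (3:ℕ) := by
    rw [← Real.rpow_natCast]; norm_num
  rw [e, g, e3] at h
  simp only [Real.rpow_natCast] at h
  rw [h]
  field_simp
  norm_num

lemma aux_F_integral (n : ℕ) :
    ∫ t in Set.Ioi (0:ℝ), 4 * n * (t ^ 2 * Real.exp (-(2 * n * t))) = 1 / (n:ℝ) ^ 2 := by
  rw [MeasureTheory.integral_const_mul]
  rcases eq_or_ne n 0 with rfl | hn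
  · simp
  · have hn' : (n:ℝ) ≠ 0 := by positivity
    rw [aux_integral n hn]
    field_simp

/-- The improper integral `∫₀^∞ (t/sinh t)² dt` equals `π²/6`. -/
theorem integral_sq_div_sinh_sq : ∫ t in Set.Ioi (0:ℝ), (t / Real.sinh t) ^ 2 = Real.pi ^ 2 / 6 := by
  have key := MeasureTheory.hasSum_integral_of_summable_integral_norm
    (μ := MeasureTheory.volume.restrict (Set.Ioi (0:ℝ)))
    (F := fun (n : ℕ) (t : ℝ) => 4 * (n:ℝ) * (t ^ 2 * Real.exp (-(2 * n * t)))) ?_ ?_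
  · simp only [aux_F_integral] at key
    rw [← key.unique hasSum_zeta_two]
    refine MeasureTheory.setIntegral_congr_fun measurableSet_Ioi (fun t ht => ?_)
    have ht : 0 < t := ht
    have hr : ‖Real.exp (-(2 * t))‖ < 1 := by
      rw [Real.norm_of_nonneg (Real.exp_pos _).le, Real.exp_lt_one_iff]
      linarith
    have hs := (hasSum_coe_mul_geometric_of_norm_lt_one hr).mul_left (4 * t ^ 2)
    have hs' : HasSum (fun n : ℕ => 4 * (n:ℝ) * (t ^ 2 * Real.exp (-(2 * n * t))))
        (4 * t ^ 2 * (Real.exp (-(2 * t)) / (1 - Real.exp (-(2 * t))) ^ 2)) := by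
      refine hs.congr_fun (fun n => ?_)
      rw [← Real.exp_nat_mul]
      ring_nf
    rw [hs'.tsum_eq, Real.sinh_eq]
    have h1 : Real.exp (-(2 * t)) = Real.exp (-t) ^ 2 := by
      rw [← Real.exp_nat_mul]; ring_nf
    have h2 : Real.exp t = (Real.exp (-t))⁻¹ := by rw [Real.exp_neg, inv_inv]
    have h3 : Real.exp (-t) < 1 := by rw [Real.exp_lt_one_iff]; linarith
    have h4 := Real.exp_pos (-t)
    rw [h1, h2]
    generalize Real.exp (-t) = x at *
    have h5 : 1 - x ^ 2 ≠ 0 := by nlinarith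
    have h6 : x⁻¹ - x = (1 - x ^ 2) / x := by field_simp
    rw [h6]
    field_simp
    norm_num
  · intro n
    rcases eq_or_ne n 0 with rfl | hn
    · simp
    · refine MeasureTheory.Integrable.of_integral_ne_zero ?_
      rw [aux_F_integral]
      positivity
  · have : ∀ n : ℕ, ∫ t in Set.Ioi (0:ℝ), ‖4 * (n:ℝ) * (t ^ 2 * Real.exp (-(2 * n * t)))‖
        = 1 / (n:ℝ) ^ 2 := by
      intro n
      rw [← aux_F_integral n]
      congr 1
      ext t
      exact Real.norm_of_nonneg (by positivity)
    simp only [this]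
    exact hasSum_zeta_two.summable
end

section
/- Let n ≥ 2 be an integer, r > 0, and λ > 0. Suppose u : [0,r] → ℝ is continuously differentiable on [0,r], twice differentiable on (0,r), satisfies u(t) > 0 for t ∈ [0,r), u'(0) = 0, u(r) = 0, and u''(t) + ((n−1)/tanh(t))·u'(t) + λ·u(t) = 0 for all t ∈ (0,r). Then u'(t) < 0 for all t ∈ (0,r); in particular u is strictly decreasing on [0,r]. -/
/-- The first radial Dirichlet eigenfunction of a geodesic ball in `ℍⁿ` is strictly
decreasing: if `u` is continuously differentiable on `[0, r]`, twice differentiable on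
`(0, r)`, positive on `[0, r)`, with `u'(0) = 0`, `u(r) = 0`, and satisfies
`u'' + ((n−1)/tanh t)·u' + λ·u = 0` on `(0, r)` with `λ > 0`, then `u' < 0` on `(0, r)`;
in particular `u` is strictly decreasing on `[0, r]`. -/
theorem radial_eigenfunction_strictly_decreasing (n : ℕ) (hn : 2 ≤ n) (r lam : ℝ)
    (hr : 0 < r) (hlam : 0 < lam) (u : ℝ → ℝ)
    (hc : ContinuousOn u (Set.Icc 0 r))
    (hd : ∀ t ∈ Set.Ioo (0:ℝ) r, DifferentiableAt ℝ u t)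
    (hc' : ContinuousOn (deriv u) (Set.Icc 0 r))
    (hd' : ∀ t ∈ Set.Ioo (0:ℝ) r, DifferentiableAt ℝ (deriv u) t)
    (hpos : ∀ t ∈ Set.Ico (0:ℝ) r, 0 < u t)
    (h0 : deriv u 0 = 0) (hrr : u r = 0)
    (hode : ∀ t ∈ Set.Ioo (0:ℝ) r,
      deriv (deriv u) t + (((n : ℝ) - 1) / Real.tanh t) * deriv u t + lam * u t = 0) :
    (∀ t ∈ Set.Ioo (0:ℝ) r, deriv u t < 0) ∧ StrictAntiOn u (Set.Icc 0 r) := by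
  obtain ⟨m, rfl⟩ : ∃ m, n = m + 2 := ⟨n - 2, by omega⟩
  have hg : StrictAntiOn (fun t => deriv u t * Real.sinh t ^ (m + 1)) (Set.Icc 0 r) := by
    apply strictAntiOn_of_deriv_neg (convex_Icc 0 r)
    · exact hc'.mul (Real.continuous_sinh.pow _).continuousOn
    · intro t ht
      rw [interior_Icc] at ht
      have hs : 0 < Real.sinh t := Real.sinh_pos_iff.2 ht.1
      have hu := hpos t ⟨ht.1.le, ht.2⟩
      have h1 := (hd' t ht).hasDerivAt.mul ((Real.hasDerivAt_sinh t).pow (m + 1))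
      have h2 : HasDerivAt (fun t => deriv u t * Real.sinh t ^ (m + 1))
          (-(lam * u t * Real.sinh t ^ (m + 1))) t := by
        refine h1.congr_deriv ?_
        have ho := hode t ht
        have e : deriv (deriv u) t = -(((((m + 2 : ℕ) : ℝ) - 1) / Real.tanh t) * deriv u t
          + lam * u t) := by linarith
        rw [e, Real.tanh_eq_sinh_div_cosh]
        have hch := (Real.cosh_pos t).ne'
        simp only [Pi.pow_apply, Nat.add_sub_cancel]
        push_cast
        field_simp
        ring
      rw [h2.deriv]
      have : 0 < lam * u t * Real.sinh t ^ (m + 1) := by positivity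
      linarith
  have hneg : ∀ t ∈ Set.Ioo (0:ℝ) r, deriv u t < 0 := by
    intro t ht
    have hs : 0 < Real.sinh t := Real.sinh_pos_iff.2 ht.1
    have h := hg (Set.left_mem_Icc.2 hr.le) ⟨ht.1.le, ht.2.le⟩ ht.1
    simp only [h0, zero_mul] at h
    by_contra hcon
    have : 0 ≤ deriv u t * Real.sinh t ^ (m + 1) :=
      mul_nonneg (not_lt.1 hcon) (by positivity)
    linarith
  refine ⟨hneg, strictAntiOn_of_deriv_neg (convex_Icc 0 r) hc ?_⟩
  intro t ht
  rw [interior_Icc] at ht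
  exact hneg t ht
end

section
/- Let n ≥ 2 be an integer, r > 0, and λ > 0. Suppose u : [0,r] → ℝ is twice continuously differentiable on [0,r), continuous on [0,r], satisfies u(t) > 0 for t ∈ [0,r), u'(0) = 0, u(r) = 0, and u''(t) + ((n−1)/tanh(t))·u'(t) + λ·u(t) = 0 for all t ∈ (0,r). Then the function φ = u'/u satisfies φ'(t) < 0 for all t ∈ [0,r); in particular, log u is strictly concave on [0,r). -/
/-- Strict log-concavity of the first radial Dirichlet eigenfunction of geodesic balls in
`ℍⁿ`: if `u` is twice continuously differentiable on `[0, r)`, continuous on `[0, r]`,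
positive on `[0, r)`, with `u'(0) = 0`, `u(r) = 0`, and satisfies
`u'' + ((n−1)/tanh t)·u' + λ·u = 0` on `(0, r)` with `λ > 0`, then `φ = u'/u` satisfies
`φ' < 0` on `[0, r)`; in particular `log u` is strictly concave on `[0, r)`. -/
theorem radial_eigenfunction_log_concave (n : ℕ) (hn : 2 ≤ n) (r lam : ℝ)
    (hr : 0 < r) (hlam : 0 < lam) (u : ℝ → ℝ)
    (hc : ContinuousOn u (Set.Icc 0 r))
    (hd : ∀ t ∈ Set.Ico (0:ℝ) r, DifferentiableAt ℝ u t)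
    (hd' : ∀ t ∈ Set.Ico (0:ℝ) r, DifferentiableAt ℝ (deriv u) t)
    (hc'' : ContinuousOn (deriv (deriv u)) (Set.Ico 0 r))
    (hpos : ∀ t ∈ Set.Ico (0:ℝ) r, 0 < u t)
    (h0 : deriv u 0 = 0) (hrr : u r = 0)
    (hode : ∀ t ∈ Set.Ioo (0:ℝ) r,
      deriv (deriv u) t + (((n : ℝ) - 1) / Real.tanh t) * deriv u t + lam * u t = 0) :
    (∀ t ∈ Set.Ico (0:ℝ) r, deriv (fun s => deriv u s / u s) t < 0) ∧
      StrictConcaveOn ℝ (Set.Ico 0 r) (fun t => Real.log (u t)) := by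
  obtain ⟨k, rfl⟩ : ∃ k, n = k + 2 := ⟨n - 2, by omega⟩
  have hS : ∀ t : ℝ, 0 < t → 0 < Real.sinh t := fun t ht => Real.sinh_pos_iff.2 ht
  have hode' : ∀ t ∈ Set.Ioo (0:ℝ) r, Real.sinh t * deriv (deriv u) t
      + ((k:ℝ) + 1) * Real.cosh t * deriv u t + lam * Real.sinh t * u t = 0 := by
    intro t ht
    have h := hode t ht
    have hs := (hS t ht.1).ne'
    have hcc := (Real.cosh_pos t).ne'
    rw [Real.tanh_eq_sinh_div_cosh] at h
    push_cast at h
    field_simp at h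
    linear_combination h
  have hd1 : ∀ t ∈ Set.Ico (0:ℝ) r, HasDerivAt u (deriv u t) t := fun t ht => (hd t ht).hasDerivAt
  have hd2 : ∀ t ∈ Set.Ico (0:ℝ) r, HasDerivAt (deriv u) (deriv (deriv u) t) t :=
    fun t ht => (hd' t ht).hasDerivAt
  have hcu : ContinuousOn u (Set.Ico 0 r) := fun t ht => (hd t ht).continuousAt.continuousWithinAt
  have hcu' : ContinuousOn (deriv u) (Set.Ico 0 r) :=
    fun t ht => (hd' t ht).continuousAt.continuousWithinAt
  have hsub : Set.Ioo (0:ℝ) r ⊆ Set.Ico 0 r := Set.Ioo_subset_Ico_self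
  have hzero : (0:ℝ) ∈ Set.Ico (0:ℝ) r := ⟨le_rfl, hr⟩
  have hneg : ∀ t ∈ Set.Ioo (0:ℝ) r, deriv u t < 0 := by
    intro t ht
    have hF : StrictAntiOn (fun s => Real.sinh s ^ (k+1) * deriv u s) (Set.Ico 0 r) := by
      apply strictAntiOn_of_deriv_neg (convex_Ico 0 r)
      · exact ((Real.continuous_sinh.pow _).continuousOn).mul hcu'
      · intro s hs
        rw [interior_Ico] at hs
        have hD := ((Real.hasDerivAt_sinh s).pow (k+1)).mul (hd2 s (hsub hs))
        have hD' := hD.deriv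
        have key : deriv (fun s => Real.sinh s ^ (k+1) * deriv u s) s = _ := hD'
        rw [key]
        have e := hode' s hs
        have h1 : 0 < lam * Real.sinh s ^ (k+1) * u s :=
          mul_pos (mul_pos hlam (pow_pos (hS s hs.1) _)) (hpos s (hsub hs))
        push_cast
        simp only [Nat.add_sub_cancel, Pi.pow_apply]
        have : ((k:ℝ) + 1) * Real.sinh s ^ k * Real.cosh s * deriv u s
          + Real.sinh s ^ (k+1) * deriv (deriv u) s = - (lam * Real.sinh s ^ (k+1) * u s) := by
          linear_combination Real.sinh s ^ k * e
        linarith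
    have h := hF hzero (hsub ht) ht.1
    simp only [h0, mul_zero] at h
    exact (pos_iff_neg_of_mul_neg h).1 (pow_pos (hS t ht.1) _)
  have hW : ∀ t ∈ Set.Ioo (0:ℝ) r, deriv (deriv u) t * u t - deriv u t * deriv u t < 0 := by
    intro t ht
    have hG : StrictAntiOn (fun s => -((k:ℝ)+1) * (Real.sinh s ^ k * (Real.cosh s * (deriv u s * u s)))
        - Real.sinh s ^ (k+1) * (lam * (u s * u s) + deriv u s * deriv u s)) (Set.Ico 0 r) := by
      apply strictAntiOn_of_deriv_neg (convex_Ico 0 r)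
      · have := Real.continuous_sinh.continuousOn (s := Set.Ico 0 r)
        have := Real.continuous_cosh.continuousOn (s := Set.Ico 0 r)
        fun_prop
      · intro s hs
        rw [interior_Ico] at hs
        have a := hd1 s (hsub hs)
        have b := hd2 s (hsub hs)
        have hD := (((Real.hasDerivAt_sinh s).pow k).mul
          ((Real.hasDerivAt_cosh s).mul (b.mul a))).const_mul (-((k:ℝ)+1)) |>.sub
          (((Real.hasDerivAt_sinh s).pow (k+1)).mul (((a.mul a).const_mul lam).add (b.mul b)))
        have hD' := hD.deriv
        have key : deriv (fun s => -((k:ℝ)+1) * (Real.sinh s ^ k * (Real.cosh s * (deriv u s * u s)))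
          - Real.sinh s ^ (k+1) * (lam * (u s * u s) + deriv u s * deriv u s)) s = _ := hD'
        rw [key]
        have e := hode' s hs
        have hs0 := hS s hs.1
        have hk : Real.sinh s * ((k:ℝ) * Real.sinh s ^ (k-1)) = k * Real.sinh s ^ k := by
          rcases k with _ | k
          · simp
          · simp only [Nat.add_sub_cancel]; ring
        have hneg' : ((k:ℝ)+1) * Real.sinh s ^ k * (deriv u s * u s) < 0 :=
          mul_neg_of_pos_of_neg (by positivity) (mul_neg_of_neg_of_pos (hneg s hs) (hpos s (hsub hs)))
        refine (pos_iff_neg_of_mul_neg (a := Real.sinh s) ?_).1 hs0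
        refine lt_of_eq_of_lt ?_ hneg'
        have hcs := Real.cosh_sq s
        simp only [Pi.mul_apply, Pi.add_apply, Pi.pow_apply, Nat.add_sub_cancel]
        push_cast
        generalize deriv (deriv u) s = w at *
        generalize deriv u s = v at *
        generalize Real.sinh s = S at *
        generalize Real.cosh s = C at *
        linear_combination (-((k:ℝ)+1) * C * C * v * u s) * hk
          + (-((k:ℝ)+1) * C * u s * S^k - 2 * v * S^(k+1)) * e + (((k:ℝ)+1) * S^k * v * u s) * hcs
    have h := hG hzero (hsub ht) ht.1
    simp only [h0, Real.sinh_zero, zero_mul, mul_zero, zero_pow (Nat.succ_ne_zero k), sub_zero] at h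
    refine (pos_iff_neg_of_mul_neg (a := Real.sinh t ^ (k+1)) ?_).1 (pow_pos (hS t ht.1) _)
    refine lt_of_eq_of_lt ?_ h
    linear_combination (Real.sinh t ^ k * u t) * hode' t ht
  have hz : deriv (deriv u) 0 < 0 := by
    have l1 : Filter.Tendsto (fun t => Real.sinh t / t) (nhdsWithin 0 (Set.Ioi 0)) (nhds 1) := by
      have := (hasDerivAt_iff_tendsto_slope.1 (Real.hasDerivAt_sinh 0)).mono_left
        (nhdsWithin_mono 0 (s := Set.Ioi 0) (fun x hx => (Set.mem_Ioi.1 hx).ne'))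
      simpa [slope_fun_def_field] using this
    have l2 : Filter.Tendsto (fun t => deriv u t / t) (nhdsWithin 0 (Set.Ioi 0))
        (nhds (deriv (deriv u) 0)) := by
      have := (hasDerivAt_iff_tendsto_slope.1 (hd2 0 hzero)).mono_left
        (nhdsWithin_mono 0 (s := Set.Ioi 0) (fun x hx => (Set.mem_Ioi.1 hx).ne'))
      simpa [slope_fun_def_field, h0] using this
    have l3 : Filter.Tendsto (deriv (deriv u)) (nhdsWithin 0 (Set.Ioi 0))
        (nhds (deriv (deriv u) 0)) := by
      have := (hc'' 0 hzero).mono hsub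
      rwa [ContinuousWithinAt, nhdsWithin_Ioo_eq_nhdsGT hr] at this
    have l4 : Filter.Tendsto Real.cosh (nhdsWithin 0 (Set.Ioi 0)) (nhds 1) := by
      have := Real.continuous_cosh.tendsto 0
      rw [Real.cosh_zero] at this
      exact this.mono_left nhdsWithin_le_nhds
    have l5 : Filter.Tendsto u (nhdsWithin 0 (Set.Ioi 0)) (nhds (u 0)) :=
      (hd 0 hzero).continuousAt.tendsto.mono_left nhdsWithin_le_nhds
    have L := ((l1.mul l3).add ((l4.const_mul ((k:ℝ)+1)).mul l2)).add ((l1.const_mul lam).mul l5)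
    have Z : Filter.Tendsto (fun _ : ℝ => (0:ℝ)) (nhdsWithin 0 (Set.Ioi 0)) (nhds 0) :=
      tendsto_const_nhds
    have E := tendsto_nhds_unique_of_eventuallyEq L Z (by
      filter_upwards [Ioo_mem_nhdsGT hr] with t ht
      have := hode' t ht
      have h := ht.1.ne'
      field_simp
      linear_combination this)
    have h1 : 0 < lam * u 0 := mul_pos hlam (hpos 0 hzero)
    have h2 : ((k:ℝ)+2) * deriv (deriv u) 0 < 0 := by linarith
    exact (pos_iff_neg_of_mul_neg h2).1 (by positivity)
  have hmain : ∀ t ∈ Set.Ico (0:ℝ) r, deriv (fun s => deriv u s / u s) t < 0 := by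
    intro t ht
    have hp := hpos t ht
    have hD := ((hd2 t ht).div (hd1 t ht) hp.ne').deriv
    have hD' : deriv (fun s => deriv u s / u s) t = _ := hD
    rw [hD']
    apply div_neg_of_neg_of_pos _ (by positivity)
    rcases ht.1.eq_or_lt with h | h
    · subst h
      rw [h0]
      have := mul_neg_of_neg_of_pos hz hp
      linarith
    · exact hW t ⟨h, ht.2⟩
  refine ⟨hmain, ?_⟩
  apply strictConcaveOn_of_deriv2_neg (convex_Ico 0 r)
  · exact hcu.log (fun t ht => (hpos t ht).ne')
  · intro t ht
    rw [interior_Ico] at ht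
    have : deriv (fun t => Real.log (u t)) =ᶠ[nhds t] fun s => deriv u s / u s := by
      filter_upwards [Ioo_mem_nhds ht.1 ht.2] with s hs
      exact ((hd1 s (hsub hs)).log (hpos s (hsub hs)).ne').deriv
    simp only [Function.iterate_succ, Function.iterate_zero, Function.comp, id]
    rw [this.deriv_eq]
    exact hmain t (hsub ht)
end
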